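/- arXiv:2410.07984 — 3 statements merged into one kernel-verified Lean document; each statement's English description precedes it below -/
import Mathlib

section
/- (Achievability of the strong converse exponent for α ∈ (0,1).) Let α ∈ (0,1). For any discrete memoryless channel W: X → Y on finite alphabets and any r ≥ 0, the strong converse exponent satisfies E_sc^{(α)}(W,r) ≤ max_{α≤β≤1} [α(1−β)/(β(1−α))](I_β(W) − r). -/
open scoped ENNReal NNReal BigOperators Classical
open Filter

noncomputable section

namespace RST

/-- Base-2 logarithm `ℝ≥0∞ → EReal`, with `log 0 = ⊥` and `log ⊤ = ⊤`. -/
def elog2 (s : ℝ≥0∞) : EReal :=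
  if s = 0 then ⊥ else if s = ⊤ then ⊤ else ((Real.logb 2 s.toReal : ℝ) : EReal)

/-- Base-2 logarithm `EReal → EReal` (for nonnegative arguments). -/
def eLog2 (x : EReal) : EReal :=
  if x = ⊤ then ⊤ else if x ≤ 0 then ⊥ else ((Real.logb 2 x.toReal : ℝ) : EReal)

/-- Base-2 exponential `EReal → ℝ≥0∞`. -/
def epow2 (x : EReal) : ℝ≥0∞ :=
  if x = ⊤ then ⊤ else if x = ⊥ then 0 else ENNReal.ofReal ((2 : ℝ) ^ x.toReal)

variable {X Y : Type*}

/-- A probability distribution on a finite alphabet, as an `ℝ≥0∞`-valued function. -/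
def IsDist [Fintype X] (P : X → ℝ≥0∞) : Prop := ∑ x, P x = 1

/-- A discrete memoryless channel: every row is a probability distribution. -/
def IsChannel [Fintype X] [Fintype Y] (W : X → Y → ℝ≥0∞) : Prop := ∀ x, ∑ y, W x y = 1

/-- Order-`α` Rényi divergence (base 2), with the order `α ∈ [0,∞]` encoded as `ℝ≥0∞`.
The conventions `0/0 = 0` and `a/0 = ∞` (for `a > 0`, `α > 1`) are built into `ℝ≥0∞`
arithmetic.  The second argument is allowed to be an arbitrary nonnegative vector. -/
def renyiD [Fintype X] (α : ℝ≥0∞) (P Q : X → ℝ≥0∞) : EReal :=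
  if α = 0 then - elog2 (∑ x ∈ Finset.univ.filter fun x => P x ≠ 0, Q x)
  else if α = 1 then ∑ x, ((P x).toReal : EReal) * elog2 (P x / Q x)
  else if α = ⊤ then elog2 (⨆ x, P x / Q x)
  else (((α.toReal - 1)⁻¹ : ℝ) : EReal) *
    elog2 (∑ x, P x ^ α.toReal * Q x ^ (1 - α.toReal))

/-- The `X`-marginal of a joint distribution on `X × Y`. -/
def margX [Fintype X] [Fintype Y] (P : X × Y → ℝ≥0∞) : X → ℝ≥0∞ := fun x => ∑ y, P (x, y)

/-- Order-`α` Rényi mutual information `I_α(X:Y)_P = min_{Q_Y} D_α(P‖P_X × Q_Y)`. -/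
def renyiMI [Fintype X] [Fintype Y] (α : ℝ≥0∞) (P : X × Y → ℝ≥0∞) : EReal :=
  ⨅ Q : {Q : Y → ℝ≥0∞ // IsDist Q}, renyiD α P fun p => margX P p.1 * Q.1 p.2

/-- The joint input-output distribution `P_X · W`. -/
def joint [Fintype X] [Fintype Y] (PX : X → ℝ≥0∞) (W : X → Y → ℝ≥0∞) : X × Y → ℝ≥0∞ :=
  fun p => PX p.1 * W p.1 p.2

/-- Order-`α` Rényi capacity `I_α(W) = max_{P_X} I_α(X:Y)_{P_X · W}`. -/
def renyiCap [Fintype X] [Fintype Y] (α : ℝ≥0∞) (W : X → Y → ℝ≥0∞) : EReal :=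
  ⨆ P : {P : X → ℝ≥0∞ // IsDist P}, renyiMI α (joint P.1 W)

/-- `N` is a simulation of a channel `X → Y` with communication cost at most `c` bits:
shared randomness `K = Fin m` with distribution `PK`, a message set `{1,…,M}` with
`log₂ M ≤ c`, an encoder `E` and a decoder `D`. -/
def IsSimulation [Fintype X] [Fintype Y] (c : ℝ) (N : X → Y → ℝ≥0∞) : Prop :=
  ∃ (m M : ℕ) (PK : Fin m → ℝ≥0∞) (E : X → Fin m → Fin M → ℝ≥0∞)
    (D : Fin M → Fin m → Y → ℝ≥0∞),
    0 < M ∧ Real.logb 2 M ≤ c ∧ (∑ k, PK k = 1) ∧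
    (∀ x k, ∑ j, E x k j = 1) ∧ (∀ j k, ∑ y, D j k y = 1) ∧
    ∀ x y, N x y = ∑ k, ∑ j, PK k * E x k j * D j k y

/-- `D_α(W, N) := max_x D_α(W(·|x) ‖ N(·|x))`. -/
def chD [Fintype X] [Fintype Y] (α : ℝ≥0∞) (W N : X → Y → ℝ≥0∞) : EReal :=
  ⨆ x, renyiD α (W x) (N x)

/-- `𝖣_α(W, c) := min_{N ∈ A(W,c)} D_α(W, N)`. -/
def simD [Fintype X] [Fintype Y] (α : ℝ≥0∞) (W : X → Y → ℝ≥0∞) (c : ℝ) : EReal :=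
  ⨅ N : {N : X → Y → ℝ≥0∞ // IsSimulation c N}, chD α W N.1

/-- The `n`-fold memoryless extension `W^{×n}` of a channel `W`. -/
def prodCh [Fintype X] [Fintype Y] (n : ℕ) (W : X → Y → ℝ≥0∞) :
    (Fin n → X) → (Fin n → Y) → ℝ≥0∞ :=
  fun xs ys => ∏ i, W (xs i) (ys i)

/-- A sequence of communication costs with rate at most `r`. -/
def RateOK (r : ℝ) (c : ℕ → ℝ) : Prop :=
  (∀ n, 0 ≤ c n) ∧ Filter.limsup (fun n : ℕ => ((c n / n : ℝ) : EReal)) Filter.atTop ≤ (r : EReal)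

/-- Reliability function `E_rf^{(α)}(W, r)`. -/
def Erf [Fintype X] [Fintype Y] (α : ℝ≥0∞) (W : X → Y → ℝ≥0∞) (r : ℝ) : EReal :=
  ⨆ c : {c : ℕ → ℝ // RateOK r c},
    Filter.liminf
      (fun n : ℕ => (((-1 : ℝ) / n : ℝ) : EReal) * eLog2 (simD α (prodCh n W) (c.1 n)))
      Filter.atTop

/-- Strong converse exponent `E_sc^{(α)}(W, r)`. -/
def Esc [Fintype X] [Fintype Y] (α : ℝ≥0∞) (W : X → Y → ℝ≥0∞) (r : ℝ) : EReal :=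
  ⨅ c : {c : ℕ → ℝ // RateOK r c},
    Filter.limsup
      (fun n : ℕ => (((1 : ℝ) / n : ℝ) : EReal) * simD α (prodCh n W) (c.1 n))
      Filter.atTop

/-- The `α`-Rényi simulation rate `R_RST^{(α)}(W)`. -/
def Rrst [Fintype X] [Fintype Y] (α : ℝ≥0∞) (W : X → Y → ℝ≥0∞) : EReal :=
  ⨅ c : {c : ℕ → ℝ // (∀ n, 0 ≤ c n) ∧
      Filter.limsup (fun n : ℕ => simD α (prodCh n W) (c n)) Filter.atTop = 0},
    Filter.limsup (fun n : ℕ => ((c.1 n / n : ℝ) : EReal)) Filter.atTop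

/-- n-fold product of a joint distribution on `X × Y`, as a distribution on pairs of
sequences. -/
def prodJoint [Fintype X] [Fintype Y] (n : ℕ) (P : X × Y → ℝ≥0∞) :
    (Fin n → X) × (Fin n → Y) → ℝ≥0∞ :=
  fun p => ∏ i, P (p.1 i, p.2 i)

/-- n-fold product distribution. -/
def prodDist [Fintype X] (n : ℕ) (P : X → ℝ≥0∞) : (Fin n → X) → ℝ≥0∞ :=
  fun xs => ∏ i, P (xs i)

/-- The type (empirical count vector) of a sequence. -/
def seqType [Fintype Y] [DecidableEq Y] {n : ℕ} (ys : Fin n → Y) : Y → ℕ :=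
  fun y => (Finset.univ.filter fun i => ys i = y).card

/-- The cardinality of the type class of a sequence. -/
def typeClassCard [Fintype Y] [DecidableEq Y] {n : ℕ} (ys : Fin n → Y) : ℕ :=
  (Finset.univ.filter fun zs : Fin n → Y => seqType zs = seqType ys).card

/-- The number of types of sequences in `Y^n`. -/
def numTypes (Y : Type*) [Fintype Y] [DecidableEq Y] (n : ℕ) : ℕ :=
  (Finset.univ.image fun ys : Fin n → Y => seqType ys).card

/-- `Φ_{Y^n}`: the uniform mixture over type classes of `Y^n`. -/
def PhiY (Y : Type*) [Fintype Y] [DecidableEq Y] (n : ℕ) : (Fin n → Y) → ℝ≥0∞ :=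
  fun ys => ((numTypes Y n : ℝ≥0∞) * (typeClassCard ys : ℝ≥0∞))⁻¹

end RST

namespace RST

theorem klpt (u v c : ℝ) (hu : 0 ≤ u) (hv : 0 < v) (hc : 0 < c) :
    u * Real.log c + u - c * v ≤ u * Real.log (u / v) := by
  rcases hu.eq_or_lt with rfl | hu
  · simp; positivity
  · have h := Real.log_le_sub_one_of_pos (x := c * v / u) (by positivity)
    rw [Real.log_div (by positivity) hu.ne', Real.log_mul hc.ne' hv.ne'] at h
    rw [Real.log_div hu.ne' hv.ne']
    have h2 : u * (Real.log c + Real.log v - Real.log u) ≤ u * (c * v / u - 1) :=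
      mul_le_mul_of_nonneg_left h hu.le
    have h3 : u * (c * v / u - 1) = c * v - u := by field_simp
    nlinarith

theorem kl_convex (l m u1 u2 v1 v2 : ℝ) (hl : 0 ≤ l) (hm : 0 ≤ m) (hlm : l + m = 1)
    (hu1 : 0 ≤ u1) (hu2 : 0 ≤ u2) (hv1 : 0 < v1) (hv2 : 0 < v2) :
    (l * u1 + m * u2) * Real.log ((l * u1 + m * u2) / (l * v1 + m * v2)) ≤
      l * (u1 * Real.log (u1 / v1)) + m * (u2 * Real.log (u2 / v2)) := by
  have hV : 0 < l * v1 + m * v2 := by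
    rcases hl.eq_or_lt with rfl | hl
    · have : m = 1 := by linarith
      subst this; simpa using hv2
    · have := mul_pos hl hv1
      have := mul_nonneg hm hv2.le
      linarith
  have hU : 0 ≤ l * u1 + m * u2 := by positivity
  rcases hU.eq_or_lt with h0 | hU
  · have h1 : l * u1 = 0 := by nlinarith [mul_nonneg hl hu1, mul_nonneg hm hu2]
    have h2 : m * u2 = 0 := by nlinarith [mul_nonneg hl hu1, mul_nonneg hm hu2]
    rw [← h0, ← mul_assoc, ← mul_assoc, h1, h2]; simp
  · set c := (l * u1 + m * u2) / (l * v1 + m * v2) with hc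
    have hcp : 0 < c := by positivity
    have e : c * (l * v1 + m * v2) = l * u1 + m * u2 := by rw [hc]; field_simp
    have a1 := mul_le_mul_of_nonneg_left (klpt u1 v1 c hu1 hv1 hcp) hl
    have a2 := mul_le_mul_of_nonneg_left (klpt u2 v2 c hu2 hv2 hcp) hm
    nlinarith

/-- One-shot Jensen bound. -/
theorem jensen_lb {Z : Type*} [Fintype Z] (v w q : Z → ℝ) (a : ℝ)
    (hv : ∀ z, 0 ≤ v z) (hv1 : ∑ z, v z = 1) (hw : ∀ z, 0 ≤ w z) (hq : ∀ z, 0 ≤ q z)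
    (hpos : ∀ z, 0 < v z → 0 < w z ∧ 0 < q z) :
    0 < ∑ z, w z ^ a * q z ^ (1 - a) ∧
    ∑ z, v z * (a * Real.log (w z / v z) + (1 - a) * Real.log (q z / v z)) ≤
      Real.log (∑ z, w z ^ a * q z ^ (1 - a)) := by
  have hF : 0 < ∑ z, w z ^ a * q z ^ (1 - a) := by
    obtain ⟨z, -, hz⟩ : ∃ z ∈ Finset.univ, 0 < v z := by
      apply Finset.exists_lt_of_sum_lt (f := fun _ => (0:ℝ)); simp [hv1]
    apply Finset.sum_pos' (fun z _ => mul_nonneg (Real.rpow_nonneg (hw z) _) (Real.rpow_nonneg (hq z) _))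
    obtain ⟨h1, h2⟩ := hpos z hz
    exact ⟨z, Finset.mem_univ _, by positivity⟩
  refine ⟨hF, ?_⟩
  set F := ∑ z, w z ^ a * q z ^ (1 - a) with hFd
  have key : ∀ z, v z * (a * Real.log (w z / v z) + (1 - a) * Real.log (q z / v z)) ≤
      v z * Real.log F + (w z ^ a * q z ^ (1 - a) / F - v z) := by
    intro z
    rcases (hv z).eq_or_lt with h0 | h0
    · rw [← h0]
      have : 0 ≤ w z ^ a * q z ^ (1 - a) / F :=
        div_nonneg (mul_nonneg (Real.rpow_nonneg (hw z) _) (Real.rpow_nonneg (hq z) _)) hF.le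
      simpa using this
    · obtain ⟨h1, h2⟩ := hpos z h0
      have h := Real.log_le_sub_one_of_pos (x := w z ^ a * q z ^ (1 - a) / F / v z) (by positivity)
      rw [Real.log_div (by positivity) h0.ne', Real.log_div (by positivity) hF.ne',
        Real.log_mul (by positivity) (by positivity), Real.log_rpow h1, Real.log_rpow h2] at h
      rw [Real.log_div h1.ne' h0.ne', Real.log_div h2.ne' h0.ne']
      have h3 := mul_le_mul_of_nonneg_left h h0.le
      have h4 : v z * (w z ^ a * q z ^ (1 - a) / F / v z - 1) =
        w z ^ a * q z ^ (1 - a) / F - v z := by field_simp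
      rw [h4] at h3
      nlinarith
  calc _ ≤ ∑ z, (v z * Real.log F + (w z ^ a * q z ^ (1 - a) / F - v z)) :=
        Finset.sum_le_sum fun z _ => key z
    _ = Real.log F := by
        rw [Finset.sum_add_distrib, ← Finset.sum_mul, hv1, Finset.sum_sub_distrib, hv1,
          ← Finset.sum_div, ← hFd, div_self hF.ne']
        ring

/-- Expectation of a product of coordinate functions. -/
theorem exp_prod {n : ℕ} {Y : Type*} [Fintype Y] (V g : Fin n → Y → ℝ) :
    ∑ y : Fin n → Y, (∏ i, V i (y i)) * ∏ i, g i (y i) = ∏ i, ∑ b, V i b * g i b := by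
  classical
  rw [Finset.prod_univ_sum, Fintype.piFinset_univ]
  simp [Finset.prod_mul_distrib]

theorem exp_one {n : ℕ} {Y : Type*} [Fintype Y] (V : Fin n → Y → ℝ)
    (hV : ∀ i, ∑ b, V i b = 1) : ∑ y : Fin n → Y, (∏ i, V i (y i)) = 1 := by
  have := exp_prod V (fun _ _ => 1)
  simpa [hV] using this

theorem exp_coord {n : ℕ} {Y : Type*} [Fintype Y] (V : Fin n → Y → ℝ)
    (hV : ∀ i, ∑ b, V i b = 1) (i : Fin n) (h : Y → ℝ) :
    ∑ y : Fin n → Y, (∏ i, V i (y i)) * h (y i) = ∑ b, V i b * h b := by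
  classical
  have := exp_prod V (fun k b => if k = i then h b else 1)
  simp only [Finset.prod_ite_eq', Finset.mem_univ, if_true] at this
  rw [this]
  rw [Finset.prod_eq_single i]
  · simp
  · intro k _ hk; simp [hk, hV]
  · simp

theorem exp_coord2 {n : ℕ} {Y : Type*} [Fintype Y] (V : Fin n → Y → ℝ)
    (hV : ∀ i, ∑ b, V i b = 1) (i j : Fin n) (hij : i ≠ j) (h g : Y → ℝ)
    (h0 : ∑ b, V i b * h b = 0) :
    ∑ y : Fin n → Y, (∏ i, V i (y i)) * (h (y i) * g (y j)) = 0 := by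
  classical
  have := exp_prod V (fun k b => (if k = i then h b else 1) * (if k = j then g b else 1))
  simp only [Finset.prod_mul_distrib, Finset.prod_ite_eq', Finset.mem_univ, if_true] at this
  rw [this]
  apply Finset.prod_eq_zero (Finset.mem_univ i)
  simp [hij, h0]

theorem exp_sum {n : ℕ} {Y : Type*} [Fintype Y] (V : Fin n → Y → ℝ)
    (hV : ∀ i, ∑ b, V i b = 1) (h : Fin n → Y → ℝ) :
    ∑ y : Fin n → Y, (∏ i, V i (y i)) * ∑ i, h i (y i) = ∑ i, ∑ b, V i b * h i b := by
  simp_rw [Finset.mul_sum]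
  rw [Finset.sum_comm]
  exact Finset.sum_congr rfl fun i _ => exp_coord V hV i (h i)

theorem exp_sq {n : ℕ} {Y : Type*} [Fintype Y] (V : Fin n → Y → ℝ)
    (hV : ∀ i, ∑ b, V i b = 1) (h : Fin n → Y → ℝ)
    (h0 : ∀ i, ∑ b, V i b * h i b = 0) :
    ∑ y : Fin n → Y, (∏ i, V i (y i)) * (∑ i, h i (y i)) ^ 2 = ∑ i, ∑ b, V i b * (h i b) ^ 2 := by
  simp_rw [sq, Finset.sum_mul_sum, Finset.mul_sum]
  rw [Finset.sum_comm]
  refine Finset.sum_congr rfl fun i _ => ?_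
  rw [Finset.sum_comm, Finset.sum_eq_single i]
  · exact exp_coord V hV i (fun b => h i b * h i b)
  · intro j _ hj
    exact exp_coord2 V hV i j hj.symm _ _ (h0 i)
  · simp

/-- `E (S - t)^+ ≤ (E S - t)^+ + sqrt(Var)`. -/
theorem exp_pos_part {n : ℕ} {Y : Type*} [Fintype Y] (V : Fin n → Y → ℝ)
    (hV0 : ∀ i b, 0 ≤ V i b)
    (hV : ∀ i, ∑ b, V i b = 1) (h : Fin n → Y → ℝ) (B : ℝ) (hB0 : 0 < B)
    (hB : ∀ i b, 0 < V i b → |h i b| ≤ B) (t : ℝ) :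
    ∑ y : Fin n → Y, (∏ i, V i (y i)) * max 0 (∑ i, h i (y i) - t) ≤
      max 0 (∑ i, ∑ b, V i b * h i b - t) + (2 * B) * Real.sqrt n := by
  set m : Fin n → ℝ := fun i => ∑ b, V i b * h i b with hm
  have hmB : ∀ i, |m i| ≤ B := by
    intro i
    calc |m i| ≤ ∑ b, |V i b * h i b| := Finset.abs_sum_le_sum_abs _ _
      _ ≤ ∑ b, V i b * B := by
        refine Finset.sum_le_sum fun b _ => ?_
        rw [abs_mul, abs_of_nonneg (hV0 i b)]
        rcases (hV0 i b).eq_or_lt with h0 | h0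
        · simp [← h0]
        · exact mul_le_mul_of_nonneg_left (hB i b h0) h0.le
      _ = B := by rw [← Finset.sum_mul, hV, one_mul]
  have hvar := exp_sq V hV (fun i b => h i b - m i) (by
    intro i
    simp_rw [mul_sub, Finset.sum_sub_distrib, ← Finset.sum_mul, hV, one_mul]
    simp [hm])
  have hvar2 : ∑ i, ∑ b, V i b * (h i b - m i) ^ 2 ≤ n * (2 * B) ^ 2 := by
    calc _ ≤ ∑ i : Fin n, (2 * B) ^ 2 := by
          refine Finset.sum_le_sum fun i _ => ?_
          calc _ ≤ ∑ b, V i b * (2 * B) ^ 2 := by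
                refine Finset.sum_le_sum fun b _ => ?_
                rcases (hV0 i b).eq_or_lt with h0 | h0
                · simp [← h0]
                · refine mul_le_mul_of_nonneg_left ?_ h0.le
                  rw [sq_le_sq, abs_of_pos (by positivity : 0 < 2 * B)]
                  have := abs_sub (h i b) (m i)
                  have := hB i b h0
                  have := hmB i
                  linarith
            _ = _ := by rw [← Finset.sum_mul, hV, one_mul]
      _ = _ := by simp
  have hp : ∀ y : Fin n → Y, 0 ≤ ∏ i, V i (y i) := fun y => Finset.prod_nonneg fun i _ => hV0 i _
  have h1 := exp_one V hV
  rcases Nat.eq_zero_or_pos n with rfl | hn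
  · simp
  have hs : 0 < Real.sqrt n := Real.sqrt_pos.2 (by exact_mod_cast hn)
  have hss : Real.sqrt n * Real.sqrt n = n := Real.mul_self_sqrt (by positivity)
  set s := Real.sqrt n with hsd
  -- pointwise bound with AM-GM
  have hpt : ∀ y : Fin n → Y, max 0 (∑ i, h i (y i) - t) ≤
      max 0 (∑ i, m i - t) + ((B * s) + (∑ i, (h i (y i) - m i)) ^ 2 / (4 * (B * s))) := by
    intro y
    have hd : ∑ i, (h i (y i) - m i) = ∑ i, h i (y i) - ∑ i, m i := by
      rw [Finset.sum_sub_distrib]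
    set d := ∑ i, (h i (y i) - m i) with hdd
    have hBs : 0 < B * s := by positivity
    have hdle : d ≤ (B * s) + d ^ 2 / (4 * (B * s)) := by
      rw [← sub_nonneg]
      have : (B * s) + d ^ 2 / (4 * (B * s)) - d = (2 * (B * s) - d) ^ 2 / (4 * (B * s)) := by
        field_simp; ring
      rw [this]; positivity
    have h0 : 0 ≤ d ^ 2 / (4 * (B * s)) := by positivity
    apply max_le
    · have := le_max_left 0 (∑ i, m i - t); linarith
    · have := le_max_right 0 (∑ i, m i - t); linarith
  calc _ ≤ ∑ y : Fin n → Y, (∏ i, V i (y i)) * (max 0 (∑ i, m i - t) + ((B * s) + (∑ i, (h i (y i) - m i)) ^ 2 / (4 * (B * s)))) :=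
        Finset.sum_le_sum fun y _ => mul_le_mul_of_nonneg_left (hpt y) (hp y)
    _ = max 0 (∑ i, m i - t) + B * s + (∑ y : Fin n → Y, (∏ i, V i (y i)) * (∑ i, (h i (y i) - m i)) ^ 2) / (4 * (B * s)) := by
        simp_rw [mul_add, Finset.sum_add_distrib, ← Finset.sum_mul, h1, ← mul_div_assoc, ← Finset.sum_div]
        ring
    _ ≤ max 0 (∑ i, m i - t) + B * s + (n * (2 * B) ^ 2) / (4 * (B * s)) := by
        rw [hvar]; gcongr
    _ = _ := by rw [← hss]; field_simp; ring

theorem prod_aux {M : ℕ} (j : Fin M) (u v : ℝ) :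
    ∏ i : Fin M, ((if i < j then u else 1) * (if i = j then v else 1)) = u ^ (j : ℕ) * v := by
  rw [Finset.prod_mul_distrib, Finset.prod_ite_eq', ← Finset.prod_filter, Finset.prod_const]
  have h : (Finset.univ.filter fun i : Fin M => i < j) = Finset.Iio j := by ext; simp
  rw [h, Fin.card_Iio]
  simp

theorem sim_exists {X Y : Type*} [Fintype X] [Fintype Y] (M : ℕ) (hM : 0 < M) (Q : Y → ℝ)
    (hQ0 : ∀ y, 0 ≤ Q y) (hQ1 : ∑ y, Q y = 1) (T : X → Y → ℝ) (hT0 : ∀ x y, 0 ≤ T x y)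
    (hT1 : ∀ x, ∑ y, T x y ≤ 1) (hTQ : ∀ x y, T x y ≤ M * Q y) (c : ℝ)
    (hc : Real.logb 2 M ≤ c) :
    ∃ N : X → Y → ℝ≥0∞, IsSimulation c N ∧ ∀ x y, ENNReal.ofReal (T x y / 2) ≤ N x y := by
  have hMr : (0:ℝ) < M := by exact_mod_cast hM
  set a : X → Y → ℝ := fun x y => T x y / (M * Q y) with ha
  have ha0 : ∀ x y, 0 ≤ a x y := fun x y => div_nonneg (hT0 x y) (mul_nonneg hMr.le (hQ0 y))
  have ha1 : ∀ x y, a x y ≤ 1 := fun x y =>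
    div_le_one_of_le₀ (hTQ x y) (mul_nonneg hMr.le (hQ0 y))
  have hQa : ∀ x y, Q y * a x y = T x y / M := by
    intro x y
    rcases (hQ0 y).eq_or_lt with h | h
    · have h1 := hTQ x y
      rw [← h, mul_zero] at h1
      have : T x y = 0 := le_antisymm h1 (hT0 x y)
      simp [this, ← h]
    · simp only [ha]; field_simp
  set e := Fintype.equivFin (Fin M → Y) with he
  set E : X → (Fin M → Y) → Fin M → ℝ := fun x k j =>
    a x (k j) * ∏ i with i < j, (1 - a x (k i)) + (∏ i, (1 - a x (k i))) / M with hE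
  have hpr : ∀ x (k : Fin M → Y) (s : Finset (Fin M)), 0 ≤ ∏ i ∈ s, (1 - a x (k i)) := fun x k s =>
    Finset.prod_nonneg fun i _ => sub_nonneg.2 (ha1 _ _)
  have hE0 : ∀ x k j, 0 ≤ E x k j := fun x k j =>
    add_nonneg (mul_nonneg (ha0 _ _) (hpr _ _ _)) (div_nonneg (hpr _ _ _) hMr.le)
  have hE1 : ∀ x k, ∑ j, E x k j = 1 := by
    intro x k
    simp only [hE]
    rw [Finset.sum_add_distrib, Finset.sum_const, Finset.card_univ, Fintype.card_fin, nsmul_eq_mul,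
      mul_div_cancel₀ _ hMr.ne', Finset.prod_one_sub_ordered]
    ring
  have hPK0 : ∀ k : Fin M → Y, 0 ≤ ∏ i, Q (k i) := fun k => Finset.prod_nonneg fun i _ => hQ0 _
  refine ⟨fun x y => ∑ k, ∑ j, ENNReal.ofReal (∏ i, Q (e.symm k i)) *
      ENNReal.ofReal (E x (e.symm k) j) * (if e.symm k j = y then 1 else 0),
    ⟨Fintype.card (Fin M → Y), M, fun k => ENNReal.ofReal (∏ i, Q (e.symm k i)),
      fun x k j => ENNReal.ofReal (E x (e.symm k) j), fun j k y => if e.symm k j = y then 1 else 0,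
      hM, hc, ?_, ?_, ?_, fun x y => rfl⟩, ?_⟩
  · rw [← ENNReal.ofReal_sum_of_nonneg (fun k _ => hPK0 _),
      Equiv.sum_comp e.symm (fun k => ∏ i, Q (k i)), exp_one (fun _ => Q) (fun _ => hQ1)]
    simp
  · intro x k
    rw [← ENNReal.ofReal_sum_of_nonneg (fun j _ => hE0 _ _ _), hE1]
    simp
  · intro j k
    simp
  · intro x y
    set p := ∑ b, T x b / M with hp
    have hpM : p ≤ 1 / M := by
      rw [hp, ← Finset.sum_div]; exact div_le_div_of_nonneg_right (hT1 x) hMr.le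
    have hp0 : 0 ≤ p := Finset.sum_nonneg fun b _ => div_nonneg (hT0 _ _) hMr.le
    have hp1 : p ≤ 1 := hpM.trans (div_le_one_of_le₀ (by exact_mod_cast hM) hMr.le)
    have hj : ∀ j : Fin M, ∑ k : Fin M → Y, (∏ i, Q (k i)) *
        (a x (k j) * (∏ i with i < j, (1 - a x (k i))) * (if k j = y then 1 else 0)) =
        (1 - p) ^ (j : ℕ) * (T x y / M) := by
      intro j
      have h := exp_prod (fun _ : Fin M => Q) (fun i b => (if i < j then 1 - a x b else 1) *
        (if i = j then (if b = y then a x b else 0) else 1))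
      rw [← prod_aux]
      have h2 : ∀ i : Fin M, ∑ b, Q b * ((if i < j then 1 - a x b else 1) *
        (if i = j then (if b = y then a x b else 0) else 1)) =
        (if i < j then 1 - p else 1) * (if i = j then T x y / M else 1) := by
        intro i
        by_cases h1 : i < j
        · simp [h1, h1.ne, mul_sub, hQ1, hQa, hp]
        · by_cases h2 : i = j
          · simp [h2, hQa]
          · simp [h1, h2, hQ1]
      simp_rw [h2] at h
      rw [← h]
      refine Finset.sum_congr rfl fun k _ => ?_
      congr 1
      rw [Finset.prod_mul_distrib, Finset.prod_ite_eq', ← Finset.prod_filter]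
      simp only [Finset.mem_univ, if_true]
      split_ifs <;> ring
    have hreal : T x y / 2 ≤ ∑ k : Fin M → Y, ∑ j, (∏ i, Q (k i)) * E x k j *
        (if k j = y then 1 else 0) := by
      calc T x y / 2 ≤ ∑ j : Fin M, (1 - (j:ℕ) / (M:ℝ)) * (T x y / M) := by
            rw [← Finset.sum_mul, Finset.sum_sub_distrib, ← Finset.sum_div,
              Fin.sum_univ_eq_sum_range (fun j => (j:ℝ))]
            have hg : (∑ i ∈ Finset.range M, (i:ℝ)) * 2 = M * (M - 1) := by
              have := Finset.sum_range_id_mul_two M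
              have h2 : ((∑ i ∈ Finset.range M, i : ℕ) : ℝ) * 2 = M * ((M - 1 : ℕ) : ℝ) := by
                exact_mod_cast this
              rw [Nat.cast_sub hM] at h2
              push_cast at h2
              exact h2
            have hg2 : (∑ i ∈ Finset.range M, (i:ℝ)) = M * (M - 1) / 2 := by linarith
            rw [hg2]
            simp only [Finset.sum_const, Finset.card_univ, Fintype.card_fin, nsmul_eq_mul, mul_one]
            have : ((M:ℝ) - M * (M - 1) / 2 / M) * (T x y / M) = T x y / 2 + T x y / (2 * M) := by
              field_simp; ring
            rw [this]
            have : 0 ≤ T x y / (2 * M) := div_nonneg (hT0 _ _) (by positivity)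
            linarith
        _ ≤ ∑ j : Fin M, (1 - p) ^ (j : ℕ) * (T x y / M) := by
            refine Finset.sum_le_sum fun j _ => mul_le_mul_of_nonneg_right ?_
              (div_nonneg (hT0 _ _) hMr.le)
            have hb := one_add_mul_le_pow (a := -p) (by linarith) (j:ℕ)
            have : (j:ℕ) * p ≤ (j:ℕ) * (1 / (M:ℝ)) := mul_le_mul_of_nonneg_left hpM (by positivity)
            rw [← sub_eq_add_neg] at hb
            have h3 : ((j:ℕ):ℝ) / M = (j:ℕ) * (1 / (M:ℝ)) := by ring
            rw [h3]
            linarith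
        _ = ∑ k : Fin M → Y, ∑ j, (∏ i, Q (k i)) *
              (a x (k j) * (∏ i with i < j, (1 - a x (k i))) * (if k j = y then 1 else 0)) := by
            rw [Finset.sum_comm]
            exact Finset.sum_congr rfl fun j _ => (hj j).symm
        _ ≤ _ := by
            refine Finset.sum_le_sum fun k _ => Finset.sum_le_sum fun j _ => ?_
            rw [mul_assoc (∏ i, Q (k i)) (E x k j)]
            refine mul_le_mul_of_nonneg_left (mul_le_mul_of_nonneg_right ?_ ?_) (hPK0 k)
            · simp only [hE]
              have : 0 ≤ (∏ i, (1 - a x (k i))) / (M:ℝ) := div_nonneg (hpr _ _ _) hMr.le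
              linarith
            · split_ifs <;> norm_num
    refine (ENNReal.ofReal_le_ofReal hreal).trans (le_of_eq ?_)
    beta_reduce
    rw [Equiv.sum_comp e.symm (fun k => ∑ j, ENNReal.ofReal (∏ i, Q (k i)) *
      ENNReal.ofReal (E x k j) * (if k j = y then 1 else 0))]
    have hnn : ∀ (k : Fin M → Y) j, 0 ≤ (∏ i, Q (k i)) * E x k j * (if k j = y then (1:ℝ) else 0) := by
      intro k j
      refine mul_nonneg (mul_nonneg (hPK0 k) (hE0 _ _ _)) ?_
      split_ifs <;> norm_num
    rw [ENNReal.ofReal_sum_of_nonneg (fun k _ => Finset.sum_nonneg fun j _ => hnn k j)]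
    refine Finset.sum_congr rfl fun k _ => ?_
    rw [ENNReal.ofReal_sum_of_nonneg (fun j _ => hnn k j)]
    refine Finset.sum_congr rfl fun j _ => ?_
    rw [ENNReal.ofReal_mul (mul_nonneg (hPK0 k) (hE0 _ _ _)), ENNReal.ofReal_mul (hPK0 k)]
    split_ifs <;> simp

theorem elog2_mono {s t : ℝ≥0∞} (h : s ≤ t) : elog2 s ≤ elog2 t := by
  unfold elog2
  by_cases hs : s = 0
  · simp [hs]
  have ht : t ≠ 0 := fun h0 => hs (le_antisymm (h0 ▸ h) bot_le)
  by_cases htt : t = ⊤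
  · simp [htt]
  have hst : s ≠ ⊤ := fun h0 => htt (top_le_iff.1 (h0 ▸ h))
  rw [if_neg hs, if_neg ht, if_neg hst, if_neg htt, EReal.coe_le_coe_iff]
  exact Real.logb_le_logb_of_le (by norm_num) (ENNReal.toReal_pos hs hst)
    (ENNReal.toReal_mono htt h)

theorem elog2_ofReal {x : ℝ} (hx : 0 < x) : elog2 (ENNReal.ofReal x) = (Real.logb 2 x : ℝ) := by
  unfold elog2
  rw [if_neg (by simpa using hx), if_neg ENNReal.ofReal_ne_top, ENNReal.toReal_ofReal hx.le]

theorem renyiD_eq {Z : Type*} [Fintype Z] (β : ℝ) (h0 : 0 < β) (h1 : β < 1) (P Q : Z → ℝ≥0∞) :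
    renyiD (ENNReal.ofReal β) P Q =
      (((β - 1)⁻¹ : ℝ) : EReal) * elog2 (∑ x, P x ^ β * Q x ^ (1 - β)) := by
  unfold renyiD
  rw [if_neg (by simpa using h0), if_neg (by
    rw [ENNReal.ofReal_eq_one]; exact h1.ne), if_neg ENNReal.ofReal_ne_top,
    ENNReal.toReal_ofReal h0.le]

theorem renyiD_ge {Z : Type*} [Fintype Z] (β : ℝ) (h0 : 0 < β) (h1 : β < 1) (P Q : Z → ℝ≥0∞)
    (F : ℝ) (hF : 0 < F) (h : ∑ x, P x ^ β * Q x ^ (1 - β) ≤ ENNReal.ofReal F) :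
    (((β - 1)⁻¹ * Real.logb 2 F : ℝ) : EReal) ≤ renyiD (ENNReal.ofReal β) P Q := by
  rw [renyiD_eq β h0 h1, EReal.coe_mul, ← elog2_ofReal hF, mul_comm, mul_comm (((β - 1)⁻¹ : ℝ) : EReal)]
  refine EReal.mul_le_mul_of_nonpos_right (elog2_mono h) ?_
  have : (β - 1)⁻¹ ≤ 0 := inv_nonpos.2 (by linarith)
  exact_mod_cast this

theorem renyiD_le {Z : Type*} [Fintype Z] (β : ℝ) (h0 : 0 < β) (h1 : β < 1) (P Q : Z → ℝ≥0∞)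
    (F : ℝ) (hF : 0 < F) (h : ENNReal.ofReal F ≤ ∑ x, P x ^ β * Q x ^ (1 - β)) :
    renyiD (ENNReal.ofReal β) P Q ≤ (((β - 1)⁻¹ * Real.logb 2 F : ℝ) : EReal) := by
  rw [renyiD_eq β h0 h1, EReal.coe_mul, ← elog2_ofReal hF, mul_comm, mul_comm (((β - 1)⁻¹ : ℝ) : EReal)]
  refine EReal.mul_le_mul_of_nonpos_right (elog2_mono h) ?_
  have : (β - 1)⁻¹ ≤ 0 := inv_nonpos.2 (by linarith)
  exact_mod_cast this

/-- KKT point for the Rényi capacity. -/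
theorem kkt {X Y : Type*} [Fintype X] [Fintype Y] [Nonempty X]
    (W : X → Y → ℝ) (hW0 : ∀ x y, 0 ≤ W x y) (hW1 : ∀ x, ∑ y, W x y = 1)
    (β : ℝ) (h0 : 0 < β) (h1 : β < 1) :
    ∃ P : X → ℝ, (∀ x, 0 ≤ P x) ∧ ∑ x, P x = 1 ∧
      0 < ∑ y, (∑ x, P x * W x y ^ β) ^ (1 / β) ∧
      ∀ x, ∑ y, (∑ x, P x * W x y ^ β) ^ (1 / β) ≤
        ∑ y, W x y ^ β * (∑ x, P x * W x y ^ β) ^ (1 / β - 1) := by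
  set f : (X → ℝ) → ℝ := fun P => ∑ y, (∑ x, P x * W x y ^ β) ^ (1 / β) with hf
  have hb : 1 ≤ 1 / β := by rw [le_div_iff₀ h0]; linarith
  have hcont : Continuous f := by
    refine continuous_finsetSum _ fun y _ => ?_
    refine Continuous.rpow_const (by fun_prop) fun P => Or.inr (by positivity)
  obtain ⟨P, hP, hmin⟩ := (isCompact_stdSimplex ℝ X).exists_isMinOn
    ⟨_, single_mem_stdSimplex ℝ (Classical.arbitrary X)⟩ hcont.continuousOn
  have hS0 : ∀ y, 0 ≤ ∑ x, P x * W x y ^ β := fun y =>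
    Finset.sum_nonneg fun x _ => mul_nonneg (hP.1 x) (Real.rpow_nonneg (hW0 x y) _)
  refine ⟨P, hP.1, hP.2, ?_, ?_⟩
  · obtain ⟨x, -, hx⟩ : ∃ z ∈ Finset.univ, 0 < P z := by
      apply Finset.exists_lt_of_sum_lt (f := fun _ => (0:ℝ)); simp [hP.2]
    obtain ⟨y, -, hy⟩ : ∃ z ∈ Finset.univ, 0 < W x z := by
      apply Finset.exists_lt_of_sum_lt (f := fun _ => (0:ℝ)); simp [hW1]
    refine Finset.sum_pos' (fun y _ => Real.rpow_nonneg (hS0 y) _) ⟨y, Finset.mem_univ _, ?_⟩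
    refine Real.rpow_pos_of_pos ?_ _
    refine Finset.sum_pos' (fun x _ => mul_nonneg (hP.1 x) (Real.rpow_nonneg (hW0 x y) _))
      ⟨x, Finset.mem_univ _, by positivity⟩
  · intro x
    set S : Y → ℝ := fun y => ∑ x, P x * W x y ^ β with hS
    -- directional derivative
    have hd : HasDerivAt (fun t : ℝ => ∑ y, (S y + t * (W x y ^ β - S y)) ^ (1 / β))
        (∑ y, (1 / β) * (S y) ^ (1 / β - 1) * (W x y ^ β - S y)) 0 := by
      refine HasDerivAt.fun_sum fun y _ => ?_
      have hin : HasDerivAt (fun t : ℝ => S y + t * (W x y ^ β - S y)) (W x y ^ β - S y) 0 := by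
        simpa using ((hasDerivAt_id (0:ℝ)).mul_const (W x y ^ β - S y)).const_add (S y)
      have := HasDerivAt.comp (0:ℝ) (h₂ := fun u : ℝ => u ^ (1 / β))
        (Real.hasDerivAt_rpow_const (x := S y + 0 * (W x y ^ β - S y)) (p := 1 / β) (Or.inr hb)) hin
      simpa [Function.comp_def] using this
    have hge : ∀ t ∈ Set.Ioo (0:ℝ) 1, f P ≤ ∑ y, (S y + t * (W x y ^ β - S y)) ^ (1 / β) := by
      intro t ht
      have hmem : (1 - t) • P + t • (Pi.single x 1 : X → ℝ) ∈ stdSimplex ℝ X :=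
        convex_stdSimplex ℝ X hP (single_mem_stdSimplex ℝ x) (by linarith [ht.2]) ht.1.le (by ring)
      have h := hmin hmem
      refine (show f P ≤ f _ from h).trans (le_of_eq ?_)
      simp only [hf]
      refine Finset.sum_congr rfl fun y _ => ?_
      congr 1
      simp only [Pi.add_apply, Pi.smul_apply, smul_eq_mul, add_mul, Finset.sum_add_distrib]
      simp only [mul_assoc, ← Finset.mul_sum, Pi.single_apply, ite_mul, one_mul, zero_mul,
        Finset.sum_ite_eq', Finset.mem_univ, if_true, hS]
      ring
    have hnn : 0 ≤ ∑ y, (1 / β) * (S y) ^ (1 / β - 1) * (W x y ^ β - S y) := by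
      have ht := hd.tendsto_slope_zero_right
      refine ge_of_tendsto ht ?_
      filter_upwards [Ioo_mem_nhdsGT (show (0:ℝ) < 1 by norm_num)] with t ht
      have := hge t ht
      simp only [zero_add, zero_mul, add_zero, smul_eq_mul]
      exact mul_nonneg (inv_nonneg.2 ht.1.le) (sub_nonneg.2 this)
    have hre : ∑ y, (1 / β) * (S y) ^ (1 / β - 1) * (W x y ^ β - S y) =
        (1 / β) * (∑ y, W x y ^ β * S y ^ (1 / β - 1) - ∑ y, S y ^ (1 / β)) := by
      rw [← Finset.sum_sub_distrib, Finset.mul_sum]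
      refine Finset.sum_congr rfl fun y _ => ?_
      have : S y ^ (1 / β) = S y ^ (1 / β - 1) * S y := by
        have hne : 1 / β - 1 + 1 ≠ 0 := by simp [h0.ne']
        have := Real.rpow_add_one' (hS0 y) hne
        rw [← this]; congr 1; ring
      rw [this]; ring
    rw [hre] at hnn
    have := (mul_nonneg_iff_of_pos_left (by positivity : 0 < 1 / β)).1 hnn
    linarith

theorem cap_exists {X Y : Type*} [Fintype X] [Fintype Y] [Nonempty X]
    (W : X → Y → ℝ) (hW0 : ∀ x y, 0 ≤ W x y) (hW1 : ∀ x, ∑ y, W x y = 1)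
    (β : ℝ) (h0 : 0 < β) (h1 : β < 1) :
    ∃ (Q : Y → ℝ) (κ : ℝ), (∀ y, 0 ≤ Q y) ∧ ∑ y, Q y = 1 ∧
      (κ : EReal) ≤ renyiCap (ENNReal.ofReal β) (fun x y => ENNReal.ofReal (W x y)) ∧
      ∀ x, Real.exp (-(1 - β) * (κ * Real.log 2)) ≤ ∑ y, W x y ^ β * Q y ^ (1 - β) := by
  obtain ⟨P, hP0, hP1, hf, hk⟩ := kkt W hW0 hW1 β h0 h1
  set S : Y → ℝ := fun y => ∑ x, P x * W x y ^ β with hS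
  have hS0 : ∀ y, 0 ≤ S y := fun y =>
    Finset.sum_nonneg fun x _ => mul_nonneg (hP0 x) (Real.rpow_nonneg (hW0 x y) _)
  set f := ∑ y, S y ^ (1 / β) with hfd
  have h1' : 0 < 1 - β := by linarith
  have hl2 : Real.log 2 ≠ 0 := (Real.log_pos (by norm_num)).ne'
  refine ⟨fun y => S y ^ (1 / β) / f, (β - 1)⁻¹ * Real.logb 2 (f ^ β), ?_, ?_, ?_, ?_⟩
  · intro y; exact div_nonneg (Real.rpow_nonneg (hS0 y) _) hf.le
  · rw [← Finset.sum_div, ← hfd, div_self hf.ne']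
  · have hPd : IsDist (fun x => ENNReal.ofReal (P x)) := by
      unfold IsDist
      rw [← ENNReal.ofReal_sum_of_nonneg (fun x _ => hP0 x), hP1, ENNReal.ofReal_one]
    refine le_trans ?_ (le_iSup _ ⟨_, hPd⟩)
    refine le_iInf fun Q => ?_
    refine renyiD_ge β h0 h1 _ _ _ (by positivity) ?_
    have hmarg : ∀ x, margX (joint (fun x => ENNReal.ofReal (P x))
        (fun x y => ENNReal.ofReal (W x y))) x = ENNReal.ofReal (P x) := by
      intro x
      unfold margX joint
      simp only
      rw [← Finset.mul_sum, ← ENNReal.ofReal_sum_of_nonneg (fun y _ => hW0 x y), hW1]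
      simp
    have hterm : ∀ x y, joint (fun x => ENNReal.ofReal (P x))
        (fun x y => ENNReal.ofReal (W x y)) (x, y) ^ β *
        (ENNReal.ofReal (P x) * Q.1 y) ^ (1 - β) =
        ENNReal.ofReal (P x * W x y ^ β) * Q.1 y ^ (1 - β) := by
      intro x y
      unfold joint
      simp only
      rw [ENNReal.mul_rpow_of_nonneg _ _ h0.le, ENNReal.mul_rpow_of_nonneg _ _ h1'.le,
        ENNReal.ofReal_mul (hP0 x), ← ENNReal.ofReal_rpow_of_nonneg (hW0 x y) h0.le]
      have : ENNReal.ofReal (P x) = ENNReal.ofReal (P x) ^ β * ENNReal.ofReal (P x) ^ (1 - β) := by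
        rw [← ENNReal.rpow_add_of_nonneg _ _ h0.le h1'.le]; simp
      conv_rhs => rw [this]
      ring
    rw [Fintype.sum_prod_type]
    simp only [hmarg, hterm]
    rw [Finset.sum_comm]
    simp_rw [← Finset.sum_mul]
    have hSe : ∀ y, ∑ x, ENNReal.ofReal (P x * W x y ^ β) = ENNReal.ofReal (S y) := fun y =>
      (ENNReal.ofReal_sum_of_nonneg
        (fun x _ => mul_nonneg (hP0 x) (Real.rpow_nonneg (hW0 x y) _))).symm
    simp_rw [hSe]
    have hpq : (1 / β).HolderConjugate (1 / (1 - β)) := by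
      rw [Real.holderConjugate_iff]
      refine ⟨by rw [lt_div_iff₀ h0]; linarith, by simp⟩
    refine (ENNReal.inner_le_Lp_mul_Lq Finset.univ _ _ hpq).trans (le_of_eq ?_)
    have hQ : ∑ y, (Q.1 y ^ (1 - β)) ^ (1 / (1 - β)) = 1 := by
      rw [← Q.2]
      refine Finset.sum_congr rfl fun y _ => ?_
      rw [← ENNReal.rpow_mul, mul_one_div_cancel h1'.ne', ENNReal.rpow_one]
    rw [hQ, ENNReal.one_rpow, mul_one, one_div_one_div]
    simp_rw [ENNReal.ofReal_rpow_of_nonneg (hS0 _) (by positivity : 0 ≤ 1 / β)]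
    rw [← ENNReal.ofReal_sum_of_nonneg (fun y _ => Real.rpow_nonneg (hS0 y) _),
      ENNReal.ofReal_rpow_of_nonneg hf.le h0.le]
  · intro x
    have e1 : Real.exp (-(1 - β) * ((β - 1)⁻¹ * Real.logb 2 (f ^ β) * Real.log 2)) = f ^ β := by
      rw [show -(1 - β) * ((β - 1)⁻¹ * Real.logb 2 (f ^ β) * Real.log 2) = Real.log (f ^ β) from ?_]
      · exact Real.exp_log (by positivity)
      · have : β - 1 ≠ 0 := by linarith
        unfold Real.logb
        field_simp
        ring
    rw [e1]
    have e2 : ∀ y, W x y ^ β * (S y ^ (1 / β) / f) ^ (1 - β) =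
        (W x y ^ β * S y ^ (1 / β - 1)) * (f ^ (1 - β))⁻¹ := by
      intro y
      rw [Real.div_rpow (Real.rpow_nonneg (hS0 y) _) hf.le, ← Real.rpow_mul (hS0 y)]
      have : 1 / β * (1 - β) = 1 / β - 1 := by field_simp
      rw [this]; ring
    simp_rw [e2]
    rw [← Finset.sum_mul]
    calc f ^ β = f * (f ^ (1 - β))⁻¹ := by
          rw [← Real.rpow_neg hf.le]
          conv_rhs => rw [← Real.rpow_one f, ← Real.rpow_mul hf.le, ← Real.rpow_add hf]
          congr 1; ring
      _ ≤ _ := mul_le_mul_of_nonneg_right (hk x) (by positivity)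

/-- Relative entropy in nats of (finite) nonnegative vectors. -/
def kl {Y : Type*} [Fintype Y] (p q : Y → ℝ) : ℝ := ∑ y, p y * Real.log (p y / q y)

theorem kl_nonneg {Y : Type*} [Fintype Y] (p q : Y → ℝ) (hp : ∀ y, 0 ≤ p y) (hp1 : ∑ y, p y = 1)
    (hq : ∀ y, 0 < q y) (hq1 : ∑ y, q y = 1) : 0 ≤ kl p q := by
  have : ∑ y, (p y - q y) ≤ kl p q := by
    refine Finset.sum_le_sum fun y _ => ?_
    simpa using klpt (p y) (q y) 1 (hp y) (hq y) one_pos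
  rw [Finset.sum_sub_distrib, hp1, hq1] at this
  linarith

theorem tilt {Y : Type*} [Fintype Y] (w q : Y → ℝ) (hw : ∀ y, 0 ≤ w y)
    (hq : ∀ y, 0 < q y) (a s β κ : ℝ) (hβ : β * (a + s) = a) (has : 0 < a + s) (hβ0 : 0 < β)
    (hZ : Real.exp (-(1 - β) * κ) ≤ ∑ y, w y ^ β * q y ^ (1 - β)) :
    ∃ v : Y → ℝ, (∀ y, 0 ≤ v y) ∧ ∑ y, v y = 1 ∧ (∀ y, 0 < v y ↔ 0 < w y) ∧
      a * kl v w + s * kl v q ≤ s * κ := by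
  set Z := ∑ y, w y ^ β * q y ^ (1 - β) with hZd
  have hZp : 0 < Z := (Real.exp_pos _).trans_le hZ
  have hv0 : ∀ y, 0 ≤ w y ^ β * q y ^ (1 - β) / Z := fun y =>
    div_nonneg (mul_nonneg (Real.rpow_nonneg (hw y) _) (Real.rpow_nonneg (hq y).le _)) hZp.le
  have hsum : ∑ y, w y ^ β * q y ^ (1 - β) / Z = 1 := by
    rw [← Finset.sum_div, ← hZd, div_self hZp.ne']
  refine ⟨fun y => w y ^ β * q y ^ (1 - β) / Z, hv0, hsum, ?_, ?_⟩
  · intro y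
    beta_reduce
    constructor
    · intro h
      rcases (hw y).eq_or_lt with h0 | h0
      · rw [← h0, Real.zero_rpow hβ0.ne'] at h; simp at h
      · exact h0
    · intro h
      have := hq y
      positivity
  · have hpt : ∀ y, a * (w y ^ β * q y ^ (1 - β) / Z * Real.log (w y ^ β * q y ^ (1 - β) / Z / w y)) +
        s * (w y ^ β * q y ^ (1 - β) / Z * Real.log (w y ^ β * q y ^ (1 - β) / Z / q y)) =
        w y ^ β * q y ^ (1 - β) / Z * (-(a + s) * Real.log Z) := by
      intro y
      rcases (hw y).eq_or_lt with h0 | h0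
      · rw [← h0, Real.zero_rpow hβ0.ne']; simp
      · have hqy := hq y
        rw [Real.log_div (by positivity) h0.ne', Real.log_div (by positivity) hqy.ne',
          Real.log_div (by positivity) hZp.ne', Real.log_mul (by positivity) (by positivity),
          Real.log_rpow h0, Real.log_rpow hqy]
        have : a * (β * Real.log (w y) + (1 - β) * Real.log (q y) - Real.log Z - Real.log (w y)) +
          s * (β * Real.log (w y) + (1 - β) * Real.log (q y) - Real.log Z - Real.log (q y)) =
          -(a + s) * Real.log Z := by
          linear_combination (Real.log (w y) - Real.log (q y)) * hβ
        rw [← this]; ring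
    have : a * kl (fun y => w y ^ β * q y ^ (1 - β) / Z) w + s * kl (fun y => w y ^ β * q y ^ (1 - β) / Z) q =
        -(a + s) * Real.log Z := by
      unfold kl
      rw [Finset.mul_sum, Finset.mul_sum, ← Finset.sum_add_distrib]
      simp_rw [hpt]
      rw [← Finset.sum_mul, hsum, one_mul]
    rw [this]
    have hl : -(1 - β) * κ ≤ Real.log Z := (Real.le_log_iff_exp_le hZp).2 hZ
    have h2 := mul_le_mul_of_nonneg_left hl has.le
    have h3 : (a + s) * (-(1 - β) * κ) = - s * κ := by linear_combination κ * hβ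
    linarith

theorem step {X Y : Type*} [Fintype X] [Fintype Y] [Nonempty X] [Nonempty Y]
    (W : X → Y → ℝ) (hW0 : ∀ x y, 0 ≤ W x y) (hW1 : ∀ x, ∑ y, W x y = 1)
    (α : ℝ) (hα0 : 0 < α) (hα1 : α < 1) (r R : ℝ) (hR : 0 ≤ R)
    (H : ∀ β : ℝ, α ≤ β → β ≤ 1 → (((α * (1 - β)) / (β * (1 - α)) : ℝ) : EReal) *
      (renyiCap (ENNReal.ofReal β) (fun x y => ENNReal.ofReal (W x y)) - (r : EReal)) ≤ (R : EReal))
    (ε : ℝ) (hε : 0 < ε) (s : ℝ) (hs0 : 0 ≤ s) (hs1 : s ≤ 1) :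
    ∃ (V : X → Y → ℝ) (Q : Y → ℝ), (∀ x y, 0 ≤ V x y) ∧ (∀ x, ∑ y, V x y = 1) ∧
      (∀ x y, 0 < V x y ↔ 0 < W x y) ∧ (∀ y, 0 < Q y) ∧ ∑ y, Q y = 1 ∧
      ∀ x, α / (1 - α) * kl (V x) (W x) + s * (kl (V x) Q - r * Real.log 2) ≤
        R * Real.log 2 + ε := by
  have hl2 : 0 < Real.log 2 := Real.log_pos (by norm_num)
  have hY : (0:ℝ) < Fintype.card Y := by exact_mod_cast Fintype.card_pos
  rcases hs0.eq_or_lt with rfl | hs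
  · refine ⟨W, fun _ => 1 / Fintype.card Y, hW0, hW1, fun _ _ => Iff.rfl, fun _ => by positivity,
      by simp, fun x => ?_⟩
    have : kl (W x) (W x) = 0 := by
      unfold kl
      refine Finset.sum_eq_zero fun y _ => ?_
      by_cases h : W x y = 0
      · simp [h]
      · simp [div_self h]
    rw [this]
    have := mul_nonneg hR hl2.le
    linarith
  · have h1a : 0 < 1 - α := by linarith
    set a := α / (1 - α) with ha
    have hap : 0 < a := by positivity
    have has : 0 < a + s := by positivity
    set β := a / (a + s) with hβ
    have hβ0 : 0 < β := by positivity
    have hβa : β * (a + s) = a := by rw [hβ]; field_simp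
    have hβ1 : β < 1 := by rw [hβ, div_lt_one has]; linarith
    have haa : a * (1 - α) = α := by rw [ha]; field_simp
    have hαβ : α ≤ β := by
      rw [hβ, le_div_iff₀ has]
      nlinarith
    obtain ⟨Q0, κ, hQ0, hQ1, hκ, hZ⟩ := cap_exists W hW0 hW1 β hβ0 hβ1
    have hcoef : (α * (1 - β)) / (β * (1 - α)) = s := by
      rw [div_eq_iff (by positivity)]
      linear_combination (-(1 - β)) * haa - (1 - α) * hβa
    have hsk : s * (κ - r) ≤ R := by
      have h := H β hαβ hβ1.le
      rw [hcoef] at h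
      have h2 : ((s * (κ - r) : ℝ) : EReal) ≤ (R : EReal) := by
        refine le_trans ?_ h
        rw [EReal.coe_mul, EReal.coe_sub]
        refine mul_le_mul_of_nonneg_left (EReal.sub_le_sub hκ le_rfl) ?_
        exact_mod_cast hs.le
      exact_mod_cast h2
    set e := Real.exp (-ε) with he
    have hep : 0 < e := Real.exp_pos _
    have he1 : e < 1 := by rw [he, Real.exp_lt_one_iff]; linarith
    set Q : Y → ℝ := fun y => e * Q0 y + (1 - e) / Fintype.card Y with hQ
    have hQp : ∀ y, 0 < Q y := by
      intro y
      have h1 := mul_nonneg hep.le (hQ0 y)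
      have h2 : 0 < (1 - e) / (Fintype.card Y : ℝ) := div_pos (by linarith) hY
      simp only [hQ]; linarith
    have hQs : ∑ y, Q y = 1 := by
      simp only [hQ]
      rw [Finset.sum_add_distrib, ← Finset.mul_sum, hQ1]
      simp only [Finset.sum_const, Finset.card_univ, nsmul_eq_mul]
      field_simp; ring
    have hZ2 : ∀ x, Real.exp (-(1 - β) * (κ * Real.log 2 + ε)) ≤ ∑ y, W x y ^ β * Q y ^ (1 - β) := by
      intro x
      calc Real.exp (-(1 - β) * (κ * Real.log 2 + ε))
          = Real.exp (-(1 - β) * (κ * Real.log 2)) * e ^ (1 - β) := by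
            rw [he, ← Real.exp_mul, ← Real.exp_add]; congr 1; ring
        _ ≤ (∑ y, W x y ^ β * Q0 y ^ (1 - β)) * e ^ (1 - β) :=
            mul_le_mul_of_nonneg_right (hZ x) (by positivity)
        _ = ∑ y, W x y ^ β * (e * Q0 y) ^ (1 - β) := by
            rw [Finset.sum_mul]
            refine Finset.sum_congr rfl fun y _ => ?_
            rw [Real.mul_rpow hep.le (hQ0 y)]; ring
        _ ≤ _ := by
            refine Finset.sum_le_sum fun y _ => mul_le_mul_of_nonneg_left ?_
              (Real.rpow_nonneg (hW0 x y) _)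
            refine Real.rpow_le_rpow (mul_nonneg hep.le (hQ0 y)) ?_ (by linarith)
            have h2 : 0 < (1 - e) / (Fintype.card Y : ℝ) := div_pos (by linarith) hY
            simp only [hQ]; linarith
    choose V hV0 hV1 hVW hV using fun x => tilt (W x) Q (hW0 x) hQp a s β _ hβa has hβ0 (hZ2 x)
    refine ⟨V, Q, hV0, hV1, hVW, hQp, hQs, fun x => ?_⟩
    have h1 := hV x
    have h2 := mul_le_mul_of_nonneg_right hsk hl2.le
    nlinarith

theorem kl_mix {Y : Type*} [Fintype Y] (l m : ℝ) (hl : 0 ≤ l) (hm : 0 ≤ m) (hlm : l + m = 1)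
    (p1 p2 q1 q2 : Y → ℝ) (hp1 : ∀ y, 0 ≤ p1 y) (hp2 : ∀ y, 0 ≤ p2 y)
    (hq : ∀ y, (0 < q1 y ∧ 0 < q2 y) ∨ (p1 y = 0 ∧ p2 y = 0)) :
    kl (fun y => l * p1 y + m * p2 y) (fun y => l * q1 y + m * q2 y) ≤
      l * kl p1 q1 + m * kl p2 q2 := by
  unfold kl
  rw [Finset.mul_sum, Finset.mul_sum, ← Finset.sum_add_distrib]
  refine Finset.sum_le_sum fun y _ => ?_
  rcases hq y with ⟨h1, h2⟩ | ⟨h1, h2⟩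
  · exact kl_convex l m _ _ _ _ hl hm hlm (hp1 y) (hp2 y) h1 h2
  · simp [h1, h2]

theorem timeshare {X Y : Type*} [Fintype X] [Fintype Y]
    (W : X → Y → ℝ) (hW0 : ∀ x y, 0 ≤ W x y) (a r R : ℝ) (ha : 0 < a) (k : ℕ) (hk : 0 < k)
    (hr : 0 ≤ r)
    (V : ℕ → X → Y → ℝ) (Q : ℕ → Y → ℝ) (hV0 : ∀ i x y, 0 ≤ V i x y)
    (hV1 : ∀ i x, ∑ y, V i x y = 1) (hVW : ∀ i x y, 0 < V i x y ↔ 0 < W x y)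
    (hQ0 : ∀ i y, 0 < Q i y) (hQ1 : ∀ i, ∑ y, Q i y = 1)
    (hb : ∀ i ≤ k, ∀ x, a * kl (V i x) (W x) + (i / k : ℝ) * (kl (V i x) (Q i) - r) ≤ R)
    (P : X → ℝ) (hP0 : ∀ x, 0 ≤ P x) (hP1 : ∑ x, P x = 1) :
    ∃ (i j : ℕ) (l m : ℝ), i ≤ k ∧ j ≤ k ∧ 0 ≤ l ∧ 0 ≤ m ∧ l + m = 1 ∧
      a * ∑ x, P x * kl (fun y => l * V i x y + m * V j x y) (W x) +
      max 0 (∑ x, P x * kl (fun y => l * V i x y + m * V j x y) (fun y => l * Q i y + m * Q j y) - r)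
        ≤ R + r / k := by
  have hkr : (0:ℝ) < k := by exact_mod_cast hk
  have hrk : 0 ≤ r / k := by positivity
  set f : ℕ → ℝ := fun i => ∑ x, P x * kl (V i x) (W x) with hf
  set g : ℕ → ℝ := fun i => ∑ x, P x * kl (V i x) (Q i) - r with hg
  have hfg : ∀ i ≤ k, a * f i + (i / k : ℝ) * g i ≤ R := by
    intro i hi
    have : ∑ x, P x * (a * kl (V i x) (W x) + (i / k : ℝ) * (kl (V i x) (Q i) - r)) ≤ ∑ x, P x * R :=
      Finset.sum_le_sum fun x _ => mul_le_mul_of_nonneg_left (hb i hi x) (hP0 x)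
    rw [← Finset.sum_mul, hP1, one_mul] at this
    refine le_trans (le_of_eq ?_) this
    simp only [hf, hg]
    rw [Finset.mul_sum, mul_sub, Finset.mul_sum]
    have e : (i / k : ℝ) * r = ∑ x, P x * ((i / k : ℝ) * r) := by rw [← Finset.sum_mul, hP1, one_mul]
    rw [e, ← Finset.sum_sub_distrib, ← Finset.sum_add_distrib]
    exact Finset.sum_congr rfl fun x _ => by ring
  have hgr : ∀ i, -r ≤ g i := by
    intro i
    have : 0 ≤ ∑ x, P x * kl (V i x) (Q i) := Finset.sum_nonneg fun x _ =>
      mul_nonneg (hP0 x) (kl_nonneg _ _ (hV0 i x) (hV1 i x) (hQ0 i) (hQ1 i))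
    simp only [hg]; linarith
  have single : ∀ i ≤ k, a * f i + max 0 (g i) ≤ R + r / k → _ := fun i hi h =>
    (⟨i, i, 1, 0, hi, hi, by norm_num, le_rfl, by norm_num, by simpa [hf, hg] using h⟩ :
    ∃ (i j : ℕ) (l m : ℝ), i ≤ k ∧ j ≤ k ∧ 0 ≤ l ∧ 0 ≤ m ∧ l + m = 1 ∧
      a * ∑ x, P x * kl (fun y => l * V i x y + m * V j x y) (W x) +
      max 0 (∑ x, P x * kl (fun y => l * V i x y + m * V j x y) (fun y => l * Q i y + m * Q j y) - r)
        ≤ R + r / k)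
  by_cases h0 : g 0 ≤ 0
  · refine single 0 (Nat.zero_le _) ?_
    have := hfg 0 (Nat.zero_le _)
    rw [max_eq_left h0]; simp at this; linarith
  by_cases hk0 : 0 ≤ g k
  · refine single k le_rfl ?_
    have := hfg k le_rfl
    rw [div_self hkr.ne'] at this
    rw [max_eq_right hk0]; linarith
  push Not at h0 hk0
  have hex : ∃ m, g m ≤ 0 := ⟨k, hk0.le⟩
  obtain ⟨i, hi⟩ : ∃ i, Nat.find hex = i + 1 :=
    Nat.exists_eq_succ_of_ne_zero fun h => absurd (Nat.find_spec hex) (by rw [h]; linarith)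
  have hj := Nat.find_spec hex
  have hjk : Nat.find hex ≤ k := Nat.find_min' hex hk0.le
  have hii : 0 < g i := by
    have := Nat.find_min hex (m := i) (by omega)
    linarith
  rw [hi] at hj hjk
  have hD : 0 < g i - g (i + 1) := by linarith
  set l := -g (i + 1) / (g i - g (i + 1)) with hl
  set m := g i / (g i - g (i + 1)) with hm
  have hl0 : 0 ≤ l := div_nonneg (by linarith) hD.le
  have hm0 : 0 ≤ m := by positivity
  have hlm : l + m = 1 := by rw [hl, hm]; field_simp; ring
  have hz : l * g i + m * g (i + 1) = 0 := by rw [hl, hm]; field_simp; ring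
  refine ⟨i, i + 1, l, m, by omega, hjk, hl0, hm0, hlm, ?_⟩
  have hF : ∑ x, P x * kl (fun y => l * V i x y + m * V (i + 1) x y) (W x) ≤ l * f i + m * f (i + 1) := by
    simp only [hf]
    rw [Finset.mul_sum, Finset.mul_sum, ← Finset.sum_add_distrib]
    refine Finset.sum_le_sum fun x _ => ?_
    have h := kl_mix l m hl0 hm0 hlm (V i x) (V (i + 1) x) (W x) (W x) (hV0 _ _) (hV0 _ _) (by
      intro y
      rcases (hW0 x y).eq_or_lt with h | h
      · right
        have h1 := hVW i x y
        have h2 := hVW (i + 1) x y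
        rw [← h] at h1 h2
        have := hV0 i x y
        have := hV0 (i + 1) x y
        constructor
        · by_contra hne; exact absurd (h1.1 (lt_of_le_of_ne (hV0 i x y) (Ne.symm hne))) (lt_irrefl _)
        · by_contra hne; exact absurd (h2.1 (lt_of_le_of_ne (hV0 (i+1) x y) (Ne.symm hne))) (lt_irrefl _)
      · left; exact ⟨h, h⟩)
    have hWW : (fun y => l * W x y + m * W x y) = W x := by
      funext y; rw [← add_mul, hlm, one_mul]
    rw [hWW] at h
    have := mul_le_mul_of_nonneg_left h (hP0 x)
    linarith
  have hG : ∑ x, P x * kl (fun y => l * V i x y + m * V (i + 1) x y)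
      (fun y => l * Q i y + m * Q (i + 1) y) - r ≤ l * g i + m * g (i + 1) := by
    have : ∑ x, P x * kl (fun y => l * V i x y + m * V (i + 1) x y)
      (fun y => l * Q i y + m * Q (i + 1) y) ≤
      l * ∑ x, P x * kl (V i x) (Q i) + m * ∑ x, P x * kl (V (i + 1) x) (Q (i + 1)) := by
      rw [Finset.mul_sum, Finset.mul_sum, ← Finset.sum_add_distrib]
      refine Finset.sum_le_sum fun x _ => ?_
      have h := kl_mix l m hl0 hm0 hlm (V i x) (V (i + 1) x) (Q i) (Q (i + 1)) (hV0 _ _) (hV0 _ _)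
        (fun y => Or.inl ⟨hQ0 i y, hQ0 (i + 1) y⟩)
      have := mul_le_mul_of_nonneg_left h (hP0 x)
      linarith
    simp only [hg]
    have e : r = l * r + m * r := by rw [← add_mul, hlm, one_mul]
    linarith
  rw [hz] at hG
  rw [max_eq_left hG]
  have h1 := mul_le_mul_of_nonneg_left (hfg i (by omega)) hl0
  have h2 := mul_le_mul_of_nonneg_left (hfg (i + 1) hjk) hm0
  have h3 := mul_le_mul_of_nonneg_left hF ha.le
  push_cast at h2
  have h4 : l * (a * f i + (i:ℝ) / k * g i) + m * (a * f (i + 1) + ((i:ℝ) + 1) / k * g (i + 1)) =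
      a * (l * f i + m * f (i + 1)) + m * g (i + 1) / k := by
    linear_combination ((i:ℝ) / k) * hz
  have h5 : -(r / k) ≤ m * g (i + 1) / k := by
    rw [← neg_div]
    refine div_le_div_of_nonneg_right ?_ hkr.le
    have := hgr (i + 1)
    have hm1 : m ≤ 1 := by linarith
    nlinarith
  have h6 : l * R + m * R = R := by rw [← add_mul, hlm, one_mul]
  linarith

theorem exists_pos_lb {ι : Type*} [Fintype ι] (F : ι → ℝ) (hF : ∀ i, 0 < F i) :
    ∃ μ : ℝ, 0 < μ ∧ μ ≤ 1 ∧ ∀ i, μ ≤ F i := by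
  rcases isEmpty_or_nonempty ι with h | h
  · exact ⟨1, one_pos, le_rfl, fun i => (h.false i).elim⟩
  · obtain ⟨i, hi⟩ := Finite.exists_min F
    exact ⟨min 1 (F i), lt_min one_pos (hF i), min_le_left _ _, fun j => (min_le_right _ _).trans (hi j)⟩

theorem package {X Y : Type*} [Fintype X] [Fintype Y] [Nonempty X] [Nonempty Y]
    (W : X → Y → ℝ) (hW0 : ∀ x y, 0 ≤ W x y) (hW1 : ∀ x, ∑ y, W x y = 1)
    (α : ℝ) (hα0 : 0 < α) (hα1 : α < 1) (r R : ℝ) (hr : 0 ≤ r) (hR : 0 ≤ R)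
    (H : ∀ β : ℝ, α ≤ β → β ≤ 1 → (((α * (1 - β)) / (β * (1 - α)) : ℝ) : EReal) *
      (renyiCap (ENNReal.ofReal β) (fun x y => ENNReal.ofReal (W x y)) - (r : EReal)) ≤ (R : EReal))
    (ε : ℝ) (hε : 0 < ε) :
    ∃ B : ℝ, 0 < B ∧ ∀ P : X → ℝ, ∃ (V : X → Y → ℝ) (Q : Y → ℝ), (∀ x y, 0 ≤ V x y) ∧
      (∀ x, ∑ y, V x y = 1) ∧ (∀ x y, 0 < V x y → 0 < W x y) ∧ (∀ y, 0 < Q y) ∧ ∑ y, Q y = 1 ∧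
      (∀ x y, 0 < V x y → |Real.log (V x y / Q y)| ≤ B) ∧
      ((∀ x, 0 ≤ P x) → ∑ x, P x = 1 → α / (1 - α) * ∑ x, P x * kl (V x) (W x) +
        max 0 (∑ x, P x * kl (V x) Q - r * Real.log 2) ≤ R * Real.log 2 + ε) := by
  have hl2 : 0 < Real.log 2 := Real.log_pos (by norm_num)
  obtain ⟨k, hk⟩ := exists_nat_gt (r * Real.log 2 / (ε / 2))
  have hkr : (0:ℝ) < k := lt_of_le_of_lt (by positivity) hk
  have hk0 : 0 < k := by exact_mod_cast hkr
  have hrk : r * Real.log 2 / k ≤ ε / 2 := by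
    rw [div_le_iff₀ hkr]
    rw [div_lt_iff₀ (by positivity)] at hk
    linarith
  choose V Q hV0 hV1 hVW hQ0 hQ1 hb using fun i : ℕ =>
    step W hW0 hW1 α hα0 hα1 r R hR H (ε / 2) (by positivity) (min (i / k : ℝ) 1)
      (by positivity) (min_le_right _ _)
  have hts := timeshare W hW0 (α / (1 - α)) (r * Real.log 2) (R * Real.log 2 + ε / 2)
    (div_pos hα0 (by linarith)) k hk0 (by positivity) V Q hV0 hV1 hVW hQ0 hQ1 (by
      intro i hi x
      have h := hb i x
      rwa [min_eq_left (div_le_one_of_le₀ (by exact_mod_cast hi) hkr.le)] at h)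
  obtain ⟨μ, hμ0, hμ1, hμ⟩ := exists_pos_lb (ι := Fin (k + 1) × X × Y)
    (fun t => min (if 0 < W t.2.1 t.2.2 then V t.1 t.2.1 t.2.2 else 1) (Q t.1 t.2.2)) (by
      rintro ⟨i, x, y⟩
      refine lt_min ?_ (hQ0 _ _)
      simp only
      split_ifs with h
      · exact (hVW _ _ _).2 h
      · exact one_pos)
  have hμV : ∀ i ≤ k, ∀ x y, 0 < W x y → μ ≤ V i x y := by
    intro i hi x y h
    have := (hμ (⟨i, by omega⟩, x, y)).trans (min_le_left _ _)
    simpa [h] using this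
  have hμQ : ∀ i ≤ k, ∀ y, μ ≤ Q i y := by
    intro i hi y
    have := (hμ (⟨i, by omega⟩, Classical.arbitrary X, y)).trans (min_le_right _ _)
    simpa using this
  have hV' : ∀ i x y, V i x y ≤ 1 := fun i x y =>
    (Finset.single_le_sum (fun y _ => hV0 i x y) (Finset.mem_univ y)).trans (hV1 i x).le
  have hQ' : ∀ i y, Q i y ≤ 1 := fun i y =>
    (Finset.single_le_sum (fun y _ => (hQ0 i y).le) (Finset.mem_univ y)).trans (hQ1 i).le
  refine ⟨1 - 2 * Real.log μ, by have := Real.log_nonpos hμ0.le hμ1; linarith, fun P => ?_⟩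
  have hall : ∃ (i j : ℕ) (l m : ℝ), i ≤ k ∧ j ≤ k ∧ 0 ≤ l ∧ 0 ≤ m ∧ l + m = 1 ∧
      ((∀ x, 0 ≤ P x) → ∑ x, P x = 1 →
      α / (1 - α) * ∑ x, P x * kl (fun y => l * V i x y + m * V j x y) (W x) +
      max 0 (∑ x, P x * kl (fun y => l * V i x y + m * V j x y) (fun y => l * Q i y + m * Q j y)
        - r * Real.log 2) ≤ R * Real.log 2 + ε / 2 + r * Real.log 2 / k) := by
    by_cases hP : (∀ x, 0 ≤ P x) ∧ ∑ x, P x = 1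
    · obtain ⟨i, j, l, m, h1, h2, h3, h4, h5, h6⟩ := hts P hP.1 hP.2
      exact ⟨i, j, l, m, h1, h2, h3, h4, h5, fun _ _ => h6⟩
    · exact ⟨0, 0, 1, 0, Nat.zero_le _, Nat.zero_le _, by norm_num, le_rfl, by norm_num,
        fun h1 h2 => absurd ⟨h1, h2⟩ hP⟩
  obtain ⟨i, j, l, m, hi, hj, hl, hm, hlm, hfin⟩ := hall
  have hmixlow : ∀ u v : ℝ, μ ≤ u → μ ≤ v → μ ≤ l * u + m * v := by
    intro u v hu hv
    have := mul_le_mul_of_nonneg_left hu hl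
    have := mul_le_mul_of_nonneg_left hv hm
    have : l * μ + m * μ = μ := by rw [← add_mul, hlm, one_mul]
    linarith
  have hmixup : ∀ u v : ℝ, u ≤ 1 → v ≤ 1 → l * u + m * v ≤ 1 := by
    intro u v hu hv
    have := mul_le_mul_of_nonneg_left hu hl
    have := mul_le_mul_of_nonneg_left hv hm
    linarith
  have hpos : ∀ x y, 0 < l * V i x y + m * V j x y → 0 < W x y := by
    intro x y h
    by_contra hn
    have h1 : V i x y ≤ 0 := by
      by_contra hc; exact hn ((hVW i x y).1 (not_le.1 hc))
    have h2 : V j x y ≤ 0 := by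
      by_contra hc; exact hn ((hVW j x y).1 (not_le.1 hc))
    nlinarith
  refine ⟨fun x y => l * V i x y + m * V j x y, fun y => l * Q i y + m * Q j y, ?_, ?_, hpos, ?_,
    ?_, ?_, ?_⟩
  · intro x y
    exact add_nonneg (mul_nonneg hl (hV0 _ _ _)) (mul_nonneg hm (hV0 _ _ _))
  · intro x
    rw [Finset.sum_add_distrib, ← Finset.mul_sum, ← Finset.mul_sum, hV1, hV1]; linarith
  · intro y
    exact hμ0.trans_le (hmixlow _ _ (hμQ i hi y) (hμQ j hj y))
  · rw [Finset.sum_add_distrib, ← Finset.mul_sum, ← Finset.mul_sum, hQ1, hQ1]; linarith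
  · intro x y h
    have hw := hpos x y h
    have v1 := hmixlow _ _ (hμV i hi x y hw) (hμV j hj x y hw)
    have v2 := hmixup _ _ (hV' i x y) (hV' j x y)
    have q1 := hmixlow _ _ (hμQ i hi y) (hμQ j hj y)
    have q2 := hmixup _ _ (hQ' i y) (hQ' j y)
    have qp := hμ0.trans_le q1
    rw [Real.log_div h.ne' qp.ne']
    have a1 := Real.log_le_log hμ0 v1
    have a2 := Real.log_nonpos h.le v2
    have a3 := Real.log_le_log hμ0 q1
    have a4 := Real.log_nonpos qp.le q2
    rw [abs_le]
    constructor <;> linarith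
  · intro h1 h2
    have := hfin h1 h2
    linarith

theorem nlet {n : ℕ} {Y : Type*} [Fintype Y] (V W : Fin n → Y → ℝ) (Q : Y → ℝ)
    (Qn : (Fin n → Y) → ℝ) (A M α B : ℝ) (hA : 1 ≤ A) (hM : 0 < M) (hα0 : 0 < α) (hα1 : α < 1)
    (hB : 0 < B) (hV0 : ∀ i y, 0 ≤ V i y) (hV1 : ∀ i, ∑ y, V i y = 1) (hW0 : ∀ i y, 0 ≤ W i y)
    (hVW : ∀ i y, 0 < V i y → 0 < W i y) (hQ0 : ∀ y, 0 < Q y) (hQn0 : ∀ y, 0 < Qn y)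
    (hQn : ∀ y : Fin n → Y, ∏ i, Q (y i) ≤ A * Qn y)
    (hVB : ∀ i y, 0 < V i y → |Real.log (V i y / Q y)| ≤ B) :
    0 < ∑ y : Fin n → Y, (∏ i, W i (y i)) ^ α * (min (∏ i, V i (y i)) (M * Qn y) / 2) ^ (1 - α) ∧
    (α - 1)⁻¹ * Real.log (∑ y : Fin n → Y, (∏ i, W i (y i)) ^ α *
      (min (∏ i, V i (y i)) (M * Qn y) / 2) ^ (1 - α)) ≤
      α / (1 - α) * ∑ i, kl (V i) (W i) + max 0 (∑ i, kl (V i) Q - Real.log M) + Real.log A +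
        2 * B * Real.sqrt n + Real.log 2 := by
  have h1a : 0 < 1 - α := by linarith
  have hp0 : ∀ y : Fin n → Y, 0 ≤ ∏ i, V i (y i) := fun y => Finset.prod_nonneg fun i _ => hV0 i _
  have hlA : 0 ≤ Real.log A := Real.log_nonneg hA
  have hs1 := exp_one V hV1
  have hvpos : ∀ y : Fin n → Y, 0 < ∏ i, V i (y i) → ∀ i, 0 < V i (y i) := by
    intro y hy i
    refine lt_of_le_of_ne (hV0 i _) fun h => ?_
    rw [Finset.prod_eq_zero (Finset.mem_univ i) h.symm] at hy
    exact lt_irrefl _ hy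
  obtain ⟨hF, hJ⟩ := jensen_lb (fun y : Fin n → Y => ∏ i, V i (y i)) (fun y => ∏ i, W i (y i))
    (fun y => min (∏ i, V i (y i)) (M * Qn y) / 2) α hp0 hs1
    (fun y => Finset.prod_nonneg fun i _ => hW0 i _)
    (fun y => div_nonneg (le_min (hp0 y) (mul_nonneg hM.le (hQn0 y).le)) (by norm_num))
    (fun y hy => ⟨Finset.prod_pos fun i _ => hVW i _ (hvpos y hy i),
      div_pos (lt_min hy (mul_pos hM (hQn0 y))) (by norm_num)⟩)
  refine ⟨hF, ?_⟩
  set L := Real.log (∑ y : Fin n → Y, (∏ i, W i (y i)) ^ α *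
      (min (∏ i, V i (y i)) (M * Qn y) / 2) ^ (1 - α)) with hL
  have hE1 := exp_sum V hV1 (fun i y => Real.log (V i y / W i y))
  have hE2 := exp_pos_part V hV0 hV1 (fun i y => Real.log (V i y / Q y)) B hB hVB (Real.log M)
  have hpt : ∀ y : Fin n → Y, (∏ i, V i (y i)) * (-(α * ∑ i, Real.log (V i (y i) / W i (y i))) -
      (1 - α) * (max 0 (∑ i, Real.log (V i (y i) / Q (y i)) - Real.log M) + Real.log A + Real.log 2)) ≤
      (∏ i, V i (y i)) * (α * Real.log ((∏ i, W i (y i)) / ∏ i, V i (y i)) +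
        (1 - α) * Real.log (min (∏ i, V i (y i)) (M * Qn y) / 2 / ∏ i, V i (y i))) := by
    intro y
    rcases (hp0 y).eq_or_lt with h0 | h0
    · rw [← h0]; simp
    refine mul_le_mul_of_nonneg_left ?_ h0.le
    have hvi := hvpos y h0
    have hwi : ∀ i, 0 < W i (y i) := fun i => hVW i _ (hvi i)
    have e1 : Real.log ((∏ i, W i (y i)) / ∏ i, V i (y i)) =
        -∑ i, Real.log (V i (y i) / W i (y i)) := by
      rw [← Finset.prod_div_distrib, Real.log_prod (fun i _ => (div_pos (hwi i) (hvi i)).ne'),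
        ← Finset.sum_neg_distrib]
      refine Finset.sum_congr rfl fun i _ => ?_
      rw [← Real.log_inv, inv_div]
    have e2 : ∑ i, Real.log (V i (y i) / Q (y i)) =
        Real.log (∏ i, V i (y i)) - Real.log (∏ i, Q (y i)) := by
      have hqp : 0 < ∏ i, Q (y i) := Finset.prod_pos fun i _ => hQ0 _
      rw [← Real.log_div h0.ne' hqp.ne', ← Finset.prod_div_distrib,
        Real.log_prod (fun i _ => (div_pos (hvi i) (hQ0 _)).ne')]
    have e3 : -(max 0 (∑ i, Real.log (V i (y i) / Q (y i)) - Real.log M) + Real.log A + Real.log 2) ≤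
        Real.log (min (∏ i, V i (y i)) (M * Qn y) / 2 / ∏ i, V i (y i)) := by
      have hmq := mul_pos hM (hQn0 y)
      have hmn : 0 < min (∏ i, V i (y i)) (M * Qn y) := lt_min h0 hmq
      rw [Real.log_div (by positivity) h0.ne', Real.log_div hmn.ne' (by norm_num)]
      rcases le_total (∏ i, V i (y i)) (M * Qn y) with h | h
      · rw [min_eq_left h]
        have := le_max_left 0 (∑ i, Real.log (V i (y i) / Q (y i)) - Real.log M)
        linarith
      · rw [min_eq_right h, Real.log_mul hM.ne' (hQn0 y).ne']
        have := le_max_right 0 (∑ i, Real.log (V i (y i) / Q (y i)) - Real.log M)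
        have h3 := Real.log_le_log (Finset.prod_pos fun i _ => hQ0 (y i)) (hQn y)
        rw [Real.log_mul (by positivity) (hQn0 y).ne'] at h3
        rw [e2] at this ⊢
        linarith
    rw [e1]
    have := mul_le_mul_of_nonneg_left e3 h1a.le
    linarith
  have hsum := (Finset.sum_le_sum fun y (_ : y ∈ Finset.univ) => hpt y).trans hJ
  have hsplit : ∑ y : Fin n → Y, (∏ i, V i (y i)) * (-(α * ∑ i, Real.log (V i (y i) / W i (y i))) -
      (1 - α) * (max 0 (∑ i, Real.log (V i (y i) / Q (y i)) - Real.log M) + Real.log A + Real.log 2)) =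
      -(α * ∑ y : Fin n → Y, (∏ i, V i (y i)) * ∑ i, Real.log (V i (y i) / W i (y i))) -
      (1 - α) * (∑ y : Fin n → Y, (∏ i, V i (y i)) *
        max 0 (∑ i, Real.log (V i (y i) / Q (y i)) - Real.log M) + Real.log A + Real.log 2) := by
    have eA : Real.log A + Real.log 2 = ∑ y : Fin n → Y, (∏ i, V i (y i)) * (Real.log A + Real.log 2) := by
      rw [← Finset.sum_mul, hs1, one_mul]
    rw [add_assoc, eA, ← Finset.sum_add_distrib, Finset.mul_sum, Finset.mul_sum,
      ← Finset.sum_neg_distrib, ← Finset.sum_sub_distrib]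
    exact Finset.sum_congr rfl fun y _ => by ring
  rw [hsplit, hE1] at hsum
  have hneg : (α - 1)⁻¹ = -(1 - α)⁻¹ := by rw [← inv_neg]; congr 1; ring
  have hfin : -L ≤ (1 - α) * (α / (1 - α) * ∑ i, kl (V i) (W i) +
      max 0 (∑ i, kl (V i) Q - Real.log M) + Real.log A + 2 * B * Real.sqrt n + Real.log 2) := by
    have e : (1 - α) * (α / (1 - α) * ∑ i, kl (V i) (W i)) = α * ∑ i, kl (V i) (W i) := by
      field_simp
    have h2 := mul_le_mul_of_nonneg_left hE2 h1a.le
    simp only [kl] at e ⊢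
    nlinarith
  rw [hneg, neg_mul, ← mul_neg, inv_mul_le_iff₀ h1a]
  exact hfin

theorem sum_type {n : ℕ} {X : Type*} [Fintype X] (hn : 0 < n) (x : Fin n → X) (φ : X → ℝ) :
    ∑ i, φ (x i) = n * ∑ b, ((Finset.univ.filter fun i => x i = b).card / n : ℝ) * φ b := by
  have hnr : (n:ℝ) ≠ 0 := by exact_mod_cast hn.ne'
  rw [← Finset.sum_fiberwise' Finset.univ x φ, Finset.mul_sum]
  refine Finset.sum_congr rfl fun b _ => ?_
  rw [Finset.sum_const, nsmul_eq_mul]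
  field_simp

theorem simD_bound {X Y : Type*} [Fintype X] [Fintype Y] [Nonempty X] [Nonempty Y]
    (W : X → Y → ℝ) (hW0 : ∀ x y, 0 ≤ W x y)
    (α : ℝ) (hα0 : 0 < α) (hα1 : α < 1) (r R : ℝ) (hr : 0 ≤ r) (ε B : ℝ) (hB : 0 < B)
    (hpack : ∀ P : X → ℝ, ∃ (V : X → Y → ℝ) (Q : Y → ℝ), (∀ x y, 0 ≤ V x y) ∧
      (∀ x, ∑ y, V x y = 1) ∧ (∀ x y, 0 < V x y → 0 < W x y) ∧ (∀ y, 0 < Q y) ∧ ∑ y, Q y = 1 ∧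
      (∀ x y, 0 < V x y → |Real.log (V x y / Q y)| ≤ B) ∧
      ((∀ x, 0 ≤ P x) → ∑ x, P x = 1 → α / (1 - α) * ∑ x, P x * kl (V x) (W x) +
        max 0 (∑ x, P x * kl (V x) Q - r * Real.log 2) ≤ R * Real.log 2 + ε))
    (n : ℕ) (hn : 0 < n) :
    simD (ENNReal.ofReal α) (prodCh n (fun x y => ENNReal.ofReal (W x y))) (n * r) ≤
      (((n * (R * Real.log 2 + ε) + (Fintype.card X * Real.log (n + 1) + 2 * B * Real.sqrt n +
        2 * Real.log 2)) / Real.log 2 : ℝ) : EReal) := by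
  have hnr : (0:ℝ) < n := by exact_mod_cast hn
  have hl2 : 0 < Real.log 2 := Real.log_pos (by norm_num)
  choose V Q hV0 hV1 hVW hQ0 hQ1 hVB hbd using hpack
  -- index set of types
  set typ : (X → Fin (n + 1)) → X → ℝ := fun t x => ((t x : ℕ) : ℝ) / n with htyp
  set A : ℝ := ((n:ℝ) + 1) ^ Fintype.card X with hA
  have hA1 : 1 ≤ A := one_le_pow₀ (by linarith)
  have hAp : 0 < A := by linarith
  set Qn : (Fin n → Y) → ℝ := fun y => (∑ t : X → Fin (n + 1), ∏ i, Q (typ t) (y i)) / A with hQn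
  have hprodpos : ∀ P (y : Fin n → Y), 0 < ∏ i, Q P (y i) := fun P y =>
    Finset.prod_pos fun i _ => hQ0 P _
  have hQnp : ∀ y, 0 < Qn y := fun y =>
    div_pos (Finset.sum_pos (fun t _ => hprodpos _ y) Finset.univ_nonempty) hAp
  have hQn1 : ∑ y, Qn y = 1 := by
    simp only [hQn]
    rw [← Finset.sum_div, Finset.sum_comm]
    have : ∀ t : X → Fin (n + 1), ∑ y : Fin n → Y, ∏ i, Q (typ t) (y i) = 1 := fun t =>
      exp_one (fun _ => Q (typ t)) (fun _ => hQ1 _)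
    simp_rw [this]
    have hne : (n:ℝ) + 1 ≠ 0 := by positivity
    simp [hA]
    exact hne
  have hQnge : ∀ t y, ∏ i, Q (typ t) (y i) ≤ A * Qn y := by
    intro t y
    simp only [hQn]
    rw [mul_div_cancel₀ _ hAp.ne']
    exact Finset.single_le_sum (f := fun t => ∏ i, Q (typ t) (y i))
      (fun t _ => (hprodpos _ y).le) (Finset.mem_univ t)
  set M : ℕ := ⌊(2:ℝ) ^ (n * r)⌋₊ with hM
  have hpow1 : (1:ℝ) ≤ 2 ^ (n * r) := Real.one_le_rpow (by norm_num) (by positivity)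
  have hM0 : 0 < M := Nat.floor_pos.2 hpow1
  have hMr : (0:ℝ) < M := by exact_mod_cast hM0
  have hMle : (M:ℝ) ≤ 2 ^ (n * r) := Nat.floor_le (by positivity)
  have hMge : (2:ℝ) ^ (n * r) ≤ 2 * M := by
    have h1 := Nat.lt_floor_add_one ((2:ℝ) ^ (n * r))
    have h2 : (1:ℝ) ≤ M := by exact_mod_cast hM0
    rw [← hM] at h1
    linarith
  have hlogM : n * (r * Real.log 2) - Real.log 2 ≤ Real.log M := by
    have := Real.log_le_log (by positivity) hMge
    rw [Real.log_rpow (by norm_num), Real.log_mul (by norm_num) hMr.ne'] at this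
    linarith
  have hlogb : Real.logb 2 M ≤ n * r := by
    rw [Real.logb_le_iff_le_rpow (by norm_num) hMr]; exact hMle
  -- type of a sequence
  set T : (Fin n → X) → X → Fin (n + 1) := fun x b =>
    ⟨(Finset.univ.filter fun i => x i = b).card,
      Nat.lt_succ_of_le ((Finset.card_le_univ _).trans (by simp))⟩ with hT
  set Nt : (Fin n → X) → (Fin n → Y) → ℝ := fun x y =>
    min (∏ i, V (typ (T x)) (x i) (y i)) (M * Qn y) with hNt
  have hNt0 : ∀ x y, 0 ≤ Nt x y := fun x y =>
    le_min (Finset.prod_nonneg fun i _ => hV0 _ _ _) (mul_nonneg hMr.le (hQnp y).le)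
  obtain ⟨N, hNsim, hN⟩ := sim_exists M hM0 Qn (fun y => (hQnp y).le) hQn1 Nt hNt0
    (fun x => (Finset.sum_le_sum fun y _ => min_le_left _ _).trans
      (exp_one (fun i => V (typ (T x)) (x i)) (fun i => hV1 _ _)).le)
    (fun x y => min_le_right _ _) (n * r) hlogb
  refine (iInf_le _ ⟨N, hNsim⟩).trans (iSup_le fun x => ?_)
  obtain ⟨hF, hle⟩ := nlet (fun i => V (typ (T x)) (x i)) (fun i => W (x i)) (Q (typ (T x))) Qn A M α B
    hA1 hMr hα0 hα1 hB (fun i y => hV0 _ _ _) (fun i => hV1 _ _) (fun i y => hW0 _ _)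
    (fun i y => hVW _ _ _) (hQ0 _) hQnp (hQnge (T x)) (fun i y => hVB _ _ _)
  have hWn : ∀ y : Fin n → Y, 0 ≤ ∏ i, W (x i) (y i) := fun y => Finset.prod_nonneg fun i _ => hW0 _ _
  refine (renyiD_le α hα0 hα1 _ _ _ hF ?_).trans ?_
  · rw [ENNReal.ofReal_sum_of_nonneg (fun y _ => mul_nonneg (Real.rpow_nonneg (hWn y) _)
      (Real.rpow_nonneg (div_nonneg (hNt0 x y) (by norm_num)) _))]
    refine Finset.sum_le_sum fun y _ => ?_
    rw [ENNReal.ofReal_mul (Real.rpow_nonneg (hWn y) _),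
      ← ENNReal.ofReal_rpow_of_nonneg (hWn y) hα0.le,
      ← ENNReal.ofReal_rpow_of_nonneg (div_nonneg (hNt0 x y) (by norm_num)) (by linarith),
      ENNReal.ofReal_prod_of_nonneg (fun i _ => hW0 _ _)]
    unfold prodCh
    gcongr
    exact hN x y
  · rw [EReal.coe_le_coe_iff]
    unfold Real.logb
    rw [← mul_div_assoc]
    refine div_le_div_of_nonneg_right (hle.trans ?_) hl2.le
    have e1 := sum_type hn x (fun b => kl (V (typ (T x)) b) (W b))
    have e2 := sum_type hn x (fun b => kl (V (typ (T x)) b) (Q (typ (T x))))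
    have e3 := sum_type hn x (fun _ => 1)
    have hP1 : ∑ b, typ (T x) b = 1 := by
      simp only [Finset.sum_const, Finset.card_univ, Fintype.card_fin, nsmul_eq_mul, mul_one] at e3
      have : (n:ℝ) * 1 = n * ∑ b, typ (T x) b := by simpa [htyp, hT] using e3
      exact (mul_left_cancel₀ hnr.ne' this).symm
    have hb := hbd (typ (T x)) (fun b => by simp only [htyp]; positivity) hP1
    rw [e1, e2]
    have hlA : Real.log A = Fintype.card X * Real.log (n + 1) := by rw [hA, Real.log_pow]
    rw [hlA]
    change α / (1 - α) * (n * ∑ b, typ (T x) b * _) + max 0 (n * ∑ b, typ (T x) b * _ - _) + _ + _ + _ ≤ _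
    set f := ∑ b, typ (T x) b * kl (V (typ (T x)) b) (W b) with hf
    set g := ∑ b, typ (T x) b * kl (V (typ (T x)) b) (Q (typ (T x))) with hg
    have h3 : max 0 (n * g - Real.log M) ≤ n * max 0 (g - r * Real.log 2) + Real.log 2 := by
      apply max_le
      · have := mul_nonneg hnr.le (le_max_left 0 (g - r * Real.log 2)); linarith
      · have := mul_le_mul_of_nonneg_left (le_max_right 0 (g - r * Real.log 2)) hnr.le
        linarith
    have h4 := mul_le_mul_of_nonneg_left hb hnr.le
    linarith

theorem overhead_tendsto (c d e : ℝ) :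
    Tendsto (fun n : ℕ => (c * Real.log (n + 1) + d * Real.sqrt n + e) / (n:ℝ)) atTop (nhds 0) := by
  have hs : Tendsto (fun n : ℕ => Real.sqrt n) atTop atTop :=
    Real.tendsto_sqrt_atTop.comp tendsto_natCast_atTop_atTop
  have h2 : Tendsto (fun n : ℕ => (Real.sqrt n)⁻¹) atTop (nhds 0) := tendsto_inv_atTop_zero.comp hs
  have h3 : Tendsto (fun n : ℕ => ((n:ℝ))⁻¹) atTop (nhds 0) :=
    tendsto_inv_atTop_zero.comp tendsto_natCast_atTop_atTop
  have h1 : Tendsto (fun n : ℕ => Real.log (n + 1) / (n:ℝ)) atTop (nhds 0) := by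
    have hl : Tendsto (fun n : ℕ => Real.log ((n:ℝ) + 1) / ((n:ℝ) + 1)) atTop (nhds 0) := by
      have h := Real.isLittleO_log_id_atTop.tendsto_div_nhds_zero
      exact h.comp (tendsto_atTop_add_const_right _ 1 tendsto_natCast_atTop_atTop)
    have hr : Tendsto (fun n : ℕ => 1 + ((n:ℝ))⁻¹) atTop (nhds (1 + 0)) := h3.const_add 1
    have := hl.mul hr
    rw [zero_mul] at this
    refine this.congr' ?_
    filter_upwards [eventually_gt_atTop 0] with n hn
    have : (n:ℝ) ≠ 0 := by exact_mod_cast hn.ne'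
    have : (n:ℝ) + 1 ≠ 0 := by positivity
    field_simp
  have := ((h1.const_mul c).add (h2.const_mul d)).add (h3.const_mul e)
  simp only [mul_zero, add_zero] at this
  refine this.congr' ?_
  filter_upwards [eventually_gt_atTop 0] with n hn
  have hnp : (0:ℝ) < n := by exact_mod_cast hn
  have hsp : 0 < Real.sqrt n := Real.sqrt_pos.2 hnp
  have hss : Real.sqrt n * Real.sqrt n = n := Real.mul_self_sqrt hnp.le
  have : (Real.sqrt n)⁻¹ = Real.sqrt n / n := by
    rw [eq_div_iff hnp.ne', ← hss, hss]; nth_rewrite 2 [← hss]; field_simp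
  rw [this]
  field_simp

/-- **Achievability of the strong converse exponent for `α ∈ (0,1)`** (Theorem 13):
`E_sc^{(α)}(W,r) ≤ max_{α ≤ β ≤ 1} (α(1-β))/(β(1-α)) (I_β(W) - r)`. -/
theorem strong_converse_exponent_achievability_lt_one
    {X Y : Type*} [Fintype X] [Fintype Y] [Nonempty X] [Nonempty Y]
    (W : X → Y → ℝ≥0∞) (hW : IsChannel W)
    (α : ℝ) (hα0 : 0 < α) (hα1 : α < 1) (r : ℝ) (hr : 0 ≤ r) :
    Esc (ENNReal.ofReal α) W r ≤
      ⨆ β : {β : ℝ // α ≤ β ∧ β ≤ 1},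
        (((α * (1 - β.1)) / (β.1 * (1 - α)) : ℝ) : EReal) *
          (renyiCap (ENNReal.ofReal β.1) W - (r : EReal)) :=  by
  have hl2 : 0 < Real.log 2 := Real.log_pos (by norm_num)
  set w : X → Y → ℝ := fun x y => (W x y).toReal with hw
  have hfin : ∀ x y, W x y ≠ ⊤ := by
    intro x y h
    have h1 := hW x
    have h2 : W x y ≤ 1 := h1 ▸ Finset.single_le_sum (f := W x) (fun _ _ => zero_le) (Finset.mem_univ y)
    rw [h] at h2
    simp at h2
  have hWw : W = fun x y => ENNReal.ofReal (w x y) := by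
    funext x y
    exact (ENNReal.ofReal_toReal (hfin x y)).symm
  have hw0 : ∀ x y, 0 ≤ w x y := fun x y => ENNReal.toReal_nonneg
  have hw1 : ∀ x, ∑ y, w x y = 1 := by
    intro x
    simp only [hw]
    rw [← ENNReal.toReal_sum (fun y _ => hfin x y), hW x]
    simp
  set Rs : EReal := ⨆ β : {β : ℝ // α ≤ β ∧ β ≤ 1},
        (((α * (1 - β.1)) / (β.1 * (1 - α)) : ℝ) : EReal) *
          (renyiCap (ENNReal.ofReal β.1) W - (r : EReal)) with hRs
  have hRs0 : 0 ≤ Rs := by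
    refine le_trans (le_of_eq ?_) (le_iSup _ ⟨1, hα1.le, le_rfl⟩)
    simp
  by_cases htop : Rs = ⊤
  · rw [htop]; exact le_top
  obtain ⟨R, hR⟩ : ∃ R : ℝ, (R : EReal) = Rs :=
    ⟨Rs.toReal, EReal.coe_toReal htop (fun h => by rw [h] at hRs0; simp at hRs0)⟩
  have hR0 : 0 ≤ R := by rw [← hR] at hRs0; exact_mod_cast hRs0
  have H : ∀ β : ℝ, α ≤ β → β ≤ 1 → (((α * (1 - β)) / (β * (1 - α)) : ℝ) : EReal) *
      (renyiCap (ENNReal.ofReal β) (fun x y => ENNReal.ofReal (w x y)) - (r : EReal)) ≤ (R : EReal) := by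
    intro β h1 h2
    rw [hR, ← hWw]
    exact le_iSup (fun β : {β : ℝ // α ≤ β ∧ β ≤ 1} =>
        (((α * (1 - β.1)) / (β.1 * (1 - α)) : ℝ) : EReal) *
          (renyiCap (ENNReal.ofReal β.1) W - (r : EReal))) ⟨β, h1, h2⟩
  rw [← hR]
  have hrate : RateOK r (fun n : ℕ => (n:ℝ) * r) := by
    refine ⟨fun n => by positivity, ?_⟩
    refine limsup_le_of_le (by isBoundedDefault) ?_
    filter_upwards [eventually_gt_atTop 0] with n hn
    have : (n:ℝ) ≠ 0 := by exact_mod_cast hn.ne'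
    rw [mul_div_cancel_left₀ _ this]
  refine (iInf_le _ ⟨_, hrate⟩).trans ?_
  refine EReal.le_of_forall_lt_iff_le.1 fun z hz => ?_
  have hRz : R < z := by exact_mod_cast hz
  set ε := (z - R) * Real.log 2 / 2 with hε
  have hεp : 0 < ε := by
    have := sub_pos.2 hRz
    positivity
  obtain ⟨B, hB, hpack⟩ := package w hw0 hw1 α hα0 hα1 r R hr hR0 H ε hεp
  have hbound := simD_bound w hw0 α hα0 hα1 r R hr ε B hB hpack
  refine limsup_le_of_le (by isBoundedDefault) ?_
  filter_upwards [eventually_gt_atTop 0,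
    (overhead_tendsto (Fintype.card X) (2 * B) (2 * Real.log 2)).eventually_lt_const hεp] with n hn hlt
  have hnp : (0:ℝ) < n := by exact_mod_cast hn
  have h := hbound n hn
  rw [← hWw] at h
  have h1n : (0 : EReal) ≤ (((1:ℝ) / n : ℝ) : EReal) := by
    have : (0:ℝ) ≤ 1 / n := by positivity
    exact_mod_cast this
  refine (mul_le_mul_of_nonneg_left h h1n).trans ?_
  rw [← EReal.coe_mul, EReal.coe_le_coe_iff]
  rw [div_lt_iff₀ hnp] at hlt
  rw [one_div, inv_mul_le_iff₀ hnp, div_le_iff₀ hl2]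
  have : ε * 2 = (z - R) * Real.log 2 := by rw [hε]; ring
  nlinarith

end RST
end
end

section
/- (Achievability of the strong converse exponent for α ≥ 1.) Let α ∈ [1,∞]. For any discrete memoryless channel W: X → Y on finite alphabets and any r ≥ 0, the strong converse exponent satisfies E_sc^{(α)}(W,r) ≤ max{I_α(W) − r, 0}. -/
open scoped ENNReal NNReal BigOperators Classical
open Filter

noncomputable section

namespace RST

lemma minimax_aux {X E : Type*} [Fintype X] [Nonempty X] [AddCommGroup E] [Module ℝ E]
    (S : Set E) (hS : S.Nonempty) (g : X → E → ℝ) (hg : ∀ x, ConvexOn ℝ S (g x)) (c : ℝ)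
    (h : ∀ q ∈ S, ∃ x, c ≤ g x q) :
    ∃ p : X → ℝ, (∀ x, 0 ≤ p x) ∧ ∑ x, p x = 1 ∧ ∀ q ∈ S, c ≤ ∑ x, p x * g x q := by
  let s : Set (X → ℝ) := {v | ∀ x, v x < c}
  let t : Set (X → ℝ) := {v | ∃ q ∈ S, ∀ x, g x q ≤ v x}
  have hs1 : Convex ℝ s := by
    intro u hu v hv a b ha hb hab x
    simp only [Pi.add_apply, Pi.smul_apply, smul_eq_mul]
    have h1 := hu x
    have h2 := hv x
    rcases ha.eq_or_lt with h0 | h0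
    · subst h0
      have : b = 1 := by linarith
      subst this
      simpa using h2
    · have : c = a * c + b * c := by rw [← add_mul, hab, one_mul]
      rw [this]
      have := mul_lt_mul_of_pos_left h1 h0
      have := mul_le_mul_of_nonneg_left h2.le hb
      linarith
  have hs2 : IsOpen s := by
    have : s = ⋂ x, {v : X → ℝ | v x < c} := by ext; simp [s]
    rw [this]
    exact isOpen_iInter_of_finite fun x => isOpen_lt (continuous_apply x) continuous_const
  have ht : Convex ℝ t := by
    rintro u ⟨q, hq, hu⟩ v ⟨q', hq', hv⟩ a b ha hb hab
    refine ⟨a • q + b • q', (hg (Classical.arbitrary X)).1 hq hq' ha hb hab, fun x => ?_⟩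
    refine ((hg x).2 hq hq' ha hb hab).trans ?_
    simp only [Pi.add_apply, Pi.smul_apply, smul_eq_mul]
    have := mul_le_mul_of_nonneg_left (hu x) ha
    have := mul_le_mul_of_nonneg_left (hv x) hb
    linarith
  have hd : Disjoint s t := by
    rw [Set.disjoint_left]
    rintro v hv ⟨q, hq, hv'⟩
    obtain ⟨x, hx⟩ := h q hq
    have := hv x
    have := hv' x
    linarith
  obtain ⟨f, u, hf1, hf2⟩ := geometric_hahn_banach_open hs1 hs2 ht hd
  let a : X → ℝ := fun x => f (Pi.single x 1)
  have hf : ∀ v, f v = ∑ x, v x * a x := by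
    intro v
    conv_lhs => rw [← Finset.univ_sum_single v]
    rw [map_sum]
    refine Finset.sum_congr rfl fun x _ => ?_
    have : (Pi.single x (v x) : X → ℝ) = v x • Pi.single x (1 : ℝ) := by
      rw [← Pi.single_smul]; simp
    rw [this, map_smul, smul_eq_mul]
  have hcs : ∀ e > 0, (c - e) * ∑ x, a x < u := by
    intro e he
    have := hf1 (fun _ => c - e) (fun x => by simp only; linarith)
    rw [hf] at this
    rwa [Finset.mul_sum]
  have ha0 : ∀ x, 0 ≤ a x := by
    intro x
    by_contra hx
    push Not at hx
    have hL : ∀ L ≥ 0, (c - 1) * ∑ x, a x - L * a x < u := by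
      intro L hL
      have := hf1 ((fun _ => c - 1) - Pi.single x L) (fun z => by
        simp only [Pi.sub_apply]
        have : 0 ≤ (Pi.single x L : X → ℝ) z := by
          by_cases hz : z = x
          · subst hz; simpa using hL
          · simp [hz]
        linarith)
      rw [map_sub, hf, hf (Pi.single x L)] at this
      have h2 : ∑ z, (Pi.single x L : X → ℝ) z * a z = L * a x := by
        rw [Finset.sum_eq_single x] <;> simp +contextual
      rw [h2, ← Finset.mul_sum] at this
      exact this
    have h3 := hL (max 0 ((u - (c - 1) * ∑ x, a x) / (-a x))) (le_max_left _ _)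
    have h4 : (u - (c - 1) * ∑ x, a x) / (-a x) ≤ max 0 ((u - (c - 1) * ∑ x, a x) / (-a x)) :=
      le_max_right _ _
    rw [div_le_iff₀ (by linarith)] at h4
    linarith
  obtain ⟨q0, hq0⟩ := hS
  have hAne : ∑ x, a x ≠ 0 := by
    intro h0
    have hz : ∀ x, a x = 0 := by
      have := (Finset.sum_eq_zero_iff_of_nonneg (fun x _ => ha0 x)).1 h0
      exact fun x => this x (Finset.mem_univ x)
    have h1 := hf1 (fun _ => c - 1) (fun x => by simp only; linarith)
    have h2 := hf2 (fun x => g x q0) ⟨q0, hq0, fun x => le_rfl⟩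
    rw [hf] at h1 h2
    simp [hz] at h1 h2
    linarith
  have hA : 0 < ∑ x, a x := lt_of_le_of_ne (Finset.sum_nonneg fun x _ => ha0 x) hAne.symm
  set A := ∑ x, a x with hAdef
  have hcA : c * A ≤ u := by
    refine le_of_forall_pos_le_add fun e he => ?_
    have := hcs (e / A) (by positivity)
    have h1 : (c - e / A) * A = c * A - e := by field_simp
    linarith
  refine ⟨fun x => a x / A, fun x => div_nonneg (ha0 x) hA.le, ?_, fun q hq => ?_⟩
  · rw [← Finset.sum_div, ← hAdef, div_self hAne]
  · have h2 := hf2 (fun x => g x q) ⟨q, hq, fun x => le_rfl⟩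
    rw [hf] at h2
    have : ∑ x, a x / A * g x q = (∑ x, g x q * a x) / A := by
      rw [Finset.sum_div]
      exact Finset.sum_congr rfl fun x _ => by ring
    rw [this, le_div_iff₀ hA]
    linarith

/-- The open simplex. -/
def osimplex (Y : Type*) [Fintype Y] : Set (Y → ℝ) := {q | (∀ y, 0 < q y) ∧ ∑ y, q y = 1}

lemma osimplex_nonempty (Y : Type*) [Fintype Y] [Nonempty Y] : (osimplex Y).Nonempty := by
  refine ⟨fun _ => (Fintype.card Y : ℝ)⁻¹, fun y => ?_, ?_⟩
  · have : 0 < Fintype.card Y := Fintype.card_pos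
    positivity
  · simp

lemma osimplex_convex (Y : Type*) [Fintype Y] : Convex ℝ (osimplex Y) := by
  rintro q ⟨hq, hq1⟩ q' ⟨hq', hq1'⟩ a b ha hb hab
  refine ⟨fun y => (convex_Ioi (0 : ℝ)) (hq y) (hq' y) ha hb hab, ?_⟩
  simp only [Pi.add_apply, Pi.smul_apply, smul_eq_mul]
  rw [Finset.sum_add_distrib, ← Finset.mul_sum, ← Finset.mul_sum, hq1, hq1']
  linarith

lemma convexOn_sum_aux {Y : Type*} [Fintype Y] (φ : ℝ → ℝ) (hφ : ConvexOn ℝ (Set.Ioi 0) φ)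
    (a : Y → ℝ) (ha : ∀ y, 0 ≤ a y) :
    ConvexOn ℝ (osimplex Y) (fun q => ∑ y, a y * φ (q y)) := by
  refine ⟨osimplex_convex Y, ?_⟩
  rintro q ⟨hq, hq1⟩ q' ⟨hq', hq1'⟩ s t hs ht hst
  simp only [smul_eq_mul]
  rw [Finset.mul_sum, Finset.mul_sum, ← Finset.sum_add_distrib]
  refine Finset.sum_le_sum fun y _ => ?_
  have := hφ.2 (hq y) (hq' y) hs ht hst
  simp only [smul_eq_mul] at this
  calc a y * φ ((s • q + t • q') y) ≤ a y * (s * φ (q y) + t * φ (q' y)) :=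
        mul_le_mul_of_nonneg_left this (ha y)
    _ = _ := by ring

lemma convexOn_rpow_neg_aux (s : ℝ) (hs : s ≤ 0) :
    ConvexOn ℝ (Set.Ioi 0) (fun t : ℝ => t ^ s) := by
  refine ⟨convex_Ioi 0, ?_⟩
  intro q hq q' hq' a b ha hb hab
  have hm : 0 < a • q + b • q' := convex_Ioi (0 : ℝ) hq hq' ha hb hab
  have hq : 0 < q := hq
  have hq' : 0 < q' := hq'
  simp only
  rw [Real.rpow_def_of_pos hm, Real.rpow_def_of_pos hq, Real.rpow_def_of_pos hq']
  have h1 := strictConcaveOn_log_Ioi.concaveOn.2 hq hq' ha hb hab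
  have h2 := convexOn_exp.2 (Set.mem_univ (Real.log q * s)) (Set.mem_univ (Real.log q' * s))
    ha hb hab
  refine le_trans (Real.exp_le_exp.2 ?_) h2
  simp only [smul_eq_mul] at *
  nlinarith

/-- One-shot simulation. -/
lemma one_shot {A B : Type*} [Fintype A] [Fintype B]
    (V : A → B → ℝ) (hV : ∀ a b, 0 ≤ V a b) (hV1 : ∀ a, ∑ b, V a b = 1)
    (Q : B → ℝ) (hQ : ∀ b, 0 < Q b) (hQ1 : ∑ b, Q b = 1) (c : ℝ) (hc : 0 ≤ c) :
    ∃ N : A → B → ℝ, IsSimulation c (fun a b => ENNReal.ofReal (N a b)) ∧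
      ∀ a b, (1 / 8) * min (V a b) ((2 : ℝ) ^ c * Q b) ≤ N a b := by
  set M : ℕ := ⌊(2 : ℝ) ^ c⌋₊ with hM
  have h2c : (1 : ℝ) ≤ 2 ^ c := Real.one_le_rpow (by norm_num) hc
  have hM1 : 1 ≤ M := by rw [hM]; exact Nat.one_le_floor_iff _ |>.2 h2c
  have hMle : (M : ℝ) ≤ 2 ^ c := Nat.floor_le (by positivity)
  have hMge : (2 : ℝ) ^ c ≤ 2 * M := by
    have := Nat.lt_floor_add_one ((2 : ℝ) ^ c)
    have h1 : (1 : ℝ) ≤ M := by exact_mod_cast hM1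
    rw [← hM] at this
    linarith
  have hM0 : (0 : ℝ) < M := by exact_mod_cast hM1
  let R : A → B → ℝ := fun a b => min (V a b) (M * Q b)
  let t : A → B → ℝ := fun a b => R a b / (2 * M * Q b)
  have hR0 : ∀ a b, 0 ≤ R a b := fun a b => le_min (hV a b) (by have := hQ b; positivity)
  have ht0 : ∀ a b, 0 ≤ t a b := fun a b => div_nonneg (hR0 a b) (by have := hQ b; positivity)
  have ht1 : ∀ a b, t a b ≤ 1 := by
    intro a b
    have := hQ b
    rw [div_le_one (by positivity)]
    have h1 : R a b ≤ M * Q b := min_le_right _ _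
    have : 0 < M * Q b := by positivity
    linarith
  have hQt : ∀ a b, Q b * t a b = R a b / (2 * M) := by
    intro a b
    have := (hQ b).ne'
    simp only [t]
    field_simp
  let p : A → ℝ := fun a => ∑ b, Q b * t a b
  have hp : ∀ a, p a ≤ 1 / (2 * M) := by
    intro a
    simp only [p, hQt]
    rw [← Finset.sum_div]
    gcongr
    rw [← hV1 a]
    exact Finset.sum_le_sum fun b _ => min_le_left _ _
  have hp0 : ∀ a, 0 ≤ p a := fun a => Finset.sum_nonneg fun b _ => mul_nonneg (hQ b).le (ht0 a b)
  let PK : (Fin M → B) → ℝ := fun k => ∏ i, Q (k i)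
  have hPK0 : ∀ k, 0 ≤ PK k := fun k => Finset.prod_nonneg fun i _ => (hQ _).le
  have hPK1 : ∑ k, PK k = 1 := by
    have := Finset.prod_univ_sum (fun _ : Fin M => (Finset.univ : Finset B)) (fun _ b => Q b)
    simp only [hQ1, Finset.prod_const_one, Fintype.piFinset_univ] at this
    exact this.symm
  let s : A → (Fin M → B) → Fin M → ℝ := fun a k j =>
    t a (k j) * ∏ i ∈ Finset.univ.filter (fun i => i < j), (1 - t a (k i))
  have hs0 : ∀ a k j, 0 ≤ s a k j := fun a k j => mul_nonneg (ht0 _ _)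
    (Finset.prod_nonneg fun i _ => by have := ht1 a (k i); linarith)
  have hs1 : ∀ a k, ∑ j, s a k j ≤ 1 := by
    intro a k
    have h1 := Finset.prod_one_sub_ordered Finset.univ (fun i => t a (k i))
    have h2 : 0 ≤ ∏ i, (1 - t a (k i)) :=
      Finset.prod_nonneg fun i _ => by have := ht1 a (k i); linarith
    have h3 : ∑ j, s a k j = ∑ i, t a (k i) * ∏ j ∈ Finset.univ.filter (fun j => j < i),
        (1 - t a (k j)) := rfl
    linarith
  let E : A → (Fin M → B) → Fin M → ℝ := fun a k j => s a k j + (1 - ∑ j, s a k j) / M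
  have hE0 : ∀ a k j, 0 ≤ E a k j := fun a k j => add_nonneg (hs0 _ _ _)
    (div_nonneg (by have := hs1 a k; linarith) hM0.le)
  have hE1 : ∀ a k, ∑ j, E a k j = 1 := by
    intro a k
    simp only [E]
    rw [Finset.sum_add_distrib]
    simp only [Finset.sum_const, Finset.card_univ, Fintype.card_fin, nsmul_eq_mul]
    field_simp
    ring
  let N : A → B → ℝ := fun a b => ∑ k, ∑ j, PK k * E a k j * (if k j = b then 1 else 0)
  have key : ∀ a b (j : Fin M), Q b * t a b / 2 ≤
      ∑ k, PK k * s a k j * (if k j = b then 1 else 0) := by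
    intro a b j
    have h1 : ∀ k : Fin M → B, PK k * s a k j * (if k j = b then 1 else 0) =
        ∏ i, (Q (k i) * (if i = j then (if k i = b then t a (k i) else 0) else
          if i < j then 1 - t a (k i) else 1)) := by
      intro k
      rw [Finset.prod_mul_distrib]
      simp only [PK, s]
      rw [mul_assoc]
      congr 1
      rw [← Finset.mul_prod_erase _ _ (Finset.mem_univ j), Finset.prod_filter]
      rw [← Finset.mul_prod_erase Finset.univ (fun i => if i < j then 1 - t a (k i) else 1)
        (Finset.mem_univ j)]
      have h2 : ∏ i ∈ Finset.univ.erase j, (if i = j then (if k i = b then t a (k i) else 0) else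
          if i < j then 1 - t a (k i) else 1) =
          ∏ i ∈ Finset.univ.erase j, (if i < j then 1 - t a (k i) else 1) :=
        Finset.prod_congr rfl fun i hi => by simp [Finset.ne_of_mem_erase hi]
      rw [h2]
      by_cases hk : k j = b <;> simp [hk]
    simp only [h1]
    have h3 := Finset.prod_univ_sum (fun _ : Fin M => (Finset.univ : Finset B))
      (fun i b' => Q b' * (if i = j then (if b' = b then t a b' else 0) else
          if i < j then 1 - t a b' else 1))
    rw [Fintype.piFinset_univ] at h3
    rw [← h3, ← Finset.mul_prod_erase _ _ (Finset.mem_univ j)]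
    have h4 : ∑ b', Q b' * (if j = j then (if b' = b then t a b' else 0) else
          if j < j then 1 - t a b' else 1) = Q b * t a b := by
      simp
    rw [h4, div_eq_mul_inv]
    refine mul_le_mul_of_nonneg_left ?_ (mul_nonneg (hQ b).le (ht0 a b))
    have h5 : ∀ i ∈ Finset.univ.erase j, 1 - p a ≤
        ∑ b', Q b' * (if i = j then (if b' = b then t a b' else 0) else
          if i < j then 1 - t a b' else 1) := by
      intro i hi
      simp only [Finset.ne_of_mem_erase hi, if_false]
      by_cases hij : i < j
      · simp only [hij, if_true, mul_sub, mul_one, Finset.sum_sub_distrib, hQ1, p, le_refl]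
      · simp only [hij, if_false, mul_one, hQ1]
        have := hp0 a
        linarith
    have hpM : p a * M ≤ 1 / 2 := by
      have := mul_le_mul_of_nonneg_right (hp a) hM0.le
      have h6 : 1 / (2 * (M : ℝ)) * M = 1 / 2 := by field_simp
      linarith
    have hM1' : (1 : ℝ) ≤ M := by exact_mod_cast hM1
    have hple : p a ≤ 1 / 2 := by nlinarith [hp0 a]
    calc (2 : ℝ)⁻¹ ≤ 1 + (Finset.univ.erase j).card * (-p a) := by
          have : ((Finset.univ.erase j).card : ℝ) ≤ M := by
            have := Finset.card_le_univ (Finset.univ.erase j)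
            rw [Fintype.card_fin] at this
            exact_mod_cast this
          nlinarith [hp0 a]
      _ ≤ (1 + -p a) ^ (Finset.univ.erase j).card := one_add_mul_le_pow (by linarith) _
      _ = ∏ i ∈ Finset.univ.erase j, (1 - p a) := by rw [Finset.prod_const, sub_eq_add_neg]
      _ ≤ _ := Finset.prod_le_prod (fun i _ => by linarith) h5
  refine ⟨N, ?_, ?_⟩
  · let e := Fintype.equivFin (Fin M → B)
    refine ⟨Fintype.card (Fin M → B), M, fun k => ENNReal.ofReal (PK (e.symm k)),
      fun a k j => ENNReal.ofReal (E a (e.symm k) j),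
      fun j k b => if e.symm k j = b then 1 else 0, hM1, ?_, ?_, ?_, ?_, ?_⟩
    · rw [Real.logb_le_iff_le_rpow (by norm_num) hM0]
      exact hMle
    · rw [e.symm.sum_comp (fun k => ENNReal.ofReal (PK k)),
        ← ENNReal.ofReal_sum_of_nonneg (fun k _ => hPK0 k), hPK1, ENNReal.ofReal_one]
    · intro a k
      rw [← ENNReal.ofReal_sum_of_nonneg (fun j _ => hE0 _ _ j), hE1, ENNReal.ofReal_one]
    · intro j k
      simp
    · intro a b
      simp only [N]
      have hn : ∀ k j, 0 ≤ PK k * E a k j * (if k j = b then 1 else 0) := fun k j =>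
        mul_nonneg (mul_nonneg (hPK0 _) (hE0 _ _ _)) (by split_ifs <;> norm_num)
      rw [e.symm.sum_comp (fun k => ∑ j, ENNReal.ofReal (PK k) * ENNReal.ofReal (E a k j) *
        (if k j = b then 1 else 0)),
        ENNReal.ofReal_sum_of_nonneg (fun k _ => Finset.sum_nonneg fun j _ => hn k j)]
      refine Finset.sum_congr rfl fun k _ => ?_
      rw [ENNReal.ofReal_sum_of_nonneg (fun j _ => hn k j)]
      refine Finset.sum_congr rfl fun j _ => ?_
      rw [ENNReal.ofReal_mul (mul_nonneg (hPK0 _) (hE0 _ _ _)), ENNReal.ofReal_mul (hPK0 _)]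
      congr 1
      split_ifs <;> simp
  · intro a b
    have h1 : ∑ j : Fin M, Q b * t a b / 2 ≤ N a b := by
      simp only [N]
      rw [Finset.sum_comm]
      refine Finset.sum_le_sum fun j _ => (key a b j).trans ?_
      refine Finset.sum_le_sum fun k _ => ?_
      refine mul_le_mul_of_nonneg_right (mul_le_mul_of_nonneg_left ?_ (hPK0 k))
        (by split_ifs <;> norm_num)
      have : 0 ≤ (1 - ∑ j, s a k j) / M := div_nonneg (by have := hs1 a k; linarith) hM0.le
      simp only [E]
      linarith
    rw [hQt] at h1
    simp only [Finset.sum_const, Finset.card_univ, Fintype.card_fin, nsmul_eq_mul] at h1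
    have h2 : (M : ℝ) * (R a b / (2 * M) / 2) = R a b / 4 := by field_simp; norm_num
    rw [h2] at h1
    refine le_trans ?_ h1
    have h3 : min (V a b) ((2 : ℝ) ^ c * Q b) ≤ 2 * R a b := by
      rw [show 2 * R a b = min (2 * V a b) (2 * (M * Q b)) from
        mul_min_of_nonneg _ _ (by norm_num)]
      refine min_le_min (by have := hV a b; linarith) ?_
      have := hQ b
      nlinarith
    linarith

lemma esc_le {X Y : Type*} [Fintype X] [Fintype Y] (W : X → Y → ℝ≥0∞) (α : ℝ≥0∞)
    (r : ℝ) (hr : 0 ≤ r) (K m : ℝ)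
    (H : ∀ n : ℕ, 1 ≤ n → ∃ N, IsSimulation ((n : ℝ) * r) N ∧
      ∀ xs, renyiD α (prodCh n W xs) (N xs) ≤ ((K + n * m : ℝ) : EReal)) :
    Esc α W r ≤ (m : EReal) := by
  have hc : RateOK r (fun n : ℕ => (n : ℝ) * r) := by
    refine ⟨fun n => by positivity, ?_⟩
    have : Tendsto (fun n : ℕ => (((n : ℝ) * r / n : ℝ) : EReal)) atTop (nhds (r : EReal)) := by
      refine tendsto_const_nhds.congr' ?_
      filter_upwards [eventually_ge_atTop 1] with n hn
      have : (n : ℝ) ≠ 0 := by positivity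
      congr 1
      field_simp
    exact this.limsup_eq.le
  refine iInf_le_of_le ⟨_, hc⟩ ?_
  have ht : Tendsto (fun n : ℕ => ((K / n + m : ℝ) : EReal)) atTop (nhds (m : EReal)) := by
    refine (continuous_coe_real_ereal.tendsto m).comp ?_
    have := (tendsto_const_div_atTop_nhds_zero_nat K).add_const m
    simpa using this
  rw [← ht.limsup_eq]
  refine limsup_le_limsup ?_
  filter_upwards [eventually_ge_atTop 1] with n hn
  obtain ⟨N, hN, hD⟩ := H n hn
  have h1 : simD α (prodCh n W) ((n : ℝ) * r) ≤ ((K + n * m : ℝ) : EReal) :=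
    iInf_le_of_le ⟨N, hN⟩ (iSup_le hD)
  have hn0 : (n : ℝ) ≠ 0 := by positivity
  have h0 : (0 : EReal) ≤ (((1 : ℝ) / n : ℝ) : EReal) := by
    exact_mod_cast (by positivity : (0 : ℝ) ≤ 1 / n)
  calc _ ≤ (((1 : ℝ) / n : ℝ) : EReal) * ((K + n * m : ℝ) : EReal) :=
        mul_le_mul_of_nonneg_left h1 h0
    _ = _ := by
        rw [← EReal.coe_mul]
        congr 1
        field_simp

lemma elog2_le {s : ℝ≥0∞} {T : ℝ} (hT : 0 < T) (h : s ≤ ENNReal.ofReal T) :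
    elog2 s ≤ ((Real.logb 2 T : ℝ) : EReal) := by
  have hs : s ≠ ⊤ := ne_top_of_le_ne_top ENNReal.ofReal_ne_top h
  unfold elog2
  split_ifs with h0
  · exact bot_le
  · rw [EReal.coe_le_coe_iff]
    refine Real.logb_le_logb_of_le (by norm_num) (ENNReal.toReal_pos h0 hs) ?_
    exact ENNReal.toReal_le_of_le_ofReal hT.le h

lemma rpow_term {a P N : ℝ} (ha : 1 < a) (hP : 0 ≤ P) (hN : 0 < P → 0 < N) :
    ENNReal.ofReal P ^ a * ENNReal.ofReal N ^ (1 - a) = ENNReal.ofReal (P ^ a * N ^ (1 - a)) := by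
  rcases hP.eq_or_lt with h | h
  · rw [← h, Real.zero_rpow (by linarith)]
    simp [ENNReal.zero_rpow_of_pos (by linarith : 0 < a)]
  · rw [ENNReal.ofReal_rpow_of_pos h, ENNReal.ofReal_rpow_of_pos (hN h),
      ENNReal.ofReal_mul (by positivity)]

lemma renyiD_fin_le {B : Type*} [Fintype B] (α : ℝ≥0∞) (hα : 1 < α) (hα' : α ≠ ⊤)
    (P N : B → ℝ) (hP : ∀ b, 0 ≤ P b) (hN : ∀ b, 0 < P b → 0 < N b) (hN0 : ∀ b, 0 ≤ N b) (T : ℝ)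
    (hT : 0 < T) (h : ∑ b, P b ^ α.toReal * N b ^ (1 - α.toReal) ≤ T) :
    renyiD α (fun b => ENNReal.ofReal (P b)) (fun b => ENNReal.ofReal (N b)) ≤
      (((α.toReal - 1)⁻¹ * Real.logb 2 T : ℝ) : EReal) := by
  have ha : 1 < α.toReal := by
    rw [← ENNReal.toReal_one]
    exact (ENNReal.toReal_lt_toReal ENNReal.one_ne_top hα').2 hα
  unfold renyiD
  rw [if_neg (zero_lt_one.trans hα).ne', if_neg hα.ne', if_neg hα', EReal.coe_mul]
  refine mul_le_mul_of_nonneg_left ?_ ?_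
  · refine elog2_le hT ?_
    simp only [rpow_term ha (hP _) (hN _)]
    rw [← ENNReal.ofReal_sum_of_nonneg
      (fun b _ => mul_nonneg (Real.rpow_nonneg (hP b) _) (Real.rpow_nonneg (hN0 b) _))]
    exact ENNReal.ofReal_le_ofReal h
  · exact_mod_cast inv_nonneg.2 (by linarith : 0 ≤ α.toReal - 1)

lemma renyiD_top_le {B : Type*} [Fintype B]
    (P N : B → ℝ) (T : ℝ) (hT : 0 < T) (h : ∀ b, P b ≤ T * N b) :
    renyiD ⊤ (fun b => ENNReal.ofReal (P b)) (fun b => ENNReal.ofReal (N b)) ≤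
      ((Real.logb 2 T : ℝ) : EReal) := by
  unfold renyiD
  rw [if_neg (by simp), if_neg (by simp), if_pos rfl]
  refine elog2_le hT (iSup_le fun b => ENNReal.div_le_of_le_mul ?_)
  rw [← ENNReal.ofReal_mul hT.le]
  exact ENNReal.ofReal_le_ofReal (h b)

lemma ereal_coe_sum {B : Type*} (s : Finset B) (f : B → ℝ) :
    ((∑ b ∈ s, f b : ℝ) : EReal) = ∑ b ∈ s, (f b : EReal) := by
  induction s using Finset.induction with
  | empty => simp
  | insert a s ha ih => rw [Finset.sum_insert ha, Finset.sum_insert ha, EReal.coe_add, ih]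

lemma elog2_ofReal_s10 {T : ℝ} (hT : 0 < T) :
    elog2 (ENNReal.ofReal T) = ((Real.logb 2 T : ℝ) : EReal) := by
  unfold elog2
  rw [if_neg (by simpa using hT), if_neg ENNReal.ofReal_ne_top, ENNReal.toReal_ofReal hT.le]

lemma renyiD_one_le {B : Type*} [Fintype B]
    (P N : B → ℝ) (hP : ∀ b, 0 ≤ P b) (hP1 : ∑ b, P b = 1) (hN : ∀ b, 0 < P b → 0 < N b)
    (a : ℝ) (ha : 1 < a) (T : ℝ)
    (hT : 0 < T) (h : ∑ b, P b ^ a * N b ^ (1 - a) ≤ T) :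
    renyiD 1 (fun b => ENNReal.ofReal (P b)) (fun b => ENNReal.ofReal (N b)) ≤
      (((a - 1)⁻¹ * Real.logb 2 T : ℝ) : EReal) := by
  unfold renyiD
  rw [if_neg (by simp), if_pos rfl]
  have h1 : ∀ b, ((ENNReal.ofReal (P b)).toReal : EReal) *
      elog2 (ENNReal.ofReal (P b) / ENNReal.ofReal (N b)) =
      ((P b * Real.logb 2 (P b / N b) : ℝ) : EReal) := by
    intro b
    rw [ENNReal.toReal_ofReal (hP b)]
    rcases (hP b).eq_or_lt with h | h
    · rw [← h]; simp
    · rw [← ENNReal.ofReal_div_of_pos (hN b h), elog2_ofReal_s10 (div_pos h (hN b h)), EReal.coe_mul]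
  simp only [h1]
  rw [← ereal_coe_sum, EReal.coe_le_coe_iff]
  have h2 : ∀ b, P b * ((a - 1) * Real.log (P b / N b)) ≤
      P b ^ a * N b ^ (1 - a) / T + P b * (Real.log T - 1) := by
    intro b
    rcases (hP b).eq_or_lt with h | h
    · rw [← h, Real.zero_rpow (by linarith)]; simp
    · have hn := hN b h
      have h3 : Real.log ((P b / N b) ^ (a - 1) / T) ≤ (P b / N b) ^ (a - 1) / T - 1 :=
        Real.log_le_sub_one_of_pos (by positivity)
      rw [Real.log_div (by positivity) hT.ne', Real.log_rpow (by positivity)] at h3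
      have h4 : P b ^ a * N b ^ (1 - a) = P b * (P b / N b) ^ (a - 1) := by
        rw [Real.div_rpow h.le hn.le, show 1 - a = -(a - 1) by ring, Real.rpow_neg hn.le,
          Real.rpow_sub_one h.ne']
        field_simp
      rw [h4]
      calc P b * ((a - 1) * Real.log (P b / N b)) ≤
          P b * ((P b / N b) ^ (a - 1) / T + (Real.log T - 1)) :=
            mul_le_mul_of_nonneg_left (by linarith) h.le
        _ = _ := by ring
  have h5 := Finset.sum_le_sum fun b (_ : b ∈ Finset.univ) => h2 b
  rw [Finset.sum_add_distrib, ← Finset.sum_div, ← Finset.sum_mul, hP1] at h5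
  have h6 : (∑ b, P b ^ a * N b ^ (1 - a)) / T ≤ 1 := by rwa [div_le_one hT]
  have h7 : ∑ b, P b * ((a - 1) * Real.log (P b / N b)) =
      (a - 1) * ∑ b, P b * Real.log (P b / N b) := by
    rw [Finset.mul_sum]; exact Finset.sum_congr rfl fun b _ => by ring
  rw [h7] at h5
  have h8 : ∑ b, P b * Real.logb 2 (P b / N b) = (∑ b, P b * Real.log (P b / N b)) / Real.log 2 := by
    rw [Finset.sum_div]; exact Finset.sum_congr rfl fun b _ => by rw [Real.logb]; ring
  have hl2 : 0 < Real.log 2 := Real.log_pos (by norm_num)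
  rw [h8, Real.logb, inv_mul_eq_div, div_div, mul_comm (Real.log 2), ← div_div]
  gcongr
  rw [le_div_iff₀ (by linarith)]
  linarith

lemma renyi_bound {B : Type*} [Fintype B] (P Q N : B → ℝ) (hP : ∀ b, 0 ≤ P b)
    (hP1 : ∑ b, P b = 1) (hQ : ∀ b, 0 < Q b) (G : ℝ) (hG : 0 < G)
    (hN : ∀ b, (1 / 8) * min (P b) (G * Q b) ≤ N b) (a : ℝ) (ha : 1 < a) (S : ℝ)
    (hS : ∑ b, P b ^ a * Q b ^ (1 - a) ≤ S) :
    ∑ b, P b ^ a * N b ^ (1 - a) ≤ 8 ^ (a - 1) * (1 + G ^ (1 - a) * S) := by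
  have h1 : ∀ b, P b ^ a * N b ^ (1 - a) ≤
      8 ^ (a - 1) * (P b + G ^ (1 - a) * (P b ^ a * Q b ^ (1 - a))) := by
    intro b
    have hq := hQ b
    rcases (hP b).eq_or_lt with h | h
    · rw [← h, Real.zero_rpow (by linarith)]; simp
    · have hm : 0 < min (P b) (G * Q b) := lt_min h (by positivity)
      have h2 : N b ^ (1 - a) ≤ ((1 / 8) * min (P b) (G * Q b)) ^ (1 - a) :=
        Real.rpow_le_rpow_of_nonpos (by positivity) (hN b) (by linarith)
      have h3 : min (P b) (G * Q b) ^ (1 - a) ≤ P b ^ (1 - a) + (G * Q b) ^ (1 - a) := by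
        have h31 : 0 ≤ P b ^ (1 - a) := by positivity
        have h32 : 0 ≤ (G * Q b) ^ (1 - a) := by positivity
        rcases min_choice (P b) (G * Q b) with h | h <;> rw [h] <;> linarith
      have h4 : ((1 / 8 : ℝ)) ^ (1 - a) = 8 ^ (a - 1) := by
        rw [one_div, Real.inv_rpow (by norm_num), ← Real.rpow_neg (by norm_num)]
        congr 1; ring
      have h5 : P b ^ a * P b ^ (1 - a) = P b := by
        rw [← Real.rpow_add h]; simp
      rw [Real.mul_rpow (by norm_num) hm.le, h4] at h2
      calc P b ^ a * N b ^ (1 - a) ≤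
          P b ^ a * (8 ^ (a - 1) * (P b ^ (1 - a) + (G * Q b) ^ (1 - a))) := by
            refine mul_le_mul_of_nonneg_left (h2.trans ?_) (by positivity)
            exact mul_le_mul_of_nonneg_left h3 (by positivity)
        _ = 8 ^ (a - 1) * (P b ^ a * P b ^ (1 - a) + G ^ (1 - a) * (P b ^ a * Q b ^ (1 - a))) := by
            rw [Real.mul_rpow hG.le hq.le]; ring
        _ = _ := by rw [h5]
  calc _ ≤ _ := Finset.sum_le_sum fun b _ => h1 b
    _ = 8 ^ (a - 1) * (1 + G ^ (1 - a) * ∑ b, P b ^ a * Q b ^ (1 - a)) := by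
        rw [← Finset.mul_sum, Finset.sum_add_distrib, hP1, ← Finset.mul_sum]
    _ ≤ _ := by gcongr

lemma chan_ne_top {X Y : Type*} [Fintype X] [Fintype Y] {W : X → Y → ℝ≥0∞} (hW : IsChannel W)
    (x : X) (y : Y) : W x y ≠ ⊤ := by
  have := hW x
  have h1 : W x y ≤ 1 := by
    rw [← this]
    exact Finset.single_le_sum (f := W x) (fun _ _ => zero_le) (Finset.mem_univ y)
  exact ne_top_of_le_ne_top ENNReal.one_ne_top h1

lemma chan_sum {X Y : Type*} [Fintype X] [Fintype Y] {W : X → Y → ℝ≥0∞} (hW : IsChannel W)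
    (x : X) : ∑ y, (W x y).toReal = 1 := by
  rw [← ENNReal.toReal_sum (fun y _ => chan_ne_top hW x y), hW x, ENNReal.toReal_one]

lemma sum_prod_aux {Y : Type*} [Fintype Y] (n : ℕ) (f : Fin n → Y → ℝ) :
    ∑ ys : Fin n → Y, ∏ i, f i (ys i) = ∏ i, ∑ y, f i y := by
  have := Finset.prod_univ_sum (fun _ : Fin n => (Finset.univ : Finset Y)) f
  rw [Fintype.piFinset_univ] at this
  exact this.symm

lemma sim_n {X Y : Type*} [Fintype X] [Fintype Y] (W : X → Y → ℝ≥0∞) (hW : IsChannel W)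
    (q : Y → ℝ) (hq : q ∈ osimplex Y) (r : ℝ) (hr : 0 ≤ r) (n : ℕ) :
    ∃ N : (Fin n → X) → (Fin n → Y) → ℝ,
      IsSimulation ((n : ℝ) * r) (fun a b => ENNReal.ofReal (N a b)) ∧
      ∀ xs ys, (1 / 8) * min (∏ i, (W (xs i) (ys i)).toReal)
        ((2 : ℝ) ^ ((n : ℝ) * r) * ∏ i, q (ys i)) ≤ N xs ys := by
  refine one_shot (fun (xs : Fin n → X) (ys : Fin n → Y) => ∏ i, (W (xs i) (ys i)).toReal)
    (fun _ _ => Finset.prod_nonneg fun _ _ => ENNReal.toReal_nonneg) (fun xs => ?_)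
    (fun ys : Fin n → Y => ∏ i, q (ys i)) (fun ys => Finset.prod_pos fun i _ => hq.1 _) ?_ _ (by positivity)
  · rw [sum_prod_aux n (fun i y => (W (xs i) y).toReal)]
    simp [chan_sum hW]
  · rw [sum_prod_aux n (fun i y => q y)]
    simp [hq.2]

lemma prodCh_eq {X Y : Type*} [Fintype X] [Fintype Y] (W : X → Y → ℝ≥0∞) (hW : IsChannel W)
    (n : ℕ) (xs : Fin n → X) :
    prodCh n W xs = fun ys => ENNReal.ofReal (∏ i, (W (xs i) (ys i)).toReal) := by
  funext ys
  rw [ENNReal.ofReal_prod_of_nonneg (fun _ _ => ENNReal.toReal_nonneg)]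
  exact Finset.prod_congr rfl fun i _ => (ENNReal.ofReal_toReal (chan_ne_top hW _ _)).symm

lemma sim_fin {X Y : Type*} [Fintype X] [Fintype Y] (W : X → Y → ℝ≥0∞) (hW : IsChannel W)
    (q : Y → ℝ) (hq : q ∈ osimplex Y) (r : ℝ) (hr : 0 ≤ r) (a : ℝ) (ha : 1 < a) (c : ℝ)
    (hc : ∀ x, ∑ y, (W x y).toReal ^ a * q y ^ (1 - a) ≤ 2 ^ ((a - 1) * c)) (n : ℕ) :
    ∃ N : (Fin n → X) → (Fin n → Y) → ℝ,
      IsSimulation ((n : ℝ) * r) (fun a b => ENNReal.ofReal (N a b)) ∧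
      ∀ xs, (∀ ys, 0 < ∏ i, (W (xs i) (ys i)).toReal → 0 < N xs ys) ∧ (∀ ys, 0 ≤ N xs ys) ∧
        ∑ ys, (∏ i, (W (xs i) (ys i)).toReal) ^ a * N xs ys ^ (1 - a) ≤
          2 ^ (3 * (a - 1) + 1 + (a - 1) * (n * max (c - r) 0)) := by
  obtain ⟨N, hN, hb⟩ := sim_n W hW q hq r hr n
  have hQ : ∀ ys : Fin n → Y, 0 < ∏ i, q (ys i) := fun ys => Finset.prod_pos fun i _ => hq.1 _
  have hP : ∀ (xs : Fin n → X) (ys : Fin n → Y), 0 ≤ ∏ i, (W (xs i) (ys i)).toReal :=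
    fun _ _ => Finset.prod_nonneg fun _ _ => ENNReal.toReal_nonneg
  refine ⟨N, hN, fun xs => ⟨fun ys h => ?_, fun ys => ?_, ?_⟩⟩
  · refine lt_of_lt_of_le ?_ (hb xs ys)
    have := hQ ys
    have : 0 < min (∏ i, (W (xs i) (ys i)).toReal) ((2 : ℝ) ^ ((n : ℝ) * r) * ∏ i, q (ys i)) :=
      lt_min h (by positivity)
    positivity
  · refine le_trans ?_ (hb xs ys)
    have := hQ ys
    have : 0 ≤ min (∏ i, (W (xs i) (ys i)).toReal) ((2 : ℝ) ^ ((n : ℝ) * r) * ∏ i, q (ys i)) :=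
      le_min (hP _ _) (by positivity)
    positivity
  · have hS : ∑ ys : Fin n → Y, (∏ i, (W (xs i) (ys i)).toReal) ^ a * (∏ i, q (ys i)) ^ (1 - a) ≤
        2 ^ ((a - 1) * c * n) := by
      have h1 : ∀ ys : Fin n → Y,
          (∏ i, (W (xs i) (ys i)).toReal) ^ a * (∏ i, q (ys i)) ^ (1 - a) =
          ∏ i, ((W (xs i) (ys i)).toReal ^ a * q (ys i) ^ (1 - a)) := by
        intro ys
        rw [Finset.prod_mul_distrib, Real.finsetProd_rpow _ _ (fun _ _ => ENNReal.toReal_nonneg),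
          Real.finsetProd_rpow _ _ (fun _ _ => (hq.1 _).le)]
      simp only [h1]
      rw [sum_prod_aux n (fun i y => (W (xs i) y).toReal ^ a * q y ^ (1 - a)),
        Real.rpow_mul_natCast (by norm_num)]
      calc _ ≤ ∏ i : Fin n, (2 : ℝ) ^ ((a - 1) * c) :=
            Finset.prod_le_prod (fun i _ => Finset.sum_nonneg fun y _ =>
              mul_nonneg (Real.rpow_nonneg ENNReal.toReal_nonneg _)
                (Real.rpow_nonneg (hq.1 y).le _)) (fun i _ => hc (xs i))
        _ = _ := by simp
    have h := renyi_bound (fun ys : Fin n → Y => ∏ i, (W (xs i) (ys i)).toReal)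
        (fun ys => ∏ i, q (ys i)) (N xs) (hP xs) (by
        rw [sum_prod_aux n (fun i y => (W (xs i) y).toReal)]
        simp [chan_sum hW]) hQ ((2 : ℝ) ^ ((n : ℝ) * r)) (by positivity) (hb xs) a ha _ hS
    refine h.trans ?_
    set m := max (c - r) 0
    have hm0 : 0 ≤ m := le_max_right _ _
    have hm1 : c - r ≤ m := le_max_left _ _
    have e1 : (8 : ℝ) ^ (a - 1) = 2 ^ (3 * (a - 1)) := by
      rw [Real.rpow_mul (by norm_num)]; norm_num
    have e2 : ((2 : ℝ) ^ ((n : ℝ) * r)) ^ (1 - a) * 2 ^ ((a - 1) * c * n) ≤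
        2 ^ ((a - 1) * (n * m)) := by
      rw [← Real.rpow_mul (by norm_num), ← Real.rpow_add (by norm_num)]
      refine Real.rpow_le_rpow_of_exponent_le (by norm_num) ?_
      have : 0 ≤ (a - 1) * n := mul_nonneg (by linarith) (by positivity)
      nlinarith
    have e3 : (1 : ℝ) ≤ 2 ^ ((a - 1) * (n * m)) :=
      Real.one_le_rpow (by norm_num) (mul_nonneg (by linarith) (by positivity))
    rw [Real.rpow_add (by norm_num), Real.rpow_add (by norm_num), ← e1, Real.rpow_one]
    have e4 : (0 : ℝ) ≤ 8 ^ (a - 1) := by positivity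
    refine (mul_le_mul_of_nonneg_left (add_le_add e3 e2) e4).trans (le_of_eq ?_)
    ring

lemma esc_fin {X Y : Type*} [Fintype X] [Fintype Y] (W : X → Y → ℝ≥0∞) (hW : IsChannel W)
    (q : Y → ℝ) (hq : q ∈ osimplex Y) (r : ℝ) (hr : 0 ≤ r) (α : ℝ≥0∞) (hα : 1 < α) (hα' : α ≠ ⊤)
    (c : ℝ)
    (hc : ∀ x, ∑ y, (W x y).toReal ^ α.toReal * q y ^ (1 - α.toReal) ≤ 2 ^ ((α.toReal - 1) * c)) :
    Esc α W r ≤ ((max (c - r) 0 : ℝ) : EReal) := by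
  have ha : 1 < α.toReal := by
    rw [← ENNReal.toReal_one]
    exact (ENNReal.toReal_lt_toReal ENNReal.one_ne_top hα').2 hα
  refine esc_le W α r hr (3 + (α.toReal - 1)⁻¹) _ fun n _ => ?_
  obtain ⟨N, hN, hb⟩ := sim_fin W hW q hq r hr _ ha c hc n
  refine ⟨_, hN, fun xs => ?_⟩
  obtain ⟨h1, h2, h3⟩ := hb xs
  rw [prodCh_eq W hW]
  refine (renyiD_fin_le α hα hα' _ _ (fun _ => Finset.prod_nonneg fun _ _ =>
    ENNReal.toReal_nonneg) h1 h2 _ (by positivity) h3).trans ?_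
  rw [EReal.coe_le_coe_iff, Real.logb_rpow (by norm_num) (by norm_num)]
  have : α.toReal - 1 ≠ 0 := by linarith
  refine le_of_eq ?_
  field_simp

lemma esc_one {X Y : Type*} [Fintype X] [Fintype Y] (W : X → Y → ℝ≥0∞) (hW : IsChannel W)
    (q : Y → ℝ) (hq : q ∈ osimplex Y) (r : ℝ) (hr : 0 ≤ r) (a : ℝ) (ha : 1 < a)
    (c : ℝ)
    (hc : ∀ x, ∑ y, (W x y).toReal ^ a * q y ^ (1 - a) ≤ 2 ^ ((a - 1) * c)) :
    Esc 1 W r ≤ ((max (c - r) 0 : ℝ) : EReal) := by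
  refine esc_le W 1 r hr (3 + (a - 1)⁻¹) _ fun n _ => ?_
  obtain ⟨N, hN, hb⟩ := sim_fin W hW q hq r hr _ ha c hc n
  refine ⟨_, hN, fun xs => ?_⟩
  obtain ⟨h1, h2, h3⟩ := hb xs
  rw [prodCh_eq W hW]
  refine (renyiD_one_le _ _ (fun _ => Finset.prod_nonneg fun _ _ =>
    ENNReal.toReal_nonneg) (by
        rw [sum_prod_aux n (fun i y => (W (xs i) y).toReal)]
        simp [chan_sum hW]) h1 a ha _ (by positivity) h3).trans ?_
  rw [EReal.coe_le_coe_iff, Real.logb_rpow (by norm_num) (by norm_num)]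
  have : a - 1 ≠ 0 := by linarith
  refine le_of_eq ?_
  field_simp

lemma esc_top {X Y : Type*} [Fintype X] [Fintype Y] (W : X → Y → ℝ≥0∞) (hW : IsChannel W)
    (q : Y → ℝ) (hq : q ∈ osimplex Y) (r : ℝ) (hr : 0 ≤ r)
    (c : ℝ) (hc : ∀ x y, (W x y).toReal ≤ 2 ^ c * q y) :
    Esc ⊤ W r ≤ ((max (c - r) 0 : ℝ) : EReal) := by
  refine esc_le W ⊤ r hr 3 _ fun n _ => ?_
  obtain ⟨N, hN, hb⟩ := sim_n W hW q hq r hr n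
  refine ⟨_, hN, fun xs => ?_⟩
  rw [prodCh_eq W hW]
  set m := max (c - r) 0
  have hm0 : 0 ≤ m := le_max_right _ _
  have hm1 : c - r ≤ m := le_max_left _ _
  have key := renyiD_top_le (fun ys : Fin n → Y => ∏ i, (W (xs i) (ys i)).toReal) (N xs)
    (2 ^ (3 + n * m)) (by positivity) (fun ys => by
      have h0 : 0 ≤ ∏ i, (W (xs i) (ys i)).toReal :=
        Finset.prod_nonneg fun _ _ => ENNReal.toReal_nonneg
      have hQ : 0 < ∏ i, q (ys i) := Finset.prod_pos fun i _ => hq.1 _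
      have h1 : ∏ i, (W (xs i) (ys i)).toReal ≤ 2 ^ (c * n) * ∏ i, q (ys i) := by
        calc _ ≤ ∏ i, (2 ^ c * q (ys i)) := Finset.prod_le_prod
              (fun _ _ => ENNReal.toReal_nonneg) (fun i _ => hc _ _)
          _ = _ := by
            rw [Finset.prod_mul_distrib, Real.rpow_mul_natCast (by norm_num)]
            simp
      have e3 : (1 : ℝ) ≤ 2 ^ ((n : ℝ) * m) := Real.one_le_rpow (by norm_num) (by positivity)
      have h2 : ∏ i, (W (xs i) (ys i)).toReal ≤
          2 ^ ((n : ℝ) * m) * min (∏ i, (W (xs i) (ys i)).toReal)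
            ((2 : ℝ) ^ ((n : ℝ) * r) * ∏ i, q (ys i)) := by
        rw [mul_min_of_nonneg _ _ (by positivity)]
        refine le_min (le_mul_of_one_le_left h0 e3) (h1.trans ?_)
        rw [← mul_assoc, ← Real.rpow_add (by norm_num)]
        refine mul_le_mul_of_nonneg_right ?_ hQ.le
        refine Real.rpow_le_rpow_of_exponent_le (by norm_num) ?_
        have : (0 : ℝ) ≤ n := by positivity
        nlinarith
      refine h2.trans ?_
      rw [add_comm, Real.rpow_add (by norm_num), mul_assoc]
      refine mul_le_mul_of_nonneg_left ?_ (by positivity)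
      have := hb xs ys
      rw [show (2 : ℝ) ^ (3 : ℝ) = 8 by norm_num]
      linarith)
  rw [Real.logb_rpow (by norm_num) (by norm_num)] at key
  exact key

lemma le_elog2 {s : ℝ≥0∞} {T : ℝ} (hT : 0 < T) (h : ENNReal.ofReal T ≤ s) :
    ((Real.logb 2 T : ℝ) : EReal) ≤ elog2 s := by
  unfold elog2
  split_ifs with h0 h1
  · rw [h0] at h
    have : ENNReal.ofReal T = 0 := le_antisymm h zero_le
    rw [ENNReal.ofReal_eq_zero] at this
    linarith
  · exact le_top
  · rw [EReal.coe_le_coe_iff]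
    refine Real.logb_le_logb_of_le (by norm_num) hT ?_
    exact (ENNReal.ofReal_le_iff_le_toReal h1).1 h

lemma cap_mix {X Y : Type*} [Fintype X] [Fintype Y] [Nonempty Y] (W : X → Y → ℝ≥0∞)
    (hW : IsChannel W) (α : ℝ≥0∞) (c : ℝ) (hc : renyiCap α W < (c : EReal)) :
    ∃ c' : ℝ, c' < c ∧ ∀ p : X → ℝ, (∀ x, 0 ≤ p x) → ∑ x, p x = 1 →
      ∃ u q : Y → ℝ, (∀ y, 0 ≤ u y) ∧ q ∈ osimplex Y ∧ (∀ y, (2 : ℝ) ^ (c' - c) * u y ≤ q y) ∧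
        renyiD α (fun z : X × Y => ENNReal.ofReal (p z.1 * (W z.1 z.2).toReal))
          (fun z => ENNReal.ofReal (p z.1 * u z.2)) < (c' : EReal) := by
  obtain ⟨c', h1, h2⟩ := EReal.lt_iff_exists_real_btwn.1 hc
  have h2 : c' < c := EReal.coe_lt_coe_iff.1 h2
  refine ⟨c', h2, fun p hp hp1 => ?_⟩
  have hd : IsDist (fun x => ENNReal.ofReal (p x)) := by
    unfold IsDist
    rw [← ENNReal.ofReal_sum_of_nonneg (fun x _ => hp x), hp1, ENNReal.ofReal_one]
  have h3 : renyiMI α (joint (fun x => ENNReal.ofReal (p x)) W) < (c' : EReal) :=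
    lt_of_le_of_lt (le_iSup (fun P : {P : X → ℝ≥0∞ // IsDist P} => renyiMI α (joint P.1 W))
      ⟨_, hd⟩) h1
  obtain ⟨⟨Q, hQ⟩, h4⟩ := iInf_lt_iff.1 h3
  have hQt : ∀ y, Q y ≠ ⊤ := by
    intro y
    have h1 : Q y ≤ 1 := by
      rw [← hQ]
      exact Finset.single_le_sum (f := Q) (fun _ _ => zero_le) (Finset.mem_univ y)
    exact ne_top_of_le_ne_top ENNReal.one_ne_top h1
  have hQ1 : ∑ y, (Q y).toReal = 1 := by
    rw [← ENNReal.toReal_sum (fun y _ => hQt y), hQ, ENNReal.toReal_one]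
  set θ : ℝ := 2 ^ (c' - c) with hθ
  have hθ0 : 0 < θ := by positivity
  have hθ1 : θ < 1 := Real.rpow_lt_one_of_one_lt_of_neg (by norm_num) (by linarith)
  have hY : (0 : ℝ) < Fintype.card Y := by exact_mod_cast Fintype.card_pos
  have hδ : 0 < (1 - θ) / Fintype.card Y := div_pos (by linarith) hY
  refine ⟨fun y => (Q y).toReal, fun y => θ * (Q y).toReal + (1 - θ) / Fintype.card Y,
    fun y => ENNReal.toReal_nonneg, ⟨fun y => ?_, ?_⟩, fun y => ?_, ?_⟩
  · have : 0 ≤ θ * (Q y).toReal := mul_nonneg hθ0.le ENNReal.toReal_nonneg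
    simp only
    linarith
  · rw [Finset.sum_add_distrib, ← Finset.mul_sum, hQ1]
    simp only [Finset.sum_const, Finset.card_univ, nsmul_eq_mul]
    field_simp
    ring
  · simp only
    linarith
  · have e1 : (fun z : X × Y => ENNReal.ofReal (p z.1 * (W z.1 z.2).toReal)) =
        joint (fun x => ENNReal.ofReal (p x)) W := by
      funext z
      rw [ENNReal.ofReal_mul (hp _), ENNReal.ofReal_toReal (chan_ne_top hW _ _)]
      rfl
    have e2 : (fun z : X × Y => ENNReal.ofReal (p z.1 * (Q z.2).toReal)) =
        fun z => margX (joint (fun x => ENNReal.ofReal (p x)) W) z.1 * Q z.2 := by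
      funext z
      rw [ENNReal.ofReal_mul (hp _), ENNReal.ofReal_toReal (hQt _)]
      congr 1
      simp only [margX, joint]
      rw [← Finset.mul_sum, hW, mul_one]
    rw [e1, e2]
    exact h4

lemma cap_top {X Y : Type*} [Fintype X] [Fintype Y] [Nonempty X] [Nonempty Y] (W : X → Y → ℝ≥0∞)
    (hW : IsChannel W) (c : ℝ) (hc : renyiCap ⊤ W < (c : EReal)) :
    ∃ q ∈ osimplex Y, ∀ x y, (W x y).toReal ≤ 2 ^ c * q y := by
  obtain ⟨c', hc', H⟩ := cap_mix W hW ⊤ c hc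
  obtain ⟨p, hp0, hp1⟩ := osimplex_nonempty X
  obtain ⟨u, q, hu, hq, huq, hD⟩ := H p (fun x => (hp0 x).le) hp1
  refine ⟨q, hq, fun x y => ?_⟩
  unfold renyiD at hD
  rw [if_neg (by simp), if_neg (by simp), if_pos rfl] at hD
  have h1 : (⨆ z : X × Y, ENNReal.ofReal (p z.1 * (W z.1 z.2).toReal) /
      ENNReal.ofReal (p z.1 * u z.2)) ≤ ENNReal.ofReal (2 ^ c') := by
    by_contra h
    have := le_elog2 (T := 2 ^ c') (by positivity) (not_le.1 h).le
    rw [Real.logb_rpow (by norm_num) (by norm_num)] at this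
    exact absurd hD (not_lt.2 this)
  have h2 := (le_iSup (fun z : X × Y => ENNReal.ofReal (p z.1 * (W z.1 z.2).toReal) /
      ENNReal.ofReal (p z.1 * u z.2)) (x, y)).trans h1
  have hpos : (0 : ℝ) < 2 ^ c' := by positivity
  rw [ENNReal.div_le_iff_le_mul (Or.inr ENNReal.ofReal_ne_top) (Or.inr (by simpa using hpos)),
    ← ENNReal.ofReal_mul hpos.le,
    ENNReal.ofReal_le_ofReal_iff (mul_nonneg hpos.le (mul_nonneg (hp0 x).le (hu y)))] at h2
  simp only at h2
  have h3 : (W x y).toReal ≤ 2 ^ c' * u y := by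
    have := hp0 x
    refine le_of_mul_le_mul_left (a := p x) ?_ this
    linarith
  have h4 : (2 : ℝ) ^ c' = 2 ^ c * 2 ^ (c' - c) := by
    rw [← Real.rpow_add (by norm_num)]; congr 1; ring
  rw [h4, mul_assoc] at h3
  exact h3.trans (mul_le_mul_of_nonneg_left (huq y) (by positivity))

lemma cap_fin {X Y : Type*} [Fintype X] [Fintype Y] [Nonempty X] [Nonempty Y] (W : X → Y → ℝ≥0∞)
    (hW : IsChannel W) (α : ℝ≥0∞) (hα : 1 < α) (hα' : α ≠ ⊤)
    (c : ℝ) (hc : renyiCap α W < (c : EReal)) :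
    ∃ q ∈ osimplex Y, ∀ x,
      ∑ y, (W x y).toReal ^ α.toReal * q y ^ (1 - α.toReal) ≤ 2 ^ ((α.toReal - 1) * c) := by
  have ha : 1 < α.toReal := by
    rw [← ENNReal.toReal_one]
    exact (ENNReal.toReal_lt_toReal ENNReal.one_ne_top hα').2 hα
  obtain ⟨c', hc', H⟩ := cap_mix W hW α c hc
  by_contra hcon
  push Not at hcon
  set a := α.toReal with hadef
  obtain ⟨p, hp0, hp1, hp⟩ := minimax_aux (osimplex Y) (osimplex_nonempty Y)
    (fun (x : X) q => ∑ y, (W x y).toReal ^ a * q y ^ (1 - a))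
    (fun x => convexOn_sum_aux (fun t => t ^ (1 - a)) (convexOn_rpow_neg_aux _ (by linarith)) _
      (fun y => Real.rpow_nonneg ENNReal.toReal_nonneg _)) (2 ^ ((a - 1) * c))
    (fun q hq => by obtain ⟨x, hx⟩ := hcon q hq; exact ⟨x, hx.le⟩)
  obtain ⟨u, q, hu, hq, huq, hD⟩ := H p hp0 hp1
  have h0 := hp q hq
  unfold renyiD at hD
  rw [if_neg (zero_lt_one.trans hα).ne', if_neg hα.ne', if_neg hα', ← hadef] at hD
  set T : ℝ≥0∞ := ∑ z : X × Y, ENNReal.ofReal (p z.1 * (W z.1 z.2).toReal) ^ a *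
    ENNReal.ofReal (p z.1 * u z.2) ^ (1 - a) with hTdef
  have hT : T < ENNReal.ofReal (2 ^ ((a - 1) * c')) := by
    by_contra h
    have h1 := le_elog2 (by positivity) (not_lt.1 h)
    rw [Real.logb_rpow (by norm_num) (by norm_num)] at h1
    have h2 : (0 : EReal) ≤ (((a - 1)⁻¹ : ℝ) : EReal) := by
      exact_mod_cast inv_nonneg.2 (by linarith : 0 ≤ a - 1)
    have h3 := mul_le_mul_of_nonneg_left h1 h2
    rw [← EReal.coe_mul, ← mul_assoc, inv_mul_cancel₀ (by linarith), one_mul] at h3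
    exact absurd hD (not_lt.2 h3)
  set θ : ℝ := 2 ^ (c' - c) with hθ
  have hθ0 : 0 < θ := by positivity
  have hterm : ∀ z : X × Y, ENNReal.ofReal (p z.1 * ((W z.1 z.2).toReal ^ a * q z.2 ^ (1 - a))) ≤
      ENNReal.ofReal (θ ^ (1 - a)) * (ENNReal.ofReal (p z.1 * (W z.1 z.2).toReal) ^ a *
    ENNReal.ofReal (p z.1 * u z.2) ^ (1 - a)) := by
    rintro ⟨x, y⟩
    simp only
    set w := (W x y).toReal with hw
    have hw0 : 0 ≤ w := ENNReal.toReal_nonneg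
    rcases (hp0 x).eq_or_lt with h | hpx
    · rw [← h]; simp
    rcases hw0.eq_or_lt with h | hwx
    · rw [← h, Real.zero_rpow (by linarith)]; simp
    have hθp : 0 < θ ^ (1 - a) := by positivity
    rcases (hu y).eq_or_lt with h | huy
    · rw [← h]
      have h5 : ENNReal.ofReal (p x * w) ^ a ≠ 0 := by
        rw [ENNReal.ofReal_rpow_of_pos (by positivity)]
        simp only [ne_eq, ENNReal.ofReal_eq_zero, not_le]
        positivity
      rw [mul_zero, ENNReal.ofReal_zero, ENNReal.zero_rpow_of_neg (by linarith),
        ENNReal.mul_top h5, ENNReal.mul_top (by simpa using hθp)]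
      exact le_top
    · rw [rpow_term ha (by positivity) (fun _ => by positivity), ← ENNReal.ofReal_mul hθp.le]
      refine ENNReal.ofReal_le_ofReal ?_
      have h6 : q y ^ (1 - a) ≤ (θ * u y) ^ (1 - a) :=
        Real.rpow_le_rpow_of_nonpos (by positivity) (huq y) (by linarith)
      have h7 : p x ^ a * p x ^ (1 - a) = p x := by
        rw [← Real.rpow_add hpx]; simp
      calc p x * (w ^ a * q y ^ (1 - a)) ≤ p x * (w ^ a * (θ * u y) ^ (1 - a)) := by gcongr
        _ = (p x ^ a * p x ^ (1 - a)) * (w ^ a * (θ * u y) ^ (1 - a)) := by rw [h7]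
        _ = _ := by
          rw [Real.mul_rpow hθ0.le huy.le, Real.mul_rpow hpx.le hwx.le,
            Real.mul_rpow hpx.le huy.le]
          ring
  have h8 : ∑ x, p x * ∑ y, (W x y).toReal ^ a * q y ^ (1 - a) =
      ∑ z : X × Y, p z.1 * ((W z.1 z.2).toReal ^ a * q z.2 ^ (1 - a)) := by
    rw [Fintype.sum_prod_type]
    exact Finset.sum_congr rfl fun x _ => Finset.mul_sum _ _ _
  rw [h8] at h0
  have h9 := Finset.sum_le_sum fun z (_ : z ∈ Finset.univ) => hterm z
  rw [← Finset.mul_sum, ← ENNReal.ofReal_sum_of_nonneg (fun z _ => mul_nonneg (hp0 _)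
    (mul_nonneg (Real.rpow_nonneg ENNReal.toReal_nonneg _) (Real.rpow_nonneg (hq.1 _).le _))),
    ← hTdef] at h9
  have hθp : 0 < θ ^ (1 - a) := by positivity
  have h10 : ENNReal.ofReal (θ ^ (1 - a)) * T < ENNReal.ofReal (2 ^ ((a - 1) * c)) := by
    have : (2 : ℝ) ^ ((a - 1) * c) = θ ^ (1 - a) * 2 ^ ((a - 1) * c') := by
      rw [hθ, ← Real.rpow_mul (by norm_num), ← Real.rpow_add (by norm_num)]
      congr 1; ring
    rw [this, ENNReal.ofReal_mul hθp.le]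
    exact (ENNReal.mul_lt_mul_iff_right (by simpa using hθp) ENNReal.ofReal_ne_top).2 hT
  exact absurd ((ENNReal.ofReal_le_ofReal h0).trans h9) (not_le.2 h10)

lemma cap_one {X Y : Type*} [Fintype X] [Fintype Y] [Nonempty X] [Nonempty Y] (W : X → Y → ℝ≥0∞)
    (hW : IsChannel W) (c : ℝ) (hc : renyiCap 1 W < (c : EReal)) :
    ∃ q ∈ osimplex Y, ∀ x,
      ∑ y, (W x y).toReal * (Real.logb 2 (W x y).toReal - Real.logb 2 (q y)) ≤ c := by
  obtain ⟨c', hc', H⟩ := cap_mix W hW 1 c hc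
  by_contra hcon
  push Not at hcon
  have hconv : ConvexOn ℝ (Set.Ioi 0) (fun t => -Real.logb 2 t) := by
    have h1 := strictConcaveOn_log_Ioi.concaveOn.neg
    have h2 := h1.smul (inv_nonneg.2 (Real.log_nonneg (by norm_num : (1 : ℝ) ≤ 2)))
    refine h2.congr fun t _ => ?_
    simp [Real.logb]
    ring
  obtain ⟨p, hp0, hp1, hp⟩ := minimax_aux (osimplex Y) (osimplex_nonempty Y)
    (fun (x : X) q => ∑ y, (W x y).toReal * -Real.logb 2 (q y) +
      ∑ y, (W x y).toReal * Real.logb 2 (W x y).toReal)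
    (fun x => (convexOn_sum_aux (fun t => -Real.logb 2 t) hconv _
      (fun y => ENNReal.toReal_nonneg)).add_const _) c
    (fun q hq => by
      obtain ⟨x, hx⟩ := hcon q hq
      refine ⟨x, hx.le.trans (le_of_eq ?_)⟩
      rw [← Finset.sum_add_distrib]
      exact Finset.sum_congr rfl fun y _ => by ring)
  obtain ⟨u, q, hu, hq, huq, hD⟩ := H p hp0 hp1
  have h0 := hp q hq
  unfold renyiD at hD
  rw [if_neg (by simp), if_pos rfl] at hD
  have hterm : ∀ z : X × Y, ((p z.1 * (W z.1 z.2).toReal *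
      (Real.logb 2 (W z.1 z.2).toReal - Real.logb 2 (q z.2) + (c' - c)) : ℝ) : EReal) ≤
      ((ENNReal.ofReal (p z.1 * (W z.1 z.2).toReal)).toReal : EReal) *
      elog2 (ENNReal.ofReal (p z.1 * (W z.1 z.2).toReal) / ENNReal.ofReal (p z.1 * u z.2)) := by
    rintro ⟨x, y⟩
    simp only
    set w := (W x y).toReal with hw
    have hw0 : 0 ≤ w := ENNReal.toReal_nonneg
    rcases (hp0 x).eq_or_lt with h | hpx
    · rw [← h]; simp
    rcases hw0.eq_or_lt with h | hwx
    · rw [← h]; simp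
    have hpw : 0 < p x * w := by positivity
    rw [ENNReal.toReal_ofReal hpw.le]
    rcases (hu y).eq_or_lt with h | huy
    · rw [← h, mul_zero, ENNReal.ofReal_zero, ENNReal.div_zero (by simpa using hpw)]
      have : elog2 ⊤ = ⊤ := by simp [elog2]
      rw [this, EReal.coe_mul_top_of_pos hpw]
      exact le_top
    · rw [← ENNReal.ofReal_div_of_pos (by positivity), elog2_ofReal_s10 (by positivity),
        ← EReal.coe_mul, EReal.coe_le_coe_iff]
      refine mul_le_mul_of_nonneg_left ?_ hpw.le
      rw [mul_div_mul_left _ _ hpx.ne', Real.logb_div hwx.ne' huy.ne']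
      have h1 := Real.logb_le_logb_of_le (b := 2) (by norm_num) (by positivity) (huq y)
      rw [Real.logb_mul (by positivity) huy.ne', Real.logb_rpow (by norm_num) (by norm_num)] at h1
      linarith
  have h9 := lt_of_le_of_lt (Finset.sum_le_sum fun z (_ : z ∈ Finset.univ) => hterm z) hD
  rw [← ereal_coe_sum, EReal.coe_lt_coe_iff, Fintype.sum_prod_type] at h9
  have h10 : ∑ x, ∑ y, p x * (W x y).toReal *
      (Real.logb 2 (W x y).toReal - Real.logb 2 (q y) + (c' - c)) =
      ∑ x, p x * (∑ y, (W x y).toReal * -Real.logb 2 (q y) +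
      ∑ y, (W x y).toReal * Real.logb 2 (W x y).toReal) + (c' - c) := by
    have h11 : ∑ x, p x * ∑ y, (W x y).toReal * (c' - c) = c' - c := by
      simp [← Finset.sum_mul, chan_sum hW, hp1]
    conv_rhs => rw [← h11]
    rw [← Finset.sum_add_distrib]
    refine Finset.sum_congr rfl fun x _ => ?_
    rw [← mul_add, ← Finset.sum_add_distrib, ← Finset.sum_add_distrib, Finset.mul_sum]
    exact Finset.sum_congr rfl fun y _ => by ring
  rw [h10] at h9
  linarith

lemma near_one {Y : Type*} [Fintype Y] (w q : Y → ℝ) (hw : ∀ y, 0 ≤ w y) (hw1 : ∑ y, w y = 1)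
    (hq : ∀ y, 0 < q y) (c c2 : ℝ) (hc : c < c2)
    (h : ∑ y, w y * (Real.logb 2 (w y) - Real.logb 2 (q y)) ≤ c) :
    ∀ᶠ s in nhdsWithin (0 : ℝ) (Set.Ioi 0),
      ∑ y, w y ^ (1 + s) * q y ^ (-s) ≤ 2 ^ (s * c2) := by
  have hl2 : 0 < Real.log 2 := Real.log_pos (by norm_num)
  let f : ℝ → ℝ := fun s => Real.exp (s * (c2 * Real.log 2)) -
    ∑ y, w y * Real.exp (s * (Real.log (w y) - Real.log (q y)))
  have hexp : ∀ k : ℝ, HasDerivAt (fun s : ℝ => Real.exp (s * k)) k 0 := by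
    intro k
    have := ((hasDerivAt_id (0 : ℝ)).mul_const k).exp
    simpa using this
  have hf : HasDerivAt f (c2 * Real.log 2 - ∑ y, w y * (Real.log (w y) - Real.log (q y))) 0 := by
    refine (hexp _).sub ?_
    exact HasDerivAt.fun_sum fun y _ => (hexp _).const_mul (w y)
  have hd : 0 < c2 * Real.log 2 - ∑ y, w y * (Real.log (w y) - Real.log (q y)) := by
    have : ∑ y, w y * (Real.logb 2 (w y) - Real.logb 2 (q y)) =
        (∑ y, w y * (Real.log (w y) - Real.log (q y))) / Real.log 2 := by
      rw [Finset.sum_div]; exact Finset.sum_congr rfl fun y _ => by simp only [Real.logb]; ring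
    rw [this, div_le_iff₀ hl2] at h
    nlinarith
  have ht := hf.tendsto_slope_zero_right
  have hev := ht.eventually (lt_mem_nhds hd)
  filter_upwards [hev, self_mem_nhdsWithin] with s hs hs0
  have hs0 : 0 < s := hs0
  have hf0 : f 0 = 0 := by simp [f, hw1]
  rw [zero_add, hf0, sub_zero, smul_eq_mul] at hs
  have hs2 : 0 < f s := by
    have := mul_pos hs0 hs
    rwa [← mul_assoc, mul_inv_cancel₀ hs0.ne', one_mul] at this
  have e1 : (2 : ℝ) ^ (s * c2) = Real.exp (s * (c2 * Real.log 2)) := by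
    rw [Real.rpow_def_of_pos (by norm_num)]; congr 1; ring
  have e2 : ∀ y, w y ^ (1 + s) * q y ^ (-s) =
      w y * Real.exp (s * (Real.log (w y) - Real.log (q y))) := by
    intro y
    rcases (hw y).eq_or_lt with h | h
    · rw [← h, Real.zero_rpow (by linarith)]; simp
    · rw [Real.rpow_add h, Real.rpow_one, Real.rpow_def_of_pos h, Real.rpow_def_of_pos (hq y),
        mul_assoc, ← Real.exp_add]
      congr 2; ring
  rw [e1, Finset.sum_congr rfl fun y _ => e2 y]
  simp only [f] at hs2
  linarith


/-- **Achievability of the strong converse exponent for `α ∈ [1,∞]`** (Theorem 15):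
`E_sc^{(α)}(W,r) ≤ |I_α(W) - r|⁺`. -/
theorem strong_converse_exponent_achievability_ge_one
    {X Y : Type*} [Fintype X] [Fintype Y] [Nonempty X] [Nonempty Y]
    (W : X → Y → ℝ≥0∞) (hW : IsChannel W)
    (α : ℝ≥0∞) (hα : 1 ≤ α) (r : ℝ) (hr : 0 ≤ r) :
    Esc α W r ≤ max (renyiCap α W - (r : EReal)) 0 := by
  rw [← EReal.le_of_forall_lt_iff_le]
  intro z hz
  obtain ⟨hz1, hz2⟩ := max_lt_iff.1 hz
  have hz0 : 0 < z := by exact_mod_cast hz2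
  have hcap : renyiCap α W < ((z + r : ℝ) : EReal) := by
    rw [EReal.coe_add]
    exact (EReal.sub_lt_iff (Or.inl (EReal.coe_ne_bot r)) (Or.inl (EReal.coe_ne_top r))).1 hz1
  have hmax : max (z + r - r) 0 = z := by
    rw [add_sub_cancel_right]; exact max_eq_left hz0.le
  rcases hα.eq_or_lt with h1 | h1
  · subst h1
    obtain ⟨c, h2, h3⟩ := EReal.lt_iff_exists_real_btwn.1 hcap
    have h3 : c < z + r := EReal.coe_lt_coe_iff.1 h3
    obtain ⟨q, hq, hx⟩ := cap_one W hW c h2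
    have hev : ∀ᶠ s in nhdsWithin (0 : ℝ) (Set.Ioi 0), ∀ x,
        ∑ y, (W x y).toReal ^ (1 + s) * q y ^ (-s) ≤ 2 ^ (s * (z + r)) :=
      Filter.eventually_all.2 fun x => near_one _ q (fun y => ENNReal.toReal_nonneg)
        (chan_sum hW x) hq.1 c (z + r) h3 (hx x)
    obtain ⟨s, hs, hs0⟩ := (hev.and self_mem_nhdsWithin).exists
    have hs0 : 0 < s := hs0
    have := esc_one W hW q hq r hr (1 + s) (by linarith) (z + r) (fun x => by
      have := hs x
      rwa [show 1 - (1 + s) = -s by ring, show 1 + s - 1 = s by ring])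
    rwa [hmax] at this
  · by_cases ht : α = ⊤
    · subst ht
      obtain ⟨q, hq, hx⟩ := cap_top W hW _ hcap
      have := esc_top W hW q hq r hr _ hx
      rwa [hmax] at this
    · obtain ⟨q, hq, hx⟩ := cap_fin W hW α h1 ht _ hcap
      have := esc_fin W hW q hq r hr α h1 ht _ hx
      rwa [hmax] at this

end RST
end
end

section
/- (One-shot converse bound for the strong converse exponent.) For any discrete memoryless channel W: X → Y on finite alphabets and any c ≥ 0: if α ∈ (0,1), then 𝖣_α(W,c) ≥ max_{α≤β≤1} [α(1−β)/(β(1−α))](I_β(W) − c); and if α ∈ [1,∞], then 𝖣_α(W,c) ≥ max{I_α(W) − c, 0}. -/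
open scoped ENNReal NNReal BigOperators Classical
open Filter

noncomputable section

namespace RST

lemma elog2_le_iff (s : ℝ≥0∞) (r : ℝ) : elog2 s ≤ (r : EReal) ↔ s ≤ (2 : ℝ≥0∞) ^ r := by
  unfold elog2
  split_ifs with h0 ht
  · simp [h0]
  · subst ht
    have : (2 : ℝ≥0∞) ^ r ≠ ⊤ := by
      apply ENNReal.rpow_ne_top_of_ne_zero <;> simp
    simp [this]
  · have hpos : 0 < s.toReal := ENNReal.toReal_pos h0 ht
    rw [EReal.coe_le_coe_iff, Real.logb_le_iff_le_rpow (by norm_num) hpos]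
    have : (2 : ℝ≥0∞) ^ r = ENNReal.ofReal ((2 : ℝ) ^ r) := by
      rw [← ENNReal.ofReal_rpow_of_pos (by norm_num)]; simp
    rw [this, ENNReal.le_ofReal_iff_toReal_le ht (by positivity)]

lemma le_elog2_iff (s : ℝ≥0∞) (r : ℝ) : (r : EReal) ≤ elog2 s ↔ (2 : ℝ≥0∞) ^ r ≤ s := by
  unfold elog2
  split_ifs with h0 ht
  · have : (2 : ℝ≥0∞) ^ r ≠ 0 := by
      simp [ENNReal.rpow_eq_zero_iff]
    subst h0
    simp [this]
  · simp [ht]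
  · have hpos : 0 < s.toReal := ENNReal.toReal_pos h0 ht
    rw [EReal.coe_le_coe_iff, Real.le_logb_iff_rpow_le (by norm_num) hpos]
    have : (2 : ℝ≥0∞) ^ r = ENNReal.ofReal ((2 : ℝ) ^ r) := by
      rw [← ENNReal.ofReal_rpow_of_pos (by norm_num)]; simp
    rw [this, ENNReal.ofReal_le_iff_le_toReal ht]

lemma coe_mul_le_pos (k : ℝ) (hk : 0 < k) (e : EReal) (r : ℝ) :
    (((k)⁻¹ : ℝ) : EReal) * e ≤ r ↔ e ≤ ((k * r : ℝ) : EReal) := by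
  have hk' : 0 < k⁻¹ := inv_pos.mpr hk
  induction e with
  | bot => simp [EReal.coe_mul_bot_of_pos hk']
  | top => simp [EReal.coe_mul_top_of_pos hk', -EReal.coe_mul]
  | coe x =>
    rw [← EReal.coe_mul, EReal.coe_le_coe_iff, EReal.coe_le_coe_iff, inv_mul_le_iff₀ hk]

lemma coe_mul_le_neg (k : ℝ) (hk : k < 0) (e : EReal) (r : ℝ) :
    (((k)⁻¹ : ℝ) : EReal) * e ≤ r ↔ ((k * r : ℝ) : EReal) ≤ e := by
  have hk' : k⁻¹ < 0 := inv_lt_zero.mpr hk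
  induction e with
  | bot => simp [EReal.coe_mul_bot_of_neg hk', -EReal.coe_mul]
  | top => simp [EReal.coe_mul_top_of_neg hk']
  | coe x =>
    rw [← EReal.coe_mul, EReal.coe_le_coe_iff, EReal.coe_le_coe_iff]
    constructor
    · intro h
      have := mul_le_mul_of_nonpos_left h hk.le
      rwa [mul_inv_cancel_left₀ hk.ne] at this
    · intro h
      have := mul_le_mul_of_nonpos_left h hk'.le
      rwa [inv_mul_cancel_left₀ hk.ne] at this

variable {X Y : Type*}

/-- the power sum -/
def SS [Fintype X] (a : ℝ) (P Q : X → ℝ≥0∞) : ℝ≥0∞ := ∑ x, P x ^ a * Q x ^ (1 - a)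

lemma renyiD_le_gt [Fintype X] (a : ℝ) (ha : 1 < a) (P Q : X → ℝ≥0∞) (r : ℝ) :
    renyiD (ENNReal.ofReal a) P Q ≤ r ↔ SS a P Q ≤ (2 : ℝ≥0∞) ^ ((a - 1) * r) := by
  unfold renyiD
  rw [if_neg (by simp; linarith), if_neg (by simp; linarith), if_neg (by simp),
    ENNReal.toReal_ofReal (by linarith), coe_mul_le_pos _ (by linarith), elog2_le_iff]
  rfl

lemma renyiD_le_lt [Fintype X] (a : ℝ) (h0 : 0 < a) (ha : a < 1) (P Q : X → ℝ≥0∞) (r : ℝ) :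
    renyiD (ENNReal.ofReal a) P Q ≤ r ↔ (2 : ℝ≥0∞) ^ ((a - 1) * r) ≤ SS a P Q := by
  unfold renyiD
  rw [if_neg (by simp; linarith), if_neg (by simp; linarith), if_neg (by simp),
    ENNReal.toReal_ofReal (by linarith), coe_mul_le_neg _ (by linarith), le_elog2_iff]
  rfl

lemma renyiD_top_le_s11 [Fintype X] (P Q : X → ℝ≥0∞) (r : ℝ) :
    renyiD ⊤ P Q ≤ r ↔ ∀ x, P x / Q x ≤ (2 : ℝ≥0∞) ^ r := by
  unfold renyiD
  rw [if_neg (by simp), if_neg (by simp), if_pos rfl, elog2_le_iff, iSup_le_iff]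

lemma dist_ne_top [Fintype X] {P : X → ℝ≥0∞} (h : ∑ x, P x = 1) (x : X) : P x ≠ ⊤ := by
  intro hx
  have := Finset.single_le_sum (f := P) (fun i _ => zero_le) (Finset.mem_univ x)
  rw [h, hx] at this
  simp at this

lemma margX_joint [Fintype X] [Fintype Y] (P : X → ℝ≥0∞) (W : X → Y → ℝ≥0∞) (hW : IsChannel W) :
    margX (joint P W) = P := by
  funext x
  simp [margX, joint, ← Finset.mul_sum, hW x]

lemma SS_joint [Fintype X] [Fintype Y] (a : ℝ) (ha : 0 < a) (P : X → ℝ≥0∞) (hP : IsDist P)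
    (W : X → Y → ℝ≥0∞) (hW : IsChannel W) (Q : Y → ℝ≥0∞) (hQ : IsDist Q) :
    SS a (joint P W) (fun p => margX (joint P W) p.1 * Q p.2) = ∑ x, P x * SS a (W x) Q := by
  rw [margX_joint P W hW]
  unfold SS
  rw [Fintype.sum_prod_type]
  refine Finset.sum_congr rfl fun x _ => ?_
  rw [Finset.mul_sum]
  refine Finset.sum_congr rfl fun y _ => ?_
  simp only [joint]
  by_cases h : P x = 0
  · simp [h, ha]
  have ht := dist_ne_top hP x
  rw [ENNReal.mul_rpow_of_ne_top ht (dist_ne_top (hW x) y),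
    ENNReal.mul_rpow_of_ne_top ht (dist_ne_top hQ y)]
  have : P x = P x ^ a * P x ^ (1 - a) := by
    rw [← ENNReal.rpow_add _ _ h ht]; simp
  conv_rhs => rw [this]
  ring

/-- Hölder -/
lemma SS_holder [Fintype X] (a b : ℝ) (ha : 0 < a) (hab : a ≤ b) (hb : b ≤ 1)
    (P Q : X → ℝ≥0∞) (hQ : ∑ x, Q x = 1) : SS a P Q ≤ SS b P Q ^ (a / b) := by
  rcases hab.eq_or_lt with rfl | hlt
  · simp [div_self ha.ne']
  have hb0 : 0 < b := ha.trans hlt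
  have hpq : (b / a).HolderConjugate (1 - a / b)⁻¹ := by
    rw [Real.holderConjugate_iff]
    refine ⟨(one_lt_div ha).2 hlt, ?_⟩
    simp
  have hlt1 : a / b < 1 := (div_lt_one hb0).2 hlt
  have key := ENNReal.inner_le_Lp_mul_Lq Finset.univ
    (fun x => (P x ^ b * Q x ^ (1 - b)) ^ (a / b)) (fun x => Q x ^ (1 - a / b)) hpq
  have e1 : ∀ x, ((P x ^ b * Q x ^ (1 - b)) ^ (a / b)) ^ (b / a) = P x ^ b * Q x ^ (1 - b) := by
    intro x
    rw [← ENNReal.rpow_mul]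
    have : a / b * (b / a) = 1 := by field_simp
    rw [this, ENNReal.rpow_one]
  have e2 : ∀ x, (Q x ^ (1 - a / b)) ^ ((1 - a / b)⁻¹) = Q x := by
    intro x
    rw [← ENNReal.rpow_mul, mul_inv_cancel₀ (by linarith), ENNReal.rpow_one]
  have e3 : ∀ x, (P x ^ b * Q x ^ (1 - b)) ^ (a / b) * Q x ^ (1 - a / b)
      = P x ^ a * Q x ^ (1 - a) := by
    intro x
    rw [ENNReal.mul_rpow_of_nonneg _ _ (by positivity), ← ENNReal.rpow_mul, ← ENNReal.rpow_mul,
      mul_assoc, ← ENNReal.rpow_add_of_nonneg _ _ (mul_nonneg (by linarith) (by positivity))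
        (by linarith)]
    congr 2
    · field_simp
    · field_simp
      ring
  simp only [e1, e2, e3, hQ, ENNReal.one_rpow, mul_one] at key
  rw [one_div_div] at key
  exact key

lemma IsSimulation.bound [Fintype X] [Fintype Y] {c : ℝ} {N : X → Y → ℝ≥0∞}
    (h : IsSimulation c N) :
    (∀ x, ∑ y, N x y = 1) ∧
    ∃ Q : Y → ℝ≥0∞, IsDist Q ∧ ∀ x y, N x y ≤ (2 : ℝ≥0∞) ^ c * Q y := by
  obtain ⟨m, M, PK, E, D, hM, hMc, hPK, hE, hD, hN⟩ := h
  have hM0 : (M : ℝ≥0∞) ≠ 0 := by exact_mod_cast hM.ne'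
  have hMt : (M : ℝ≥0∞) ≠ ⊤ := by simp
  constructor
  · intro x
    simp only [hN]
    rw [Finset.sum_comm]
    have : ∀ k, ∑ y, ∑ j, PK k * E x k j * D j k y = PK k := by
      intro k
      rw [Finset.sum_comm]
      simp only [← Finset.mul_sum, hD, mul_one, hE]
    simp only [this, hPK]
  · refine ⟨fun y => (M : ℝ≥0∞)⁻¹ * ∑ k, ∑ j, PK k * D j k y, ?_, ?_⟩
    · unfold IsDist
      rw [← Finset.mul_sum, Finset.sum_comm]
      have : ∀ k, ∑ y, ∑ j, PK k * D j k y = PK k * M := by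
        intro k
        rw [Finset.sum_comm]
        simp only [← Finset.mul_sum, hD]
        simp
      simp only [this, ← Finset.sum_mul, hPK, one_mul]
      exact ENNReal.inv_mul_cancel hM0 hMt
    · intro x y
      have hMle : (M : ℝ≥0∞) ≤ (2 : ℝ≥0∞) ^ c := by
        rw [← elog2_le_iff]
        unfold elog2
        rw [if_neg hM0, if_neg hMt]
        simpa using hMc
      have h1 : N x y ≤ ∑ k, ∑ j, PK k * D j k y := by
        rw [hN]
        refine Finset.sum_le_sum fun k _ => Finset.sum_le_sum fun j _ => ?_
        have : E x k j ≤ 1 := by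
          rw [← hE x k]
          exact Finset.single_le_sum (f := E x k) (fun i _ => zero_le) (Finset.mem_univ j)
        calc PK k * E x k j * D j k y ≤ PK k * 1 * D j k y := by gcongr
          _ = _ := by rw [mul_one]
      calc N x y ≤ _ := h1
        _ = (M : ℝ≥0∞) * ((M : ℝ≥0∞)⁻¹ * ∑ k, ∑ j, PK k * D j k y) := by
            rw [← mul_assoc, ENNReal.mul_inv_cancel hM0 hMt, one_mul]
        _ ≤ _ := by gcongr

lemma two_rpow_ne_zero (r : ℝ) : (2 : ℝ≥0∞) ^ r ≠ 0 := by simp [ENNReal.rpow_eq_zero_iff]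
lemma two_rpow_ne_top (r : ℝ) : (2 : ℝ≥0∞) ^ r ≠ ⊤ := by
  apply ENNReal.rpow_ne_top_of_ne_zero <;> simp

lemma SS_scale [Fintype Y] (a c : ℝ) (P Q : Y → ℝ≥0∞) (hQ : IsDist Q) :
    SS a P (fun y => (2 : ℝ≥0∞) ^ c * Q y) = (2 : ℝ≥0∞) ^ (c * (1 - a)) * SS a P Q := by
  unfold SS
  rw [Finset.mul_sum]
  refine Finset.sum_congr rfl fun y _ => ?_
  rw [ENNReal.mul_rpow_of_ne_top (two_rpow_ne_top c) (dist_ne_top hQ y), ← ENNReal.rpow_mul]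
  ring

lemma two_mul_le_iff (u v : ℝ) (S : ℝ≥0∞) :
    (2 : ℝ≥0∞) ^ u * S ≤ (2 : ℝ≥0∞) ^ v ↔ S ≤ (2 : ℝ≥0∞) ^ (v - u) := by
  rw [ENNReal.rpow_sub _ _ (by simp) (by simp),
    ENNReal.le_div_iff_mul_le (Or.inl (two_rpow_ne_zero u)) (Or.inl (two_rpow_ne_top u)), mul_comm]

lemma le_two_mul_iff (u v : ℝ) (S : ℝ≥0∞) :
    (2 : ℝ≥0∞) ^ v ≤ (2 : ℝ≥0∞) ^ u * S ↔ (2 : ℝ≥0∞) ^ (v - u) ≤ S := by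
  rw [ENNReal.rpow_sub _ _ (by simp) (by simp),
    ENNReal.div_le_iff_le_mul (Or.inl (two_rpow_ne_zero u)) (Or.inl (two_rpow_ne_top u)), mul_comm]

/-- capacity upper bound from a joint bound -/
lemma cap_le [Fintype X] [Fintype Y] (α : ℝ≥0∞) (W : X → Y → ℝ≥0∞) (Q : Y → ℝ≥0∞)
    (hQ : IsDist Q) (t : EReal)
    (h : ∀ P : X → ℝ≥0∞, IsDist P →
      renyiD α (joint P W) (fun p => margX (joint P W) p.1 * Q p.2) ≤ t) :
    renyiCap α W ≤ t :=
  iSup_le fun P => (iInf_le _ (⟨Q, hQ⟩ : {Q : Y → ℝ≥0∞ // IsDist Q})).trans (h P.1 P.2)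

lemma cap_le_gt [Fintype X] [Fintype Y] (a : ℝ) (ha : 1 < a) (W : X → Y → ℝ≥0∞)
    (hW : IsChannel W) (Q : Y → ℝ≥0∞) (hQ : IsDist Q) (t : ℝ)
    (h : ∀ x, SS a (W x) Q ≤ (2 : ℝ≥0∞) ^ ((a - 1) * t)) :
    renyiCap (ENNReal.ofReal a) W ≤ t := by
  refine cap_le _ W Q hQ _ fun P hP => ?_
  rw [renyiD_le_gt a ha, SS_joint a (by linarith) P hP W hW Q hQ]
  calc ∑ x, P x * SS a (W x) Q ≤ ∑ x, P x * (2 : ℝ≥0∞) ^ ((a - 1) * t) :=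
        Finset.sum_le_sum fun x _ => by gcongr; exact h x
    _ = _ := by rw [← Finset.sum_mul, hP, one_mul]

lemma cap_le_lt [Fintype X] [Fintype Y] (a : ℝ) (h0 : 0 < a) (ha : a < 1) (W : X → Y → ℝ≥0∞)
    (hW : IsChannel W) (Q : Y → ℝ≥0∞) (hQ : IsDist Q) (t : ℝ)
    (h : ∀ x, (2 : ℝ≥0∞) ^ ((a - 1) * t) ≤ SS a (W x) Q) :
    renyiCap (ENNReal.ofReal a) W ≤ t := by
  refine cap_le _ W Q hQ _ fun P hP => ?_
  rw [renyiD_le_lt a h0 ha, SS_joint a (by linarith) P hP W hW Q hQ]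
  calc _ = ∑ x, P x * (2 : ℝ≥0∞) ^ ((a - 1) * t) := by rw [← Finset.sum_mul, hP, one_mul]
    _ ≤ _ := Finset.sum_le_sum fun x _ => by gcongr; exact h x

lemma SS_ge_one [Fintype Y] (a : ℝ) (ha : 1 < a) (P Q : Y → ℝ≥0∞) (hP : ∑ y, P y = 1)
    (hQ : ∑ y, Q y = 1) : 1 ≤ SS a P Q := by
  have key : ∀ y, ENNReal.ofReal a * P y ≤
      P y ^ a * Q y ^ (1 - a) + ENNReal.ofReal (a - 1) * Q y := by
    intro y
    have hPt := dist_ne_top hP y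
    have hQt := dist_ne_top hQ y
    by_cases hP0 : P y = 0
    · simp [hP0]
    by_cases hQ0 : Q y = 0
    · have : (0 : ℝ≥0∞) ^ (1 - a) = ⊤ := ENNReal.zero_rpow_of_neg (by linarith)
      have h2 : P y ^ a ≠ 0 := by
        simp [ENNReal.rpow_eq_zero_iff, hP0, hPt]
      simp [hQ0, this, ENNReal.mul_top h2]
    have hp := ENNReal.toReal_pos hP0 hPt
    have hq := ENNReal.toReal_pos hQ0 hQt
    rw [← ENNReal.ofReal_toReal hPt, ← ENNReal.ofReal_toReal hQt]
    generalize (P y).toReal = p at *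
    generalize (Q y).toReal = q at *
    rw [ENNReal.ofReal_rpow_of_pos hp, ENNReal.ofReal_rpow_of_pos hq,
      ← ENNReal.ofReal_mul (by linarith), ← ENNReal.ofReal_mul (by positivity),
      ← ENNReal.ofReal_mul (by linarith),
      ← ENNReal.ofReal_add (by positivity) (mul_nonneg (by linarith) hq.le)]
    apply ENNReal.ofReal_le_ofReal
    have hb := one_add_mul_self_le_rpow_one_add (s := p / q - 1)
      (by have : 0 < p / q := by positivity
          linarith) ha.le
    have e : (1 + (p / q - 1)) ^ a * q = p ^ a * q ^ (1 - a) := by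
      rw [add_sub_cancel, Real.div_rpow hp.le hq.le, Real.rpow_sub hq, Real.rpow_one]
      field_simp
    have h3 := mul_le_mul_of_nonneg_right hb hq.le
    rw [e] at h3
    have : (1 + a * (p / q - 1)) * q = q + a * (p - q) := by field_simp
    rw [this] at h3
    linarith
  have hs := Finset.sum_le_sum fun y (_ : y ∈ Finset.univ) => key y
  rw [Finset.sum_add_distrib, ← Finset.mul_sum, ← Finset.mul_sum, hP, hQ, mul_one, mul_one] at hs
  have h1 : ENNReal.ofReal a = 1 + ENNReal.ofReal (a - 1) := by
    rw [← ENNReal.ofReal_one, ← ENNReal.ofReal_add (by norm_num) (by linarith)]; simp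
  rw [h1] at hs
  exact (ENNReal.add_le_add_iff_right ENNReal.ofReal_ne_top).1 hs

/-! ### order one -/

lemma sum_coe_ereal {ι : Type*} (s : Finset ι) (f : ι → ℝ) :
    (∑ i ∈ s, ((f i : ℝ) : EReal)) = ((∑ i ∈ s, f i : ℝ) : EReal) := by
  induction s using Finset.induction_on with
  | empty => simp
  | insert a s ha ih => rw [Finset.sum_insert ha, Finset.sum_insert ha, ih, EReal.coe_add]

lemma sum_ne_bot_ereal {ι : Type*} (s : Finset ι) (f : ι → EReal) (h : ∀ i, f i ≠ ⊥) :
    (∑ i ∈ s, f i) ≠ ⊥ := by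
  induction s using Finset.induction_on with
  | empty => simp
  | insert a s ha ih =>
    rw [Finset.sum_insert ha]
    exact EReal.add_ne_bot_iff.2 ⟨h a, ih⟩

lemma renyiD_one [Fintype Y] (P Q : Y → ℝ≥0∞) :
    renyiD 1 P Q = ∑ x, ((P x).toReal : EReal) * elog2 (P x / Q x) := by
  unfold renyiD
  rw [if_neg (by simp), if_pos rfl]

lemma renyiD_one_ac [Fintype Y] (P Q : Y → ℝ≥0∞) (hP : ∀ y, P y ≠ ⊤) (hQ : ∀ y, Q y ≠ ⊤)
    (h : renyiD 1 P Q ≠ ⊤) (y : Y) (hy : Q y = 0) : P y = 0 := by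
  by_contra hP0
  apply h
  rw [renyiD_one, ← Finset.add_sum_erase _ _ (Finset.mem_univ y)]
  have h1 : ((P y).toReal : EReal) * elog2 (P y / Q y) = ⊤ := by
    rw [hy, ENNReal.div_zero hP0]
    simp only [elog2]
    simp only [ENNReal.top_ne_zero, if_false, if_true]
    exact EReal.coe_mul_top_of_pos (ENNReal.toReal_pos hP0 (hP y))
  rw [h1]
  apply EReal.top_add_of_ne_bot
  apply sum_ne_bot_ereal
  intro z
  by_cases hz : P z = 0
  · simp [hz]
  have hpos := ENNReal.toReal_pos hz (hP z)
  unfold elog2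
  have : P z / Q z ≠ 0 := by simp [ENNReal.div_eq_zero_iff, hz, hQ z]
  rw [if_neg this]
  split_ifs
  · rw [EReal.coe_mul_top_of_pos hpos]; simp
  · rw [← EReal.coe_mul]; exact EReal.coe_ne_bot _

/-- real-valued relative entropy -/
def rD [Fintype Y] (P Q : Y → ℝ≥0∞) : ℝ :=
  ∑ y, (P y).toReal * Real.logb 2 ((P y).toReal / (Q y).toReal)

lemma renyiD_one_eq [Fintype Y] (P Q : Y → ℝ≥0∞) (hP : ∀ y, P y ≠ ⊤) (hQ : ∀ y, Q y ≠ ⊤)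
    (h : ∀ y, Q y = 0 → P y = 0) : renyiD 1 P Q = (rD P Q : EReal) := by
  rw [renyiD_one, rD, ← sum_coe_ereal]
  refine Finset.sum_congr rfl fun y _ => ?_
  by_cases hy : P y = 0
  · simp [hy]
  have hq : Q y ≠ 0 := fun h' => hy (h y h')
  unfold elog2
  rw [if_neg (by simp [ENNReal.div_eq_zero_iff, hy, hQ y]),
    if_neg (ENNReal.div_ne_top (hP y) hq), ← EReal.coe_mul, ENNReal.toReal_div]

lemma rD_nonneg [Fintype Y] (P Q : Y → ℝ≥0∞) (hP : ∑ y, P y = 1) (hQ : ∑ y, Q y = 1)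
    (h : ∀ y, Q y = 0 → P y = 0) : 0 ≤ rD P Q := by
  have hPr : ∑ y, (P y).toReal = 1 := by
    rw [← ENNReal.toReal_sum fun y _ => dist_ne_top hP y, hP]; simp
  have hQr : ∑ y, (Q y).toReal = 1 := by
    rw [← ENNReal.toReal_sum fun y _ => dist_ne_top hQ y, hQ]; simp
  have hl : 0 < Real.log 2 := Real.log_pos (by norm_num)
  have key : ∀ y, ((P y).toReal - (Q y).toReal) / Real.log 2 ≤
      (P y).toReal * Real.logb 2 ((P y).toReal / (Q y).toReal) := by
    intro y
    by_cases hy : P y = 0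
    · simp only [hy, ENNReal.toReal_zero, zero_mul, zero_sub]
      exact div_nonpos_of_nonpos_of_nonneg (by simp) hl.le
    have hq : Q y ≠ 0 := fun h' => hy (h y h')
    have hp := ENNReal.toReal_pos hy (dist_ne_top hP y)
    have hq := ENNReal.toReal_pos hq (dist_ne_top hQ y)
    generalize (P y).toReal = p at *
    generalize (Q y).toReal = q at *
    rw [Real.logb, ← mul_div_assoc]
    gcongr
    have h1 := Real.log_le_sub_one_of_pos (show 0 < q / p by positivity)
    have h2 : Real.log (p / q) = - Real.log (q / p) := by rw [← Real.log_inv, inv_div]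
    rw [h2]
    have := mul_le_mul_of_nonneg_left h1 hp.le
    have e : p * (q / p - 1) = q - p := by field_simp
    rw [e] at this
    linarith
  have := Finset.sum_le_sum fun y (_ : y ∈ Finset.univ) => key y
  rw [← Finset.sum_div, Finset.sum_sub_distrib, hPr, hQr] at this
  simpa [rD] using this

lemma rD_scale [Fintype Y] (c : ℝ) (P N Q : Y → ℝ≥0∞) (hP : ∑ y, P y = 1) (hN : ∑ y, N y = 1)
    (hQ : ∑ y, Q y = 1) (hle : ∀ y, N y ≤ (2 : ℝ≥0∞) ^ c * Q y)
    (h : ∀ y, N y = 0 → P y = 0) : rD P Q ≤ rD P N + c := by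
  have hPr : ∑ y, (P y).toReal = 1 := by
    rw [← ENNReal.toReal_sum fun y _ => dist_ne_top hP y, hP]; simp
  have e : rD P N + c = ∑ y, (P y).toReal * (Real.logb 2 ((P y).toReal / (N y).toReal) + c) := by
    simp only [mul_add, Finset.sum_add_distrib, ← Finset.sum_mul, hPr, one_mul]
    rfl
  rw [e, rD]
  refine Finset.sum_le_sum fun y _ => ?_
  by_cases hy : P y = 0
  · simp [hy]
  have hn : N y ≠ 0 := fun h' => hy (h y h')
  have hq : Q y ≠ 0 := fun h' => hn (by simpa [h'] using hle y)
  have hle' : (N y).toReal ≤ 2 ^ c * (Q y).toReal := by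
    have := ENNReal.toReal_mono (ENNReal.mul_ne_top (two_rpow_ne_top c) (dist_ne_top hQ y)) (hle y)
    rwa [ENNReal.toReal_mul, ← ENNReal.toReal_rpow] at this
  have hp := ENNReal.toReal_pos hy (dist_ne_top hP y)
  have hq := ENNReal.toReal_pos hq (dist_ne_top hQ y)
  have hn := ENNReal.toReal_pos hn (dist_ne_top hN y)
  generalize (P y).toReal = p at *
  generalize (Q y).toReal = q at *
  generalize (N y).toReal = n at *
  gcongr
  rw [Real.logb_div hp.ne' hq.ne', Real.logb_div hp.ne' hn.ne']
  have := Real.logb_le_logb_of_le (b := 2) (by norm_num) hn hle'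
  rw [Real.logb_mul (by positivity) hq.ne', Real.logb_rpow (by norm_num) (by norm_num)] at this
  linarith

lemma cap_le_one [Fintype X] [Fintype Y] (W : X → Y → ℝ≥0∞)
    (hW : IsChannel W) (Q : Y → ℝ≥0∞) (hQ : IsDist Q) (t : ℝ)
    (hac : ∀ x y, Q y = 0 → W x y = 0)
    (h : ∀ x, rD (W x) Q ≤ t) :
    renyiCap 1 W ≤ t := by
  refine cap_le _ W Q hQ _ fun P hP => ?_
  rw [margX_joint P W hW]
  have hPt := dist_ne_top hP
  have hPr : ∑ y, (P y).toReal = 1 := by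
    rw [← ENNReal.toReal_sum fun y _ => hPt y, hP]; simp
  rw [renyiD_one_eq (joint P W) (fun p => P p.1 * Q p.2) (fun p => ENNReal.mul_ne_top (hPt _) (dist_ne_top (hW _) _))
    (fun p => ENNReal.mul_ne_top (hPt _) (dist_ne_top hQ _)), EReal.coe_le_coe_iff]
  · have : rD (joint P W) (fun p => P p.1 * Q p.2) = ∑ x, (P x).toReal * rD (W x) Q := by
      unfold rD
      rw [Fintype.sum_prod_type]
      refine Finset.sum_congr rfl fun x _ => ?_
      rw [Finset.mul_sum]
      refine Finset.sum_congr rfl fun y _ => ?_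
      simp only [joint, ENNReal.toReal_mul]
      by_cases h0 : (P x).toReal = 0
      · simp [h0]
      rw [mul_div_mul_left _ _ h0, mul_assoc]
    rw [this]
    calc _ ≤ ∑ x, (P x).toReal * t := Finset.sum_le_sum fun x _ =>
          mul_le_mul_of_nonneg_left (h x) ENNReal.toReal_nonneg
      _ = t := by rw [← Finset.sum_mul, hPr, one_mul]
  · rintro ⟨x, y⟩ h0
    simp only [joint, mul_eq_zero] at h0 ⊢
    exact h0.imp id (hac x y)

lemma main_ge [Fintype X] [Fintype Y] [Nonempty X]
    (W : X → Y → ℝ≥0∞) (hW : IsChannel W) (c : ℝ) (α : ℝ≥0∞) (hα : 1 ≤ α)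
    (N : X → Y → ℝ≥0∞) (hN : ∀ x, ∑ y, N x y = 1) (Q : Y → ℝ≥0∞) (hQ : IsDist Q)
    (hle : ∀ x y, N x y ≤ (2 : ℝ≥0∞) ^ c * Q y) (r : ℝ)
    (hr : ∀ x, renyiD α (W x) (N x) ≤ r) : renyiCap α W ≤ ((r + c : ℝ) : EReal) ∧ 0 ≤ r := by
  obtain ⟨x0⟩ := ‹Nonempty X›
  rcases eq_or_ne α ⊤ with rfl | ht
  · have hWN : ∀ x y, W x y ≤ (2 : ℝ≥0∞) ^ r * N x y := by
      intro x y
      have h1 := (renyiD_top_le_s11 _ _ _).1 (hr x) y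
      rwa [ENNReal.div_le_iff_le_mul (Or.inr (two_rpow_ne_top r))
        (Or.inl (dist_ne_top (hN x) y))] at h1
    constructor
    · refine cap_le _ W Q hQ _ fun P hP => ?_
      rw [renyiD_top_le_s11, margX_joint P W hW]
      rintro ⟨x, y⟩
      apply ENNReal.div_le_of_le_mul
      simp only [joint]
      calc P x * W x y ≤ P x * ((2 : ℝ≥0∞) ^ r * ((2 : ℝ≥0∞) ^ c * Q y)) := by
            gcongr
            exact (hWN x y).trans (by gcongr; exact hle x y)
        _ = _ := by
            rw [ENNReal.rpow_add _ _ (by simp) (by simp)]; ring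
    · have := Finset.sum_le_sum fun y (_ : y ∈ Finset.univ) => hWN x0 y
      rw [← Finset.mul_sum, hW, hN, mul_one] at this
      by_contra hneg
      exact absurd this (not_le.2 (ENNReal.rpow_lt_one_of_one_lt_of_neg (by norm_num)
        (not_le.1 hneg)))
  rcases hα.eq_or_lt with rfl | hlt
  · have hac : ∀ x y, N x y = 0 → W x y = 0 := fun x y => renyiD_one_ac _ _
      (dist_ne_top (hW x)) (dist_ne_top (hN x)) (ne_top_of_le_ne_top (EReal.coe_ne_top r) (hr x)) y
    have hr' : ∀ x, rD (W x) (N x) ≤ r := by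
      intro x
      have := hr x
      rwa [renyiD_one_eq _ _ (dist_ne_top (hW x)) (dist_ne_top (hN x)) (hac x),
        EReal.coe_le_coe_iff] at this
    constructor
    · refine cap_le_one W hW Q hQ _ (fun x y h0 => hac x y ?_) fun x => ?_
      · simpa [h0] using hle x y
      · have := rD_scale c (W x) (N x) Q (hW x) (hN x) hQ (hle x) (hac x)
        linarith [hr' x]
    · exact (rD_nonneg _ _ (hW x0) (hN x0) (hac x0)).trans (hr' x0)
  · obtain ⟨a, ha, rfl⟩ : ∃ a : ℝ, 1 < a ∧ α = ENNReal.ofReal a := by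
      refine ⟨α.toReal, ?_, (ENNReal.ofReal_toReal ht).symm⟩
      have := (ENNReal.toReal_lt_toReal (by simp) ht).2 hlt
      simpa using this
    have hr' := fun x => (renyiD_le_gt a ha _ _ _).1 (hr x)
    constructor
    · refine cap_le_gt a ha W hW Q hQ _ fun x => ?_
      have h1 : SS a (W x) (fun y => (2 : ℝ≥0∞) ^ c * Q y) ≤ (2 : ℝ≥0∞) ^ ((a - 1) * r) := by
        refine le_trans ?_ (hr' x)
        unfold SS
        refine Finset.sum_le_sum fun y _ => ?_
        have h5 : ((2 : ℝ≥0∞) ^ c * Q y) ^ (1 - a) ≤ N x y ^ (1 - a) := by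
          rw [← neg_sub a 1, ENNReal.rpow_neg, ENNReal.rpow_neg, ENNReal.inv_le_inv]
          exact ENNReal.rpow_le_rpow (hle x y) (by linarith)
        exact mul_le_mul_right h5 _
      rw [SS_scale a c _ _ hQ, two_mul_le_iff] at h1
      convert h1 using 2
      ring
    · have h1 := (SS_ge_one a ha _ _ (hW x0) (hN x0)).trans (hr' x0)
      by_contra hneg
      exact absurd h1 (not_le.2 (ENNReal.rpow_lt_one_of_one_lt_of_neg (by norm_num)
        (mul_neg_of_pos_of_neg (by linarith) (not_le.1 hneg))))

lemma main_lt [Fintype X] [Fintype Y] [Nonempty X]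
    (W : X → Y → ℝ≥0∞) (hW : IsChannel W) (c : ℝ) (a b : ℝ) (ha : 0 < a) (hab : a ≤ b)
    (hb : b ≤ 1) (ha1 : a < 1)
    (N : X → Y → ℝ≥0∞) (hN : ∀ x, ∑ y, N x y = 1) (Q : Y → ℝ≥0∞) (hQ : IsDist Q)
    (hle : ∀ x y, N x y ≤ (2 : ℝ≥0∞) ^ c * Q y) (r : ℝ)
    (hr : ∀ x, renyiD (ENNReal.ofReal a) (W x) (N x) ≤ r) :
    (((a * (1 - b)) / (b * (1 - a)) : ℝ) : EReal) *
            (renyiCap (ENNReal.ofReal b) W - (c : EReal)) ≤ r := by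
  have hr' := fun x => (renyiD_le_lt a ha ha1 _ _ _).1 (hr x)
  have hr'' := fun x => (hr' x).trans (SS_holder a b ha hab hb (W x) (N x) (hN x))
  have hb0 : 0 < b := ha.trans_le hab
  rcases hb.eq_or_lt with rfl | hb1
  · obtain ⟨x0⟩ := ‹Nonempty X›
    have h1 := hr'' x0
    simp only [SS, sub_self, ENNReal.rpow_zero, ENNReal.rpow_one, mul_one, hW x0,
      ENNReal.one_rpow] at h1
    simp only [sub_self, mul_zero, zero_div, EReal.coe_zero, zero_mul]
    by_contra hneg
    rw [not_le] at hneg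
    have hneg : r < 0 := by exact_mod_cast hneg
    exact absurd h1 (not_le.2 (ENNReal.one_lt_rpow (by norm_num) (by nlinarith)))
  · set k := a * (1 - b) / (b * (1 - a)) with hk
    have h1a : 0 < 1 - a := by linarith
    have h1b : 0 < 1 - b := by linarith
    have hkpos : 0 < k := by positivity
    have hcap : renyiCap (ENNReal.ofReal b) W ≤ ((r / k + c : ℝ) : EReal) := by
      refine cap_le_lt b hb0 hb1 W hW Q hQ _ fun x => ?_
      have h1 : (2 : ℝ≥0∞) ^ ((a - 1) * r * (b / a)) ≤ SS b (W x) (N x) := by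
        have := ENNReal.rpow_le_rpow (hr'' x) (show 0 ≤ b / a by positivity)
        rw [← ENNReal.rpow_mul, ← ENNReal.rpow_mul] at this
        have e : a / b * (b / a) = 1 := by field_simp
        rwa [e, ENNReal.rpow_one] at this
      have h2 : SS b (W x) (N x) ≤ SS b (W x) (fun y => (2 : ℝ≥0∞) ^ c * Q y) := by
        unfold SS
        refine Finset.sum_le_sum fun y _ => ?_
        gcongr
        exact hle x y
      have h3 := h1.trans h2
      rw [SS_scale b c _ _ hQ, le_two_mul_iff] at h3
      convert h3 using 2
      rw [hk]
      field_simp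
      ring
    have h4 : renyiCap (ENNReal.ofReal b) W - (c : EReal) ≤ ((r / k : ℝ) : EReal) := by
      apply EReal.sub_le_of_le_add
      rwa [← EReal.coe_add]
    calc _ ≤ (k : EReal) * ((r / k : ℝ) : EReal) :=
          mul_le_mul_of_nonneg_left h4 (by exact_mod_cast hkpos.le)
      _ = r := by rw [← EReal.coe_mul]; congr 1; field_simp

end RST

namespace RST

/-- **One-shot converse bound for the strong converse exponent** (Theorem 16).
For any channel `W` and `c ≥ 0`:
`𝖣_α(W,c) ≥ max_{α ≤ β ≤ 1} (α(1-β))/(β(1-α)) (I_β(W) - c)` for `α ∈ (0,1)`, and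
`𝖣_α(W,c) ≥ |I_α(W) - c|⁺` for `α ∈ [1,∞]`. -/
theorem one_shot_strong_converse_bound
    {X Y : Type*} [Fintype X] [Fintype Y] [Nonempty X] [Nonempty Y]
    (W : X → Y → ℝ≥0∞) (hW : IsChannel W) (c : ℝ) (hc : 0 ≤ c) :
    (∀ α : ℝ, 0 < α → α < 1 →
      (⨆ β : {β : ℝ // α ≤ β ∧ β ≤ 1},
          (((α * (1 - β.1)) / (β.1 * (1 - α)) : ℝ) : EReal) *
            (renyiCap (ENNReal.ofReal β.1) W - (c : EReal))) ≤
        simD (ENNReal.ofReal α) W c) ∧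
    (∀ α : ℝ≥0∞, 1 ≤ α →
      max (renyiCap α W - (c : EReal)) 0 ≤ simD α W c) := by
  constructor
  · intro α h0 h1
    refine iSup_le fun β => le_iInf fun N => ?_
    obtain ⟨hN, Q, hQ, hle⟩ := N.2.bound
    refine EReal.le_of_forall_lt_iff_le.1 fun r hr => ?_
    exact main_lt W hW c α β.1 h0 β.2.1 β.2.2 h1 N.1 hN Q hQ hle r
      fun x => (le_iSup (fun x => renyiD (ENNReal.ofReal α) (W x) (N.1 x)) x).trans hr.le
  · intro α hα
    refine le_iInf fun N => ?_
    obtain ⟨hN, Q, hQ, hle⟩ := N.2.bound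
    refine EReal.le_of_forall_lt_iff_le.1 fun r hr => ?_
    obtain ⟨h1, h2⟩ := main_ge W hW c α hα N.1 hN Q hQ hle r
      fun x => (le_iSup (fun x => renyiD α (W x) (N.1 x)) x).trans hr.le
    refine max_le ?_ (by exact_mod_cast h2)
    apply EReal.sub_le_of_le_add
    rwa [← EReal.coe_add]

end RST
end
end
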